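/- arXiv:2307.16683 — 17 statements merged into one kernel-verified Lean document; each statement's English description precedes it below -/
import Mathlib

section
/- Let c₁, c₂ : ℝ → ℝ be continuous functions such that c₁(s) → c₁* and c₂(s) → c₂* as s → ∞, where c₁* > 0 and c₂* > 0. Suppose f : ℝ → ℝ is differentiable and satisfies f'(s) = -c₁(s)·f(s) + c₂(s) for all s ∈ ℝ. Then f(s) converges to c₂*/c₁* as s → ∞. -/
open Filter Topology

/-- Lemma 5.1: a scalar linear ODE `f' = -c₁ f + c₂` with asymptotically
constant positive coefficients has solutions converging to `c₂*/c₁*`. -/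
theorem stmt_0 (c₁ c₂ : ℝ → ℝ) (hc₁cont : Continuous c₁) (hc₂cont : Continuous c₂)
    (c₁star c₂star : ℝ) (hc₁star : 0 < c₁star) (hc₂star : 0 < c₂star)
    (hc₁lim : Tendsto c₁ atTop (𝓝 c₁star)) (hc₂lim : Tendsto c₂ atTop (𝓝 c₂star))
    (f : ℝ → ℝ) (hf : ∀ s : ℝ, HasDerivAt f (-(c₁ s) * f s + c₂ s) s) :
    Tendsto f atTop (𝓝 (c₂star / c₁star)) := by
  obtain ⟨L, hL⟩ : ∃ L, L = c₂star / c₁star := ⟨_, rfl⟩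
  rw [← hL]
  have hLmul : c₂star - c₁star * L = 0 := by rw [hL]; field_simp; ring
  have hd : Tendsto (fun s => c₂ s - c₁ s * L) atTop (𝓝 0) := by
    rw [← hLmul]; exact hc₂lim.sub (hc₁lim.mul_const L)
  obtain ⟨a, ha⟩ : ∃ a, a = c₁star / 2 := ⟨_, rfl⟩
  have ha0 : 0 < a := by rw [ha]; positivity
  have hev1 : ∀ᶠ s in atTop, a < c₁ s := hc₁lim.eventually_const_lt (by linarith)
  rw [Metric.tendsto_atTop']
  intro e he
  have hd2 : Tendsto (fun s => (c₂ s - c₁ s * L) ^ 2) atTop (𝓝 0) := by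
    simpa using hd.pow 2
  have hev2 : ∀ᶠ s in atTop, (c₂ s - c₁ s * L) ^ 2 < a ^ 2 * (e ^ 2 / 2) :=
    hd2.eventually_lt_const (by positivity)
  obtain ⟨S, hS⟩ := eventually_atTop.1 (hev1.and hev2)
  have hW : ∀ s, HasDerivAt (fun s => Real.exp (a * s) * ((f s - L) ^ 2 - e ^ 2 / 2))
      (Real.exp (a * s) * (a * ((f s - L) ^ 2 - e ^ 2 / 2)
        + 2 * (f s - L) * (-(c₁ s) * f s + c₂ s))) s := by
    intro s
    have h1 : HasDerivAt (fun s => Real.exp (a * s)) (Real.exp (a * s) * (a * 1)) s :=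
      ((hasDerivAt_id s).const_mul a).exp
    have h2 := (((hf s).sub_const L).pow 2).sub_const (e ^ 2 / 2)
    refine (h1.mul h2).congr_deriv ?_
    simp only [Pi.pow_apply]
    push_cast
    ring
  have hanti : AntitoneOn (fun s => Real.exp (a * s) * ((f s - L) ^ 2 - e ^ 2 / 2))
      (Set.Ici S) := by
    apply antitoneOn_of_deriv_nonpos (convex_Ici S)
    · exact fun s _ => (hW s).continuousAt.continuousWithinAt
    · exact fun s _ => (hW s).differentiableAt.differentiableWithinAt
    · intro s hs
      rw [interior_Ici] at hs
      obtain ⟨h1, h2⟩ := hS s (le_of_lt hs)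
      rw [(hW s).deriv]
      apply mul_nonpos_of_nonneg_of_nonpos (Real.exp_pos _).le
      obtain ⟨d, hdd⟩ : ∃ d, d = c₂ s - c₁ s * L := ⟨_, rfl⟩
      rw [← hdd] at h2
      have hc2 : c₂ s = d + c₁ s * L := by linarith
      rw [hc2]
      obtain ⟨g, hg⟩ : ∃ g, g = f s - L := ⟨_, rfl⟩
      have hfs : f s = g + L := by linarith
      rw [hfs]
      have h3 : 0 ≤ (c₁ s - a) * g ^ 2 := mul_nonneg (by linarith) (sq_nonneg g)
      have h4 : 0 ≤ (a * g - d) ^ 2 := sq_nonneg _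
      refine nonpos_of_mul_nonpos_right (a := a) ?_ ha0
      nlinarith [mul_nonneg ha0.le h3]
  have hexp : Tendsto (fun s : ℝ => Real.exp (-(a * s)) *
      (Real.exp (a * S) * ((f S - L) ^ 2 - e ^ 2 / 2))) atTop (𝓝 0) := by
    have : Tendsto (fun s : ℝ => Real.exp (-(a * s))) atTop (𝓝 0) :=
      Real.tendsto_exp_neg_atTop_nhds_zero.comp (tendsto_id.const_mul_atTop ha0)
    simpa using this.mul_const (Real.exp (a * S) * ((f S - L) ^ 2 - e ^ 2 / 2))
  obtain ⟨T, hT⟩ := eventually_atTop.1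
    (hexp.eventually_lt_const (show (0 : ℝ) < e ^ 2 / 2 by positivity))
  refine ⟨max S T, fun s hs => ?_⟩
  have hsS : S ≤ s := (le_max_left _ _).trans (le_of_lt hs)
  have hsT : T ≤ s := (le_max_right _ _).trans (le_of_lt hs)
  have h1 := hanti (Set.self_mem_Ici) (Set.mem_Ici.2 hsS) hsS
  have h2 := hT s hsT
  have h3 := mul_le_mul_of_nonneg_left h1 (Real.exp_pos (-(a * s))).le
  simp only [← mul_assoc] at h3 h2
  rw [← Real.exp_add (-(a * s)) (a * s), neg_add_cancel, Real.exp_zero, one_mul] at h3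
  rw [Real.dist_eq]
  exact abs_lt_of_sq_lt_sq (by linarith) he.le
end

section
/- Let (X, Y) be a solution of the subsystem defined on [s₀, ∞). If 0 < X(s₀) < 1/d and 0 < Y(s₀) < 1/d, then 0 < X(s) < 1/d and 0 < Y(s) < 1/d for all s ≥ s₀; moreover Y is strictly decreasing on [s₀, ∞). -/
open Filter Topology

/-- `(X, Y)` solves the planar subsystem
`X' = X(dX² − 1) + (d−1)Y²`, `Y' = XY(dX − 1)` on the set `I`. -/
def IsSubsystemSol (d : ℕ) (X Y : ℝ → ℝ) (I : Set ℝ) : Prop :=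
  (∀ s ∈ I, HasDerivAt X (X s * ((d : ℝ) * X s ^ 2 - 1) + ((d : ℝ) - 1) * Y s ^ 2) s) ∧
  (∀ s ∈ I, HasDerivAt Y (X s * Y s * ((d : ℝ) * X s - 1)) s)

/-- A Gronwall-type positivity lemma, via monotonicity of the product with exp. -/
theorem pos_of_deriv_add_nonneg {f g : ℝ → ℝ} {a b : ℝ} (hab : a ≤ b)
    (hf : ∀ s ∈ Set.Icc a b, HasDerivAt f (g s) s)
    (h : ∀ s ∈ Set.Ioo a b, 0 ≤ g s + f s) (ha : 0 < f a) : 0 < f b := by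
  have hd : ∀ s ∈ Set.Icc a b, HasDerivAt (fun s => f s * Real.exp s)
      (g s * Real.exp s + f s * Real.exp s) s := fun s hs =>
    (hf s hs).mul (Real.hasDerivAt_exp s)
  have hm : MonotoneOn (fun s => f s * Real.exp s) (Set.Icc a b) := by
    apply monotoneOn_of_deriv_nonneg (convex_Icc a b)
    · exact fun s hs => (hd s hs).continuousAt.continuousWithinAt
    · exact fun s hs => (hd s (interior_subset hs)).differentiableAt.differentiableWithinAt
    · intro s hs
      rw [(hd s (interior_subset hs)).deriv, ← add_mul]
      rw [interior_Icc] at hs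
      exact mul_nonneg (h s hs) (Real.exp_pos s).le
  have h1 := hm (Set.left_mem_Icc.2 hab) (Set.right_mem_Icc.2 hab) hab
  have h2 : 0 < f b * Real.exp b := lt_of_lt_of_le (mul_pos ha (Real.exp_pos a)) h1
  exact pos_of_mul_pos_left h2 (Real.exp_pos b).le

/-- The region `0 < X, Y < 1/d` is invariant, and `Y` is strictly decreasing there. -/
theorem stmt_1 (d : ℕ) (hd : 2 ≤ d) (s₀ : ℝ) (X Y : ℝ → ℝ)
    (hsol : IsSubsystemSol d X Y (Set.Ici s₀))
    (hX₀ : 0 < X s₀ ∧ X s₀ < 1 / d) (hY₀ : 0 < Y s₀ ∧ Y s₀ < 1 / d) :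
    (∀ s ≥ s₀, (0 < X s ∧ X s < 1 / d) ∧ (0 < Y s ∧ Y s < 1 / d)) ∧
    StrictAntiOn Y (Set.Ici s₀) := by
  obtain ⟨hX, hY⟩ := hsol
  have hd2 : (2 : ℝ) ≤ d := by exact_mod_cast hd
  have hd0 : (0 : ℝ) < d := by linarith
  obtain ⟨c, hc⟩ : ∃ c : ℝ, c = 1 / (d : ℝ) := ⟨_, rfl⟩
  have hdc : (d : ℝ) * c = 1 := by rw [hc]; field_simp
  have hc0 : 0 < c := by rw [hc]; positivity
  have hc1 : c ≤ 1 := by nlinarith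
  rw [← hc] at hX₀ hY₀ ⊢
  have hXc : ContinuousOn X (Set.Ici s₀) := fun s hs => (hX s hs).continuousAt.continuousWithinAt
  have hYc : ContinuousOn Y (Set.Ici s₀) := fun s hs => (hY s hs).continuousAt.continuousWithinAt
  -- strict decrease on intervals where the region is known
  have hanti : ∀ D : Set ℝ, Convex ℝ D → D ⊆ Set.Ici s₀ →
      (∀ s ∈ interior D, (0 < X s ∧ X s < c) ∧ (0 < Y s ∧ Y s < c)) → StrictAntiOn Y D := by
    intro D hD hDs hg
    apply strictAntiOn_of_deriv_neg hD (hYc.mono hDs)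
    intro s hs
    obtain ⟨⟨h1, h2⟩, h3, h4⟩ := hg s hs
    rw [(hY s (hDs (interior_subset hs))).deriv]
    have : (d : ℝ) * X s < 1 := by nlinarith
    exact mul_neg_of_pos_of_neg (mul_pos h1 h3) (by linarith)
  have key : ∀ s ≥ s₀, (0 < X s ∧ X s < c) ∧ (0 < Y s ∧ Y s < c) := by
    by_contra hcon
    push Not at hcon
    set B : Set ℝ := {s | s ∈ Set.Ici s₀ ∧
      (X s, Y s) ∈ (Set.Ioo 0 c ×ˢ Set.Ioo 0 c : Set (ℝ × ℝ))ᶜ} with hB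
    have hBc : IsClosed B :=
      (hXc.prodMk hYc).preimage_isClosed_of_isClosed isClosed_Ici
        (isOpen_Ioo.prod isOpen_Ioo).isClosed_compl
    have hBne : B.Nonempty := by
      obtain ⟨s, hs, h⟩ := hcon
      refine ⟨s, hs, ?_⟩
      rintro ⟨⟨h1, h2⟩, h3, h4⟩
      exact absurd h4 (not_lt.2 (h ⟨h1, h2⟩ h3))
    have hBb : BddBelow B := ⟨s₀, fun s hs => hs.1⟩
    obtain ⟨T, hT⟩ : ∃ T, T = sInf B := ⟨_, rfl⟩
    have hTB : T ∈ B := hT ▸ hBc.csInf_mem hBne hBb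
    have hTs : s₀ ≤ T := hTB.1
    have hgood : ∀ s, s₀ ≤ s → s < T → (0 < X s ∧ X s < c) ∧ (0 < Y s ∧ Y s < c) := by
      intro s hs hsT
      by_contra hn
      have : s ∈ B := ⟨hs, fun h => hn ⟨h.1, h.2⟩⟩
      have := csInf_le hBb this
      linarith
    have hTs' : s₀ < T := by
      refine lt_of_le_of_ne hTs ?_
      rintro rfl
      exact hTB.2 ⟨hX₀, hY₀⟩
    have hXT : 0 < X T := by
      refine pos_of_deriv_add_nonneg hTs (fun s hs => hX s hs.1) ?_ hX₀.1
      intro s hs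
      obtain ⟨⟨h1, h2⟩, h3, h4⟩ := hgood s hs.1.le hs.2
      have e1 : 0 ≤ (d : ℝ) * X s ^ 3 := by positivity
      have e2 : 0 ≤ ((d : ℝ) - 1) * Y s ^ 2 := mul_nonneg (by linarith) (sq_nonneg _)
      nlinarith
    have hYT : 0 < Y T := by
      refine pos_of_deriv_add_nonneg hTs (fun s hs => hY s hs.1) ?_ hY₀.1
      intro s hs
      obtain ⟨⟨h1, h2⟩, h3, h4⟩ := hgood s hs.1.le hs.2
      have e1 : 0 ≤ (d : ℝ) * X s ^ 2 * Y s := by positivity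
      have e2 : 0 ≤ (1 - X s) * Y s := mul_nonneg (by linarith) h3.le
      nlinarith
    have hYT' : Y T < c := by
      have h := hanti (Set.Icc s₀ T) (convex_Icc _ _) (fun s hs => hs.1) (by
        intro s hs
        rw [interior_Icc] at hs
        exact hgood s hs.1.le hs.2) (Set.left_mem_Icc.2 hTs) (Set.right_mem_Icc.2 hTs) hTs'
      linarith [hY₀.2]
    have hXT' : 0 < c - X T := by
      refine pos_of_deriv_add_nonneg (f := fun s => c - X s) hTs
        (fun s hs => (hX s hs.1).const_sub c) ?_ (by linarith [hX₀.2])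
      intro s hs
      obtain ⟨⟨h1, h2⟩, h3, h4⟩ := hgood s hs.1.le hs.2
      have e1 : ((d : ℝ) - 1) * Y s ^ 2 ≤ ((d : ℝ) - 1) * c ^ 2 :=
        mul_le_mul_of_nonneg_left (by nlinarith) (by linarith)
      have e2 : 0 ≤ (c - X s) * ((d : ℝ) * X s ^ 2 + X s + c) :=
        mul_nonneg (by linarith) (by positivity)
      have e3 : (c - X s) * ((d : ℝ) * X s ^ 2 + X s + c) =
          -(X s * ((d : ℝ) * X s ^ 2 - 1) + ((d : ℝ) - 1) * c ^ 2) + (c - X s) := by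
        linear_combination (X s ^ 2 + c) * hdc
      linarith
    exact hTB.2 ⟨⟨hXT, by linarith⟩, hYT, hYT'⟩
  refine ⟨key, hanti _ (convex_Ici _) subset_rfl ?_⟩
  intro s hs
  exact key s (interior_subset hs)
end

section
/- Let (X, Y) be a solution of the subsystem defined on [s₀, ∞) with 0 < X(s₀) < 1/d and 0 < Y(s₀) < 1/d. Then X(s) → 0 and Y(s) → 0 as s → ∞. -/
open Filter Topology

lemma gron_aux (k a b : ℝ) (hab : a ≤ b) (f f' : ℝ → ℝ)
    (hf : ∀ s ∈ Set.Icc a b, HasDerivAt f (f' s) s)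
    (h : ∀ s ∈ Set.Ioo a b, 0 ≤ f' s + k * f s) :
    f a * Real.exp (k * a) ≤ f b * Real.exp (k * b) := by
  have hd : ∀ s ∈ Set.Icc a b, HasDerivAt (fun s => f s * Real.exp (k * s))
      ((f' s + k * f s) * Real.exp (k * s)) s := by
    intro s hs
    have h1 : HasDerivAt (fun s : ℝ => Real.exp (k * s)) (Real.exp (k * s) * (k * 1)) s :=
      ((hasDerivAt_id s).const_mul k).exp
    have h2 := (hf s hs).mul h1
    have h3 : f' s * Real.exp (k * s) + f s * (Real.exp (k * s) * (k * 1)) =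
        (f' s + k * f s) * Real.exp (k * s) := by ring
    rw [← h3]
    exact h2
  have hm : MonotoneOn (fun s => f s * Real.exp (k * s)) (Set.Icc a b) := by
    apply monotoneOn_of_deriv_nonneg (convex_Icc a b)
    · intro s hs
      exact (hd s hs).continuousAt.continuousWithinAt
    · intro s hs
      rw [interior_Icc] at hs
      exact (hd s ⟨hs.1.le, hs.2.le⟩).differentiableAt.differentiableWithinAt
    · intro s hs
      rw [interior_Icc] at hs
      rw [(hd s ⟨hs.1.le, hs.2.le⟩).deriv]
      exact mul_nonneg (h s hs) (Real.exp_pos _).le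
  exact hm ⟨le_rfl, hab⟩ ⟨hab, le_rfl⟩ hab

lemma gron_pos (a b : ℝ) (hab : a ≤ b) (f f' : ℝ → ℝ)
    (hf : ∀ s ∈ Set.Icc a b, HasDerivAt f (f' s) s)
    (h : ∀ s ∈ Set.Ioo a b, 0 ≤ f' s + f s) (h0 : 0 < f a) : 0 < f b := by
  have := gron_aux 1 a b hab f f' hf (by simpa using h)
  have h2 : 0 < f a * Real.exp (1 * a) := mul_pos h0 (Real.exp_pos _)
  exact pos_of_mul_pos_left (h2.trans_le this) (Real.exp_pos _).le

lemma gron_lower (m a b : ℝ) (hab : a ≤ b) (f f' : ℝ → ℝ)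
    (hf : ∀ s ∈ Set.Icc a b, HasDerivAt f (f' s) s)
    (h : ∀ s ∈ Set.Ioo a b, m ≤ f' s + f s) (h0 : m ≤ f a) : m ≤ f b := by
  have := gron_aux 1 a b hab (fun s => f s - m) f' (fun s hs => (hf s hs).sub_const m)
    (by intro s hs; have := h s hs; linarith)
  have h2 : 0 ≤ (f a - m) * Real.exp (1 * a) := mul_nonneg (by linarith) (Real.exp_pos _).le
  have h3 := nonneg_of_mul_nonneg_left (h2.trans this) (Real.exp_pos _)
  linarith

/-- key estimate for `U = 1/d - X`. -/
lemma U_est (D e x y : ℝ) (hD : 2 ≤ D) (he : D * e = 1) (hx : 0 < x) (hxe : x < e) :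
    (D - 1) * (e ^ 2 - y ^ 2) ≤ -(x * (D * x ^ 2 - 1) + (D - 1) * y ^ 2) + (e - x) := by
  have key : -(x * (D * x ^ 2 - 1) + (D - 1) * y ^ 2) + (e - x) - (D - 1) * (e ^ 2 - y ^ 2)
      = (e - x) * (D * x ^ 2 + x + e) := by
    have : e ^ 2 * D = e := by rw [sq, mul_assoc, mul_comm e D, he, mul_one]
    linear_combination (-x ^ 2 - e) * he
  have : 0 ≤ (e - x) * (D * x ^ 2 + x + e) := by
    apply mul_nonneg (by linarith)
    have : 0 ≤ D * x ^ 2 := by positivity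
    linarith
  linarith

/-- Trajectories starting in the region `0 < X, Y < 1/d` converge to the origin. -/
theorem stmt_2 (d : ℕ) (hd : 2 ≤ d) (s₀ : ℝ) (X Y : ℝ → ℝ)
    (hsol : IsSubsystemSol d X Y (Set.Ici s₀))
    (hX₀ : 0 < X s₀ ∧ X s₀ < 1 / d) (hY₀ : 0 < Y s₀ ∧ Y s₀ < 1 / d) :
    Tendsto X atTop (𝓝 0) ∧ Tendsto Y atTop (𝓝 0) := by
  obtain ⟨hX, hY⟩ := hsol
  have hD : (2 : ℝ) ≤ d := by exact_mod_cast hd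
  generalize (d : ℝ) = D at *
  obtain ⟨e, he⟩ : ∃ e, e = 1 / D := ⟨_, rfl⟩
  rw [← he] at hX₀ hY₀
  have hDe : D * e = 1 := by rw [he]; field_simp
  have he0 : 0 < e := hX₀.1.trans hX₀.2
  have hxd : ∀ x, x < e → D * x < 1 := fun x hx => by
    rw [← hDe]; exact mul_lt_mul_of_pos_left hx (by linarith)
  have he1 : e < 1 := by nlinarith
  have hU : ∀ s ∈ Set.Ici s₀, HasDerivAt (fun s => e - X s)
      (-(X s * (D * X s ^ 2 - 1) + (D - 1) * Y s ^ 2)) s :=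
    fun s hs => (hX s hs).const_sub e
  -- pointwise facts inside the box
  have fX : ∀ s, 0 < X s → (D - 1) * Y s ^ 2 ≤
      (X s * (D * X s ^ 2 - 1) + (D - 1) * Y s ^ 2) + X s := by
    intro s h
    have : 0 ≤ D * X s ^ 3 := by positivity
    linarith [show (X s * (D * X s ^ 2 - 1) + (D - 1) * Y s ^ 2) + X s
      = D * X s ^ 3 + (D - 1) * Y s ^ 2 by ring]
  -- Y decreasing as long as in the box
  have Yanti : ∀ a b, s₀ ≤ a → a ≤ b → (∀ s ∈ Set.Ioo a b, (0 < X s ∧ X s < e) ∧ 0 < Y s) →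
      Y b ≤ Y a := by
    intro a b ha hab h
    have := gron_aux 0 a b hab (fun s => - Y s) _
      (fun s hs => (hY s (ha.trans hs.1)).neg) (by
        intro s hs
        obtain ⟨⟨h1, h2⟩, h3⟩ := h s hs
        have h4 := hxd _ h2
        have : 0 ≤ X s * Y s * (1 - D * X s) := by
          apply mul_nonneg (mul_pos h1 h3).le; linarith
        linarith)
    simp at this
    exact this
  -- step
  have step : ∀ t, s₀ ≤ t →
      (∀ s ∈ Set.Ico s₀ t, (0 < X s ∧ X s < e) ∧ (0 < Y s ∧ Y s < e)) →
      (0 < X t ∧ X t < e) ∧ (0 < Y t ∧ Y t < e) := by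
    intro t ht h
    have h' : ∀ s ∈ Set.Ioo s₀ t, (0 < X s ∧ X s < e) ∧ (0 < Y s ∧ Y s < e) :=
      fun s hs => h s ⟨hs.1.le, hs.2⟩
    refine ⟨⟨?_, ?_⟩, ?_, ?_⟩
    · refine gron_pos s₀ t ht X _ (fun s hs => hX s hs.1) (fun s hs => ?_) hX₀.1
      refine le_trans ?_ (fX s (h' s hs).1.1)
      exact mul_nonneg (by linarith) (sq_nonneg _)
    · have := gron_pos s₀ t ht (fun s => e - X s) _ (fun s hs => hU s hs.1) (fun s hs => ?_)
        (by linarith [hX₀.2])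
      · linarith
      · obtain ⟨⟨h1, h2⟩, h3, h4⟩ := h' s hs
        refine le_trans ?_ (U_est D e (X s) (Y s) hD hDe h1 h2)
        apply mul_nonneg (by linarith)
        nlinarith
    · refine gron_pos s₀ t ht Y _ (fun s hs => hY s hs.1) (fun s hs => ?_) hY₀.1
      obtain ⟨⟨h1, h2⟩, h3, h4⟩ := h' s hs
      have : 0 ≤ Y s * ((1 - X s) + D * X s ^ 2) := by
        apply mul_nonneg h3.le
        have : 0 ≤ D * X s ^ 2 := by positivity
        linarith
      linarith
    · exact (Yanti s₀ t le_rfl ht (fun s hs => ⟨(h' s hs).1, (h' s hs).2.1⟩)).trans_lt hY₀.2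
  have cX : ContinuousOn X (Set.Ici s₀) := fun s hs => (hX s hs).continuousAt.continuousWithinAt
  have cY : ContinuousOn Y (Set.Ici s₀) := fun s hs => (hY s hs).continuousAt.continuousWithinAt
  have box : ∀ t, s₀ ≤ t → (0 < X t ∧ X t < e) ∧ (0 < Y t ∧ Y t < e) := by
    intro t₁ ht₁
    by_contra hn
    let φ : ℝ → ℝ := fun s => min (min (X s) (e - X s)) (min (Y s) (e - Y s))
    have hφ : ∀ s, 0 < φ s ↔ (0 < X s ∧ X s < e) ∧ (0 < Y s ∧ Y s < e) := by
      intro s; simp [φ]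
    have cφ : ContinuousOn φ (Set.Icc s₀ t₁) := by
      have cX' := cX.mono (fun s hs => hs.1 : Set.Icc s₀ t₁ ⊆ Set.Ici s₀)
      have cY' := cY.mono (fun s hs => hs.1 : Set.Icc s₀ t₁ ⊆ Set.Ici s₀)
      exact (cX'.inf (continuousOn_const.sub cX')).inf (cY'.inf (continuousOn_const.sub cY'))
    have hcl : IsClosed (Set.Icc s₀ t₁ ∩ φ ⁻¹' Set.Iic 0) :=
      cφ.preimage_isClosed_of_isClosed isClosed_Icc isClosed_Iic
    have hcp : IsCompact (Set.Icc s₀ t₁ ∩ φ ⁻¹' Set.Iic 0) :=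
      isCompact_Icc.of_isClosed_subset hcl Set.inter_subset_left
    obtain ⟨t, ⟨ht, htφ⟩, hmin⟩ := hcp.exists_isLeast
      ⟨t₁, ⟨ht₁, le_rfl⟩, by rw [← hφ] at hn; simpa using hn⟩
    have : 0 < φ t := by
      rw [hφ]
      refine step t ht.1 (fun s hs => ?_)
      rw [← hφ]
      by_contra hc
      have := hmin ⟨⟨hs.1, hs.2.le.trans ht.2⟩, by simpa using hc⟩
      linarith [hs.2]
    exact absurd htφ (by simpa using this)
  have Ymono : ∀ a b, s₀ ≤ a → a ≤ b → Y b ≤ Y a := fun a b ha hab =>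
    Yanti a b ha hab (fun s hs =>
      ⟨(box s (ha.trans hs.1.le)).1, (box s (ha.trans hs.1.le)).2.1⟩)
  -- X stays away from e
  obtain ⟨m, hm0, hm⟩ : ∃ m, 0 < m ∧ ∀ t, s₀ ≤ t → m ≤ e - X t := by
    refine ⟨min (e - X s₀) ((D - 1) * (e ^ 2 - Y s₀ ^ 2)), ?_, fun t ht => ?_⟩
    · refine lt_min (by linarith [hX₀.2]) (mul_pos (by linarith) ?_)
      nlinarith [hY₀.1, hY₀.2]
    · refine gron_lower _ s₀ t ht (fun s => e - X s) _ (fun s hs => hU s hs.1) (fun s hs => ?_)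
        (min_le_left _ _)
      obtain ⟨⟨h1, h2⟩, h3, h4⟩ := box s hs.1.le
      refine le_trans (min_le_right _ _) (le_trans ?_ (U_est D e (X s) (Y s) hD hDe h1 h2))
      have := Ymono s₀ s le_rfl hs.1.le
      apply mul_le_mul_of_nonneg_left _ (by linarith : 0 ≤ D - 1)
      nlinarith
  have hk0 : 0 < D * m := by positivity
  have hk : ∀ t, s₀ ≤ t → D * m ≤ 1 - D * X t := by
    intro t ht
    have := mul_le_mul_of_nonneg_left (hm t ht) (by linarith : 0 ≤ D)
    linarith
  generalize D * m = k at hk0 hk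
  -- Y gets below any positive level
  have Ysmall : ∀ L, 0 < L → ∃ T, s₀ ≤ T ∧ Y T < L := by
    intro L hL
    by_contra! hc
    have ha : 0 < (D - 1) * L ^ 2 := mul_pos (by linarith) (by positivity)
    obtain ⟨b, hb0, hb⟩ : ∃ b, 0 < b ∧ ∀ t, s₀ ≤ t → b ≤ X t := by
      refine ⟨min (X s₀) ((D - 1) * L ^ 2), lt_min hX₀.1 ha, fun t ht => ?_⟩
      refine gron_lower _ s₀ t ht X _ (fun s hs => hX s hs.1) (fun s hs => ?_) (min_le_left _ _)
      refine le_trans (min_le_right _ _) (le_trans ?_ (fX s (box s hs.1.le).1.1))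
      apply mul_le_mul_of_nonneg_left _ (by linarith : 0 ≤ D - 1)
      have := hc s hs.1.le
      nlinarith
    have hq : 0 < b * L * k := by positivity
    have hlin : ∀ t, s₀ ≤ t → Y t + b * L * k * t ≤ Y s₀ + b * L * k * s₀ := by
      intro t ht
      have := gron_aux 0 s₀ t ht (fun s => - (Y s + b * L * k * s)) _
        (fun s hs => ((hY s hs.1).add ((hasDerivAt_id s).const_mul (b * L * k))).neg) (by
          intro s hs
          have h1 := hb s hs.1.le
          have h2 := hc s hs.1.le
          have h3 := hk s hs.1.le
          have : b * L * k ≤ X s * Y s * (1 - D * X s) :=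
            mul_le_mul (mul_le_mul h1 h2 hL.le (hb0.le.trans h1)) h3 hk0.le
              (mul_nonneg (hb0.le.trans h1) (hL.le.trans h2))
          linarith)
      simp only [zero_mul, Real.exp_zero, mul_one] at this
      linarith
    have h1 := hlin (s₀ + Y s₀ / (b * L * k)) (by
      have : 0 < Y s₀ / (b * L * k) := div_pos hY₀.1 hq
      linarith)
    have h2 := (box (s₀ + Y s₀ / (b * L * k)) (by
      have : 0 < Y s₀ / (b * L * k) := div_pos hY₀.1 hq
      linarith)).2.1
    rw [mul_add, mul_div_cancel₀ _ hq.ne'] at h1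
    linarith
  have Yev : ∀ L, 0 < L → ∃ T, s₀ ≤ T ∧ ∀ t, T ≤ t → Y t < L := by
    intro L hL
    obtain ⟨T, hT, h⟩ := Ysmall L hL
    exact ⟨T, hT, fun t ht => (Ymono T t hT ht).trans_lt h⟩
  refine ⟨?_, ?_⟩
  · rw [Metric.tendsto_atTop]
    intro ε hε
    have hD1 : 0 < D - 1 := by linarith
    have hc : 0 < k * (ε / 2) / (D - 1) := by positivity
    obtain ⟨T, hT, h⟩ := Yev (min 1 (k * (ε / 2) / (D - 1))) (lt_min one_pos hc)
    have hbd : ∀ t, T ≤ t → (ε / 2 - X T) * Real.exp (k * T) ≤ (ε / 2 - X t) * Real.exp (k * t) := by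
      intro t ht
      refine gron_aux k T t ht (fun s => ε / 2 - X s) _
        (fun s hs => (hX s (hT.trans hs.1)).const_sub (ε / 2)) (fun s hs => ?_)
      obtain ⟨⟨h1, h2⟩, h3, h4⟩ := box s (hT.trans hs.1.le)
      have h5 := hk s (hT.trans hs.1.le)
      have h6 := h s hs.1.le
      have h7 : Y s < 1 := h6.trans_le (min_le_left _ _)
      have h8 : Y s < k * (ε / 2) / (D - 1) := h6.trans_le (min_le_right _ _)
      rw [lt_div_iff₀ hD1] at h8
      have h9 : Y s ^ 2 ≤ Y s := by nlinarith
      have h10 : (D - 1) * Y s ^ 2 ≤ (D - 1) * Y s := by gcongr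
      have h11 : 0 ≤ X s * (1 - D * X s ^ 2 - k) := by
        apply mul_nonneg h1.le
        have : X s ^ 2 ≤ X s := by nlinarith
        have : D * X s ^ 2 ≤ D * X s := by gcongr
        linarith
      linarith
    have hlim : Tendsto (fun t : ℝ => Real.exp (k * t)) atTop atTop :=
      Real.tendsto_exp_atTop.comp (tendsto_id.const_mul_atTop hk0)
    obtain ⟨T', hT'⟩ := (hlim.eventually_gt_atTop
      (-((ε / 2 - X T) * Real.exp (k * T)) / (ε / 2))).exists_forall_of_atTop
    refine ⟨max T T', fun t ht => ?_⟩
    have ht1 := (le_max_left _ _).trans ht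
    have h1 := hbd t ht1
    have h2 := hT' t ((le_max_right _ _).trans ht)
    rw [div_lt_iff₀ (by positivity)] at h2
    have hx := (box t (hT.trans ht1)).1.1
    rw [Real.dist_eq, sub_zero, abs_of_pos hx]
    have h3 : 0 < (ε - X t) * Real.exp (k * t) := by linarith
    have := pos_of_mul_pos_left h3 (Real.exp_pos _).le
    linarith
  · rw [Metric.tendsto_atTop]
    intro ε hε
    obtain ⟨T, hT, h⟩ := Yev ε hε
    refine ⟨T, fun t ht => ?_⟩
    rw [Real.dist_eq, sub_zero, abs_of_pos (box t (hT.trans ht)).2.1]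
    exact h t ht
end

section
/- Let (X, Y) be a solution of the subsystem defined on [s₀, ∞) with 0 < X(s₀) < 1/d and 0 < Y(s₀) < 1/d. Then X(s)/Y(s)² → d − 1 as s → ∞. -/
open Filter Topology

lemma decay_aux (g g' : ℝ → ℝ) (a T t : ℝ) (hTt : T ≤ t)
    (hg : ∀ s ∈ Set.Icc T t, HasDerivAt g (g' s) s)
    (hb : ∀ s ∈ Set.Ioo T t, -a * g s ≤ g' s) :
    g T * Real.exp (-a * (t - T)) ≤ g t := by
  have hd : ∀ s ∈ Set.Icc T t, HasDerivAt (fun s => g s * Real.exp (a * s))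
      (g' s * Real.exp (a * s) + g s * (Real.exp (a * s) * a)) s := by
    intro s hs
    have h1 : HasDerivAt (fun s : ℝ => a * s) a s := by
      simpa using (hasDerivAt_id s).const_mul a
    exact (hg s hs).mul h1.exp
  have hm : MonotoneOn (fun s => g s * Real.exp (a * s)) (Set.Icc T t) := by
    apply monotoneOn_of_deriv_nonneg (convex_Icc T t)
    · exact fun s hs => (hd s hs).continuousAt.continuousWithinAt
    · intro s hs
      rw [interior_Icc] at hs
      exact (hd s (Set.Ioo_subset_Icc_self hs)).differentiableAt.differentiableWithinAt
    · intro s hs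
      rw [interior_Icc] at hs
      rw [(hd s (Set.Ioo_subset_Icc_self hs)).deriv]
      have h2 := hb s hs
      have h3 := Real.exp_pos (a * s)
      have : 0 ≤ (g' s + a * g s) * Real.exp (a * s) := mul_nonneg (by linarith) h3.le
      linarith
  have h := hm (Set.left_mem_Icc.2 hTt) (Set.right_mem_Icc.2 hTt) hTt
  simp only at h
  have e : Real.exp (-a * (t - T)) = Real.exp (a * T) * Real.exp (-(a * t)) := by
    rw [← Real.exp_add]; ring_nf
  have e2 : Real.exp (a * t) * Real.exp (-(a * t)) = 1 := by
    rw [← Real.exp_add]; simp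
  calc g T * Real.exp (-a * (t - T)) = (g T * Real.exp (a * T)) * Real.exp (-(a * t)) := by
        rw [e]; ring
    _ ≤ (g t * Real.exp (a * t)) * Real.exp (-(a * t)) :=
        mul_le_mul_of_nonneg_right h (Real.exp_pos _).le
    _ = g t := by rw [mul_assoc, e2, mul_one]

lemma region_aux (D s₀ m Y₁ : ℝ) (X Y : ℝ → ℝ) (hD : 2 ≤ D) (hm : D * m < 1)
    (hf : m * (D * m ^ 2 - 1) + (D - 1) * Y₁ ^ 2 < 0)
    (hX : ∀ s ∈ Set.Ici s₀, HasDerivAt X (X s * (D * X s ^ 2 - 1) + (D - 1) * Y s ^ 2) s)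
    (hY : ∀ s ∈ Set.Ici s₀, HasDerivAt Y (X s * Y s * (D * X s - 1)) s)
    (h1 : 0 < X s₀) (h2 : X s₀ < m) (h3 : 0 < Y s₀) (h4 : Y s₀ < Y₁) :
    ∀ s ∈ Set.Ici s₀, 0 < X s ∧ X s < m ∧ 0 < Y s ∧ Y s < Y₁ := by
  by_contra hcon
  push Not at hcon
  have hXc : ContinuousOn X (Set.Ici s₀) := fun s hs => (hX s hs).continuousAt.continuousWithinAt
  have hYc : ContinuousOn Y (Set.Ici s₀) := fun s hs => (hY s hs).continuousAt.continuousWithinAt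
  let h : ℝ → ℝ := fun s => min (min (X s) (m - X s)) (min (Y s) (Y₁ - Y s))
  have hc : ContinuousOn h (Set.Ici s₀) :=
    by
    have h1 : ContinuousOn (fun s => m - X s) (Set.Ici s₀) := continuousOn_const.sub hXc
    have h2 : ContinuousOn (fun s => Y₁ - Y s) (Set.Ici s₀) := continuousOn_const.sub hYc
    exact ContinuousOn.inf (ContinuousOn.inf hXc h1) (ContinuousOn.inf hYc h2)
  let S := Set.Ici s₀ ∩ h ⁻¹' Set.Iic 0
  have hSc : IsClosed S := hc.preimage_isClosed_of_isClosed isClosed_Ici isClosed_Iic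
  have hpos : ∀ s, 0 < h s ↔ (0 < X s ∧ X s < m ∧ 0 < Y s ∧ Y s < Y₁) := by
    intro s
    simp only [h, lt_min_iff, sub_pos]
    tauto
  have hSn : S.Nonempty := by
    obtain ⟨s, hs, hs'⟩ := hcon
    refine ⟨s, hs, ?_⟩
    by_contra hn
    have : 0 < h s := by simpa using hn
    obtain ⟨a, b, c, e⟩ := (hpos s).1 this
    exact absurd e (not_lt.2 (hs' a b c))
  have hSb : BddBelow S := ⟨s₀, fun s hs => hs.1⟩
  have hT := hSc.csInf_mem hSn hSb
  set T := sInf S with hTdef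
  have hT0 : s₀ ≤ T := hT.1
  have hbef : ∀ s ∈ Set.Ioo s₀ T, 0 < X s ∧ X s < m ∧ 0 < Y s ∧ Y s < Y₁ := by
    intro s hs
    rw [← hpos]
    by_contra hn
    have : s ∈ S := ⟨hs.1.le, by simpa using hn⟩
    exact absurd (csInf_le hSb this) (not_le.2 hs.2)
  have hIcc : ∀ s ∈ Set.Icc s₀ T, s ∈ Set.Ici s₀ := fun s hs => hs.1
  have hm0 : 0 < m := h1.trans h2
  have hsmall : ∀ x, 0 < x → x < m → D * x < 1 := fun x _ hx' => by nlinarith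
  have key : ∀ g : ℝ, 0 < g → 0 < g * Real.exp (-1 * (T - s₀)) := fun g hg =>
    mul_pos hg (Real.exp_pos _)
  have a1 := decay_aux X _ 1 s₀ T hT0 (fun s hs => hX s (hIcc s hs)) (by
    intro s hs
    obtain ⟨p1, p2, p3, p4⟩ := hbef s hs
    have : 0 ≤ D * X s ^ 3 := by positivity
    have : 0 ≤ (D - 1) * Y s ^ 2 := mul_nonneg (by linarith) (sq_nonneg _)
    linarith)
  have a2 := decay_aux (fun s => m - X s) _ 1 s₀ T hT0
      (fun s hs => (hX s (hIcc s hs)).const_sub m) (by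
    intro s hs
    obtain ⟨p1, p2, p3, p4⟩ := hbef s hs
    have q1 : 0 ≤ (D - 1) * (Y₁ ^ 2 - Y s ^ 2) :=
      mul_nonneg (by linarith) (by nlinarith)
    have q2 : 0 ≤ (m - X s) * (D * (m ^ 2 + m * X s + X s ^ 2)) :=
      mul_nonneg (by linarith) (by positivity)
    nlinarith)
  have a3 := decay_aux Y _ 1 s₀ T hT0 (fun s hs => hY s (hIcc s hs)) (by
    intro s hs
    obtain ⟨p1, p2, p3, p4⟩ := hbef s hs
    have q := hsmall _ p1 p2
    have q1 : X s < 1 := by nlinarith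
    have q2 : 0 ≤ Y s * (1 - X s) := mul_nonneg p3.le (by linarith)
    have q3 : 0 ≤ D * X s ^ 2 * Y s := by positivity
    nlinarith)
  have a4 := decay_aux (fun s => Y₁ - Y s) _ 1 s₀ T hT0
      (fun s hs => (hY s (hIcc s hs)).const_sub Y₁) (by
    intro s hs
    obtain ⟨p1, p2, p3, p4⟩ := hbef s hs
    have q := hsmall _ p1 p2
    have q2 : 0 ≤ X s * Y s * (1 - D * X s) := mul_nonneg (by positivity) (by linarith)
    linarith)
  have b1 := key _ h1
  have b2 := key _ (sub_pos.2 h2)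
  have b3 := key _ h3
  have b4 := key _ (sub_pos.2 h4)
  have : 0 < h T := (hpos T).2 ⟨by linarith, by linarith, by linarith, by linarith⟩
  exact absurd hT.2 (not_le.2 this)

lemma exp_decay_lim (K T : ℝ) :
    Tendsto (fun s : ℝ => K * Real.exp (-1 * (s - T))) atTop (𝓝 0) := by
  have h : Tendsto (fun s : ℝ => Real.exp (-1 * (s - T))) atTop (𝓝 0) := by
    apply Real.tendsto_exp_atBot.comp
    have := tendsto_neg_atTop_atBot.comp (tendsto_atTop_add_const_right atTop (-T) tendsto_id)
    refine this.congr fun s => ?_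
    simp only [Function.comp, id]; ring
  simpa using h.const_mul K

/-- Along trajectories in the region `0 < X, Y < 1/d`, `X/Y² → d − 1`. -/
theorem stmt_3 (d : ℕ) (hd : 2 ≤ d) (s₀ : ℝ) (X Y : ℝ → ℝ)
    (hsol : IsSubsystemSol d X Y (Set.Ici s₀))
    (hX₀ : 0 < X s₀ ∧ X s₀ < 1 / d) (hY₀ : 0 < Y s₀ ∧ Y s₀ < 1 / d) :
    Tendsto (fun s => X s / Y s ^ 2) atTop (𝓝 ((d : ℝ) - 1)) := by
  obtain ⟨hX, hY⟩ := hsol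
  have hD : (2 : ℝ) ≤ (d : ℝ) := by exact_mod_cast hd
  generalize (d : ℝ) = D at *
  obtain ⟨Y₁, hY1, hY1'⟩ := exists_between hY₀.2
  have hDp : 0 < D := by linarith
  obtain ⟨m, hmX, hmD, hmf⟩ : ∃ m, X s₀ < m ∧ m < 1 / D ∧
      m * (D * m ^ 2 - 1) + (D - 1) * Y₁ ^ 2 < 0 := by
    have hc : Continuous fun m : ℝ => m * (D * m ^ 2 - 1) + (D - 1) * Y₁ ^ 2 := by fun_prop
    have h0 : (1 / D) * (D * (1 / D) ^ 2 - 1) + (D - 1) * Y₁ ^ 2 < 0 := by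
      have e : (1 / D) * (D * (1 / D) ^ 2 - 1) = -(D - 1) * (1 / D) ^ 2 := by
        field_simp; ring
      have : Y₁ ^ 2 < (1 / D) ^ 2 := by
        apply pow_lt_pow_left₀ hY1' (by linarith) (by norm_num)
      rw [e]; nlinarith
    have e1 : ∀ᶠ m in 𝓝[<] (1 / D), m * (D * m ^ 2 - 1) + (D - 1) * Y₁ ^ 2 < 0 :=
      nhdsWithin_le_nhds (hc.continuousAt.eventually_lt continuousAt_const h0)
    have e2 : ∀ᶠ m in 𝓝[<] (1 / D), m ∈ Set.Ioo (X s₀) (1 / D) := Ioo_mem_nhdsLT hX₀.2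
    obtain ⟨m, k1, k2⟩ := (e1.and e2).exists
    exact ⟨m, k2.1, k2.2, k1⟩
  have hDm : D * m < 1 := by
    rw [lt_div_iff₀ hDp] at hmD; linarith
  have hreg := region_aux D s₀ m Y₁ X Y hD hDm hmf hX hY hX₀.1 hmX hY₀.1 hY1
  set R : ℝ → ℝ := fun s => X s / Y s ^ 2 with hRdef
  let k : ℝ → ℝ := fun s => 1 - 2 * X s + D * X s ^ 2
  have hR : ∀ s ∈ Set.Ici s₀, HasDerivAt R ((D - 1) - R s * k s) s := by
    intro s hs
    have hy := (hreg s hs).2.2.1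
    have h := (hX s hs).div ((hY s hs).pow 2) (pow_ne_zero 2 hy.ne')
    refine HasDerivAt.congr_deriv h ?_
    simp only [hRdef, k, Pi.pow_apply]
    field_simp
    push_cast
    ring
  have hDX : ∀ s ∈ Set.Ici s₀, D * X s < D * m := fun s hs => by
    have := (hreg s hs).2.1
    gcongr
  have hk1 : ∀ s ∈ Set.Ici s₀, k s ≤ 1 := by
    intro s hs
    have h1 := (hreg s hs).1
    have h2 := hDX s hs
    simp only [k]
    nlinarith
  have hk2 : ∀ s ∈ Set.Ici s₀, 1 / 2 ≤ k s := by
    intro s hs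
    simp only [k]
    nlinarith [sq_nonneg (X s - 1 / 2), sq_nonneg (X s)]
  have hRpos : ∀ s ∈ Set.Ici s₀, 0 < R s := by
    intro s hs
    obtain ⟨p1, p2, p3, p4⟩ := hreg s hs
    simp only [hRdef]; positivity
  have hs₀ : s₀ ∈ Set.Ici s₀ := Set.self_mem_Ici
  obtain ⟨c, hc0, hc⟩ : ∃ c, 0 < c ∧ ∀ s ∈ Set.Ici s₀, c ≤ R s := by
    refine ⟨min (R s₀) (D - 1), lt_min (hRpos s₀ hs₀) (by linarith), fun t ht => ?_⟩
    set c := min (R s₀) (D - 1) with hcd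
    have hc1 : c ≤ R s₀ := min_le_left _ _
    have hc2 : c ≤ D - 1 := min_le_right _ _
    have := decay_aux (fun s => R s - c) _ 1 s₀ t ht
      (fun s hs => (hR s hs.1).sub_const c) (by
        intro s hs
        have := mul_le_mul_of_nonneg_left (hk1 s hs.1.le) (hRpos s hs.1.le).le
        linarith)
    have h2 := mul_nonneg (sub_nonneg.2 hc1) (Real.exp_pos (-1 * (t - s₀))).le
    linarith
  obtain ⟨C, hC⟩ : ∃ C, ∀ s ∈ Set.Ici s₀, R s ≤ C := by
    refine ⟨max (R s₀) (2 * (D - 1)), fun t ht => ?_⟩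
    set C := max (R s₀) (2 * (D - 1)) with hcd
    have hc1 : R s₀ ≤ C := le_max_left _ _
    have hc2 : 2 * (D - 1) ≤ C := le_max_right _ _
    have := decay_aux (fun s => C - R s) _ (1 / 2) s₀ t ht
      (fun s hs => (hR s hs.1).const_sub C) (by
        intro s hs
        have := mul_le_mul_of_nonneg_left (hk2 s hs.1.le) (hRpos s hs.1.le).le
        linarith)
    have h2 := mul_nonneg (sub_nonneg.2 hc1) (Real.exp_pos (-(1 / 2) * (t - s₀))).le
    linarith
  have hC0 : 0 < C := (hRpos s₀ hs₀).trans_le (hC s₀ hs₀)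
  -- Z = 1 / Y^2 grows at least linearly
  let Z : ℝ → ℝ := fun s => 1 / Y s ^ 2
  have hZ : ∀ s ∈ Set.Ici s₀, HasDerivAt Z (2 * R s * (1 - D * X s)) s := by
    intro s hs
    have hy := (hreg s hs).2.2.1
    have h := (hasDerivAt_const s (1 : ℝ)).div ((hY s hs).pow 2) (pow_ne_zero 2 hy.ne')
    refine HasDerivAt.congr_deriv h ?_
    simp only [hRdef, Pi.pow_apply]
    field_simp
    push_cast
    ring
  set ε₀ := 2 * c * (1 - D * m) with hε₀
  have hε₀p : 0 < ε₀ := mul_pos (by linarith) (by linarith)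
  have hZlow : ∀ t ∈ Set.Ici s₀, Z s₀ - ε₀ * s₀ + ε₀ * t ≤ Z t := by
    intro t ht
    have := decay_aux (fun s => Z s - ε₀ * s) _ 0 s₀ t ht
      (fun s hs => (hZ s hs.1).sub ((hasDerivAt_id s).const_mul ε₀)) (by
        intro s hs
        have h1 := hc s hs.1.le
        have h2 := hDX s hs.1.le
        have : c * (1 - D * m) ≤ R s * (1 - D * X s) :=
          mul_le_mul h1 (by linarith) (by linarith) (by linarith)
        simp only [hε₀]
        linarith)
    simp at this
    linarith
  have hZtop : Tendsto Z atTop atTop := by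
    refine tendsto_atTop_mono' atTop ?_
      (tendsto_atTop_add_const_left atTop (Z s₀ - ε₀ * s₀)
        (tendsto_id.const_mul_atTop hε₀p))
    filter_upwards [eventually_ge_atTop s₀] with t ht using hZlow t ht
  have hXlim : Tendsto X atTop (𝓝 0) := by
    have h1 : Tendsto (fun s => C / Z s) atTop (𝓝 0) := hZtop.const_div_atTop C
    refine tendsto_of_tendsto_of_tendsto_of_le_of_le' tendsto_const_nhds h1 ?_ ?_
    · filter_upwards [eventually_ge_atTop s₀] with t ht using (hreg t ht).1.le
    · filter_upwards [eventually_ge_atTop s₀] with t ht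
      have hy := (hreg t ht).2.2.1
      have h := hC t ht
      simp only [hRdef] at h
      rw [div_le_iff₀ (by positivity)] at h
      simpa [Z] using h
  have hklim : Tendsto (fun s => C * (1 - k s)) atTop (𝓝 0) := by
    have : Tendsto (fun s => C * (1 - (1 - 2 * X s + D * X s ^ 2))) atTop
        (𝓝 (C * (1 - (1 - 2 * 0 + D * 0 ^ 2)))) :=
      (((tendsto_const_nhds.sub (hXlim.const_mul 2)).add
        ((hXlim.pow 2).const_mul D)).const_sub 1).const_mul C
    simpa [k] using this
  rw [Metric.tendsto_atTop']
  intro ε hε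
  obtain ⟨T, hT⟩ := eventually_atTop.1
    ((hklim.eventually (gt_mem_nhds (half_pos hε))).and (eventually_ge_atTop s₀))
  have hTs : s₀ ≤ T := (hT T le_rfl).2
  have hbd : ∀ s, T ≤ s → 0 ≤ R s * (1 - k s) ∧ R s * (1 - k s) ≤ ε / 2 := by
    intro s hs
    obtain ⟨q1, q2⟩ := hT s hs
    have h1 : 0 ≤ 1 - k s := by linarith [hk1 s q2]
    exact ⟨mul_nonneg (hRpos s q2).le h1,
      (mul_le_mul_of_nonneg_right (hC s q2) h1).trans q1.le⟩
  have up : ∀ t, T ≤ t → (ε / 2 - (R T - (D - 1))) * Real.exp (-1 * (t - T)) ≤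
      ε / 2 - (R t - (D - 1)) := by
    intro t ht
    exact decay_aux (fun s => ε / 2 - (R s - (D - 1))) _ 1 T t ht
      (fun s hs => ((hR s (hTs.trans hs.1)).sub_const (D - 1)).const_sub (ε / 2)) (by
        intro s hs
        have := hbd s hs.1.le
        linarith)
  have low : ∀ t, T ≤ t → (R T - (D - 1)) * Real.exp (-1 * (t - T)) ≤
      R t - (D - 1) := by
    intro t ht
    exact decay_aux (fun s => R s - (D - 1)) _ 1 T t ht
      (fun s hs => (hR s (hTs.trans hs.1)).sub_const (D - 1)) (by
        intro s hs
        have := hbd s hs.1.le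
        linarith)
  have l1 := (exp_decay_lim (ε / 2 - (R T - (D - 1))) T).eventually
    (lt_mem_nhds (show -(ε / 2) < 0 by linarith))
  have l2 := (exp_decay_lim (R T - (D - 1)) T).eventually
    (lt_mem_nhds (show -(ε / 2) < 0 by linarith))
  obtain ⟨N, hN⟩ := eventually_atTop.1 ((l1.and l2).and (eventually_ge_atTop T))
  refine ⟨N, fun t ht => ?_⟩
  obtain ⟨⟨u1, u2⟩, u3⟩ := hN t ht.le
  have v1 := up t u3
  have v2 := low t u3
  rw [Real.dist_eq, abs_lt]
  constructor <;> linarith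
end

section
/- Let (X, Y) be a solution of the subsystem defined on [s₀, ∞) with 0 < X(s₀) < 1/d and 0 < Y(s₀) < 1/d. Then (1/X(s))·(X(s)/Y(s)² − (d−1)) → 2(d−1) as s → ∞. -/
open Filter Topology

theorem aux_comp (f f' : ℝ → ℝ) (c e a b : ℝ) (hab : a ≤ b)
    (hf : ∀ s ∈ Set.Icc a b, HasDerivAt f (f' s) s)
    (h : ∀ s ∈ Set.Ioo a b, f' s ≤ -c * (f s - e)) :
    f b - e ≤ (f a - e) * Real.exp (-c * (b - a)) := by
  have hd : ∀ s ∈ Set.Icc a b, HasDerivAt (fun s => (f s - e) * Real.exp (c * (s - a)))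
      (f' s * Real.exp (c * (s - a)) + (f s - e) * (Real.exp (c * (s - a)) * (c * 1))) s := by
    intro s hs
    exact ((hf s hs).sub_const e).mul ((((hasDerivAt_id s).sub_const a).const_mul c).exp)
  have hanti : AntitoneOn (fun s => (f s - e) * Real.exp (c * (s - a))) (Set.Icc a b) := by
    apply antitoneOn_of_deriv_nonpos (convex_Icc a b)
    · intro s hs
      exact (hd s hs).continuousAt.continuousWithinAt
    · intro s hs
      rw [interior_Icc] at hs
      exact (hd s (Set.Ioo_subset_Icc_self hs)).differentiableAt.differentiableWithinAt
    · intro s hs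
      rw [interior_Icc] at hs
      rw [(hd s (Set.Ioo_subset_Icc_self hs)).deriv]
      have h1 := h s hs
      have h2 := Real.exp_pos (c * (s - a))
      nlinarith
  have h3 := hanti (Set.left_mem_Icc.2 hab) (Set.right_mem_Icc.2 hab) hab
  simp only [sub_self, mul_zero, Real.exp_zero, mul_one] at h3
  have h4 : Real.exp (c * (b - a)) * Real.exp (-c * (b - a)) = 1 := by
    rw [← Real.exp_add]; simp
  have h5 := mul_le_mul_of_nonneg_right h3 (Real.exp_pos (-c * (b - a))).le
  rwa [mul_assoc, h4, mul_one] at h5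

theorem aux_decay (u p h : ℝ → ℝ) (c : ℝ) (hc : 0 < c)
    (hu : ∀ᶠ s in atTop, HasDerivAt u (-(p s) * u s + h s) s)
    (hp : ∀ᶠ s in atTop, c ≤ p s) (hh : Tendsto h atTop (𝓝 0)) :
    Tendsto u atTop (𝓝 0) := by
  have hz : Tendsto (fun s => (u s) ^ 2) atTop (𝓝 0) := by
    rw [Metric.tendsto_nhds]
    intro ε hε
    have hh2 : Tendsto (fun s => h s ^ 2) atTop (𝓝 0) := by simpa using hh.pow 2
    have hev : ∀ᶠ s in atTop, h s ^ 2 < c ^ 2 * (ε / 2) :=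
      hh2.eventually_lt_const (by positivity)
    obtain ⟨S, hS⟩ := eventually_atTop.1 (hu.and (hp.and hev))
    have key : ∀ s, S ≤ s →
        u s ^ 2 - ε / 2 ≤ (u S ^ 2 - ε / 2) * Real.exp (-c * (s - S)) := by
      intro s hs
      refine aux_comp (fun s => u s ^ 2) (fun s => 2 * u s * (-(p s) * u s + h s)) c (ε / 2) S s hs
        ?_ ?_
      · intro t ht
        have := (hS t ht.1).1.pow 2
        refine this.congr_deriv ?_
        norm_num
      · intro t ht
        obtain ⟨-, h2, h3⟩ := hS t ht.1.le
        have h4 : 2 * u t * h t ≤ c * u t ^ 2 + h t ^ 2 / c := by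
          have : c * u t ^ 2 + h t ^ 2 / c - 2 * u t * h t = (c * u t - h t) ^ 2 / c := by
            field_simp; ring
          have h5 : 0 ≤ (c * u t - h t) ^ 2 / c := by positivity
          linarith
        have h5 : h t ^ 2 / c ≤ c * (ε / 2) := by
          rw [div_le_iff₀ hc]; nlinarith
        have h6 : c * u t ^ 2 ≤ p t * u t ^ 2 := mul_le_mul_of_nonneg_right h2 (sq_nonneg _)
        show 2 * u t * (-(p t) * u t + h t) ≤ -c * (u t ^ 2 - ε / 2)
        nlinarith
    have hlim : Tendsto (fun s => (u S ^ 2 - ε / 2) * Real.exp (-c * (s - S))) atTop (𝓝 0) := by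
      have h1 : Tendsto (fun s : ℝ => -c * (s - S)) atTop atBot :=
        (tendsto_atTop_add_const_right _ (-S) tendsto_id).const_mul_atTop_of_neg (by linarith)
      simpa using (Real.tendsto_exp_atBot.comp h1).const_mul (u S ^ 2 - ε / 2)
    filter_upwards [hlim.eventually_lt_const (half_pos hε), eventually_ge_atTop S] with s h1 h2
    have := key s h2
    rw [Real.dist_eq, sub_zero, abs_of_nonneg (sq_nonneg _)]
    linarith
  have := hz.sqrt
  simp only [Real.sqrt_sq_eq_abs, Real.sqrt_zero] at this
  exact (tendsto_zero_iff_abs_tendsto_zero _).2 this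

theorem aux_region (d : ℝ) (hd : 2 ≤ d) (s₀ : ℝ) (X Y : ℝ → ℝ)
    (hX : ∀ s ∈ Set.Ici s₀, HasDerivAt X (X s * (d * X s ^ 2 - 1) + (d - 1) * Y s ^ 2) s)
    (hY : ∀ s ∈ Set.Ici s₀, HasDerivAt Y (X s * Y s * (d * X s - 1)) s)
    (hX₀ : 0 < X s₀ ∧ X s₀ < 1 / d) (hY₀ : 0 < Y s₀ ∧ Y s₀ < 1 / d)
    (T : ℝ) (hT : s₀ ≤ T)
    (hreg : ∀ s ∈ Set.Ioo s₀ T, 0 < X s ∧ X s < 1 / d ∧ 0 < Y s) :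
    0 < X T ∧ X T ≤ max (X s₀) (d * Y s₀ ^ 2) ∧ 0 < Y T ∧ Y T ≤ Y s₀ := by
  have hd0 : 0 < d := by linarith
  have hYa : ∀ t, s₀ ≤ t → t ≤ T → Y t ≤ Y s₀ := by
    intro t h1 h2
    have := aux_comp Y _ 0 0 s₀ t h1 (fun s hs => hY s hs.1) (by
      intro s hs
      obtain ⟨a1, a2, a3⟩ := hreg s ⟨hs.1, hs.2.trans_le h2⟩
      rw [lt_div_iff₀ hd0] at a2
      have : 0 < X s * Y s := mul_pos a1 a3
      nlinarith)
    simpa using this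
  refine ⟨?_, ?_, ?_, hYa T hT le_rfl⟩
  · have := aux_comp (fun s => - X s) _ 1 0 s₀ T hT (fun s hs => (hX s hs.1).neg) (by
      intro s hs
      obtain ⟨a1, a2, a3⟩ := hreg s hs
      have : 0 ≤ d * X s ^ 3 := by positivity
      have : 0 ≤ (d - 1) * Y s ^ 2 := mul_nonneg (by linarith) (sq_nonneg _)
      nlinarith)
    have h2 := mul_pos hX₀.1 (Real.exp_pos (-1 * (T - s₀)))
    simp only [sub_zero] at this
    linarith
  · have := aux_comp X _ ((d - 1) / d) (d * Y s₀ ^ 2) s₀ T hT (fun s hs => hX s hs.1) (by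
      intro s hs
      obtain ⟨a1, a2, a3⟩ := hreg s hs
      have b := hYa s hs.1.le hs.2.le
      have b2 : Y s ^ 2 ≤ Y s₀ ^ 2 := by gcongr
      rw [lt_div_iff₀ hd0] at a2
      have h1 : -((d - 1) / d) * (X s - d * Y s₀ ^ 2)
        = X s * (1 / d - 1) + (d - 1) * Y s₀ ^ 2 := by field_simp; ring
      rw [h1]
      have h2 : d * X s ^ 2 ≤ 1 / d := by
        rw [le_div_iff₀ hd0]; nlinarith [mul_pos a1 hd0]
      have h3 : X s * (d * X s ^ 2 - 1) ≤ X s * (1 / d - 1) :=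
        mul_le_mul_of_nonneg_left (by linarith) a1.le
      have h4 : (d - 1) * Y s ^ 2 ≤ (d - 1) * Y s₀ ^ 2 :=
        mul_le_mul_of_nonneg_left b2 (by linarith)
      linarith)
    have he : Real.exp (-((d - 1) / d) * (T - s₀)) ≤ 1 := by
      rw [Real.exp_le_one_iff]
      have : 0 ≤ (d - 1) / d * (T - s₀) :=
        mul_nonneg (div_nonneg (by linarith) hd0.le) (by linarith)
      linarith
    have he0 := Real.exp_pos (-((d - 1) / d) * (T - s₀))
    rcases le_total (X s₀) (d * Y s₀ ^ 2) with h | h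
    · apply le_max_of_le_right
      nlinarith
    · apply le_max_of_le_left
      nlinarith
  · have := aux_comp (fun s => - Y s) _ 1 0 s₀ T hT (fun s hs => (hY s hs.1).neg) (by
      intro s hs
      obtain ⟨a1, a2, a3⟩ := hreg s hs
      rw [lt_div_iff₀ hd0] at a2
      have h1 : X s * (1 - d * X s) ≤ 1 := by nlinarith [sq_nonneg (X s)]
      nlinarith)
    have h2 := mul_pos hY₀.1 (Real.exp_pos (-1 * (T - s₀)))
    simp only [sub_zero] at this
    linarith

theorem aux_inv (d : ℝ) (hd : 2 ≤ d) (s₀ : ℝ) (X Y : ℝ → ℝ)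
    (hX : ∀ s ∈ Set.Ici s₀, HasDerivAt X (X s * (d * X s ^ 2 - 1) + (d - 1) * Y s ^ 2) s)
    (hY : ∀ s ∈ Set.Ici s₀, HasDerivAt Y (X s * Y s * (d * X s - 1)) s)
    (hX₀ : 0 < X s₀ ∧ X s₀ < 1 / d) (hY₀ : 0 < Y s₀ ∧ Y s₀ < 1 / d) :
    ∀ s, s₀ ≤ s → 0 < X s ∧ X s < 1 / d ∧ 0 < Y s := by
  have hd0 : 0 < d := by linarith
  have hM : max (X s₀) (d * Y s₀ ^ 2) < 1 / d := by
    refine max_lt hX₀.2 ?_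
    have := hY₀.2
    rw [lt_div_iff₀ hd0] at this ⊢
    have h0 : 0 < Y s₀ * d := mul_pos hY₀.1 hd0
    nlinarith
  by_contra! hcon
  obtain ⟨s1, hs1, hbad⟩ := hcon
  set B : Set ℝ := {s | s₀ ≤ s ∧ ¬ (0 < X s ∧ X s < 1 / d ∧ 0 < Y s)} with hB
  have hne : B.Nonempty := ⟨s1, hs1, fun h => absurd h.2.2 (not_lt.2 (hbad h.1 h.2.1))⟩
  have hbdd : BddBelow B := ⟨s₀, fun s hs => hs.1⟩
  have hT0 : s₀ ≤ sInf B := le_csInf hne fun s hs => hs.1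
  have hr := aux_region d hd s₀ X Y hX hY hX₀ hY₀ (sInf B) hT0 (by
    intro s hs
    by_contra h
    exact absurd (csInf_le hbdd (show s ∈ B from ⟨hs.1.le, h⟩)) (not_le.2 hs.2))
  have hcX := (hX _ hT0).continuousAt
  have hcY := (hY _ hT0).continuousAt
  have hev : ∀ᶠ s in 𝓝 (sInf B), 0 < X s ∧ X s < 1 / d ∧ 0 < Y s :=
    (hcX.eventually_const_lt hr.1).and
      ((hcX.eventually_lt_const (hr.2.1.trans_lt hM)).and (hcY.eventually_const_lt hr.2.2.1))
  have hcl := csInf_mem_closure hne hbdd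
  rw [mem_closure_iff_frequently] at hcl
  obtain ⟨s, h1, h2⟩ := (hcl.and_eventually hev).exists
  exact h1.2 h2

/-- `(X, Y)` solves the planar subsystem, real parameter version. -/
theorem aux_main (d : ℝ) (hd : 2 ≤ d) (s₀ : ℝ) (X Y : ℝ → ℝ)
    (hX : ∀ s ∈ Set.Ici s₀, HasDerivAt X (X s * (d * X s ^ 2 - 1) + (d - 1) * Y s ^ 2) s)
    (hY : ∀ s ∈ Set.Ici s₀, HasDerivAt Y (X s * Y s * (d * X s - 1)) s)
    (hX₀ : 0 < X s₀ ∧ X s₀ < 1 / d) (hY₀ : 0 < Y s₀ ∧ Y s₀ < 1 / d) :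
    Tendsto (fun s => (1 / X s) * (X s / Y s ^ 2 - (d - 1))) atTop
      (𝓝 (2 * (d - 1))) := by
  have hd0 : 0 < d := by linarith
  have hM : max (X s₀) (d * Y s₀ ^ 2) < 1 / d := by
    refine max_lt hX₀.2 ?_
    have := hY₀.2
    rw [lt_div_iff₀ hd0] at this ⊢
    have h0 : 0 < Y s₀ * d := mul_pos hY₀.1 hd0
    nlinarith
  have hinv := aux_inv d hd s₀ X Y hX hY hX₀ hY₀
  have hreg := fun T (hT : s₀ ≤ T) => aux_region d hd s₀ X Y hX hY hX₀ hY₀ T hT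
    (fun s hs => hinv s hs.1.le)
  have hpos : ∀ s, s₀ ≤ s → 0 < X s * (1 - d * X s) := by
    intro s hs
    obtain ⟨a1, a2, a3⟩ := hinv s hs
    rw [lt_div_iff₀ hd0] at a2
    exact mul_pos a1 (by linarith)
  have hYanti : ∀ s t, s₀ ≤ s → s ≤ t → Y t ≤ Y s := by
    intro s t h1 h2
    have := aux_comp Y _ 0 0 s t h2 (fun r hr => hY r (h1.trans hr.1)) (by
      intro r hr
      have a1 := hpos r (h1.trans hr.1.le)
      obtain ⟨-, -, a3⟩ := hinv r (h1.trans hr.1.le)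
      nlinarith [mul_pos a1 a3])
    simpa using this
  -- Y tends to zero
  have hY0 : Tendsto Y atTop (𝓝 0) := by
    rw [Metric.tendsto_atTop]
    intro ε hε
    by_contra! hcon
    have hYl : ∀ s, s₀ ≤ s → ε ≤ Y s := by
      intro s hs
      obtain ⟨t, ht, h2⟩ := hcon s
      rw [Real.dist_eq, sub_zero, abs_of_pos (hinv t (hs.trans ht)).2.2] at h2
      exact h2.trans (hYanti s t hs ht)
    have hXl : ∀ s, s₀ ≤ s → min (X s₀) ((d - 1) * ε ^ 2) ≤ X s := by
      intro s hs
      have := aux_comp (fun s => - X s) _ 1 (-((d - 1) * ε ^ 2)) s₀ s hs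
        (fun s hs => (hX s hs.1).neg) (by
        intro r hr
        obtain ⟨a1, a2, a3⟩ := hinv r hr.1.le
        have : 0 ≤ d * X r ^ 3 := by positivity
        have h3 : ε ^ 2 ≤ Y r ^ 2 := by
          have := hYl r hr.1.le
          gcongr
        have : (d - 1) * ε ^ 2 ≤ (d - 1) * Y r ^ 2 :=
          mul_le_mul_of_nonneg_left h3 (by linarith)
        nlinarith)
      have he : Real.exp (-1 * (s - s₀)) ≤ 1 := by
        rw [Real.exp_le_one_iff]; linarith
      have he0 := Real.exp_pos (-1 * (s - s₀))
      rcases le_total (X s₀) ((d - 1) * ε ^ 2) with h | h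
      · rw [min_eq_left h]; nlinarith
      · rw [min_eq_right h]; nlinarith
    set c := min (X s₀) ((d - 1) * ε ^ 2) with hc
    set M := max (X s₀) (d * Y s₀ ^ 2) with hMdef
    have hc0 : 0 < c := lt_min hX₀.1 (mul_pos (by linarith) (by positivity))
    have hM1 : 0 < 1 - d * M := by
      rw [lt_div_iff₀ hd0] at hM; linarith
    have hk : 0 < c * (1 - d * M) := mul_pos hc0 hM1
    have hYz : Tendsto Y atTop (𝓝 0) := by
      refine aux_decay Y (fun s => X s * (1 - d * X s)) (fun _ => 0) _ hk ?_ ?_ tendsto_const_nhds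
      · filter_upwards [eventually_ge_atTop s₀] with s hs
        convert hY s hs using 1
        ring
      · filter_upwards [eventually_ge_atTop s₀] with s hs
        have h1 := hXl s hs
        have h2 := (hreg s hs).2.1
        have h3 : 1 - d * M ≤ 1 - d * X s := by nlinarith
        exact mul_le_mul h1 h3 hM1.le (hc0.le.trans h1)
    obtain ⟨s, h1, h2⟩ := ((hYz.eventually_lt_const hε).and (eventually_ge_atTop s₀)).exists
    exact absurd (hYl s h2) (not_le.2 h1)
  have hX0 : Tendsto X atTop (𝓝 0) := by
    refine aux_decay X (fun s => 1 - d * X s ^ 2) (fun s => (d - 1) * Y s ^ 2) (1 / 2) (by norm_num)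
      ?_ ?_ ?_
    · filter_upwards [eventually_ge_atTop s₀] with s hs
      convert hX s hs using 1
      ring
    · filter_upwards [eventually_ge_atTop s₀] with s hs
      obtain ⟨a1, a2, a3⟩ := hinv s hs
      rw [lt_div_iff₀ hd0] at a2
      nlinarith
    · simpa using (hY0.pow 2).const_mul (d - 1)
  have hp : Tendsto (fun s => 1 - 2 * X s + d * X s ^ 2) atTop (𝓝 1) := by
    simpa using ((tendsto_const_nhds (x := (1 : ℝ))).sub (hX0.const_mul 2)).add
      ((hX0.pow 2).const_mul d)
  have hW0 : Tendsto (fun s => X s / Y s ^ 2 - (d - 1)) atTop (𝓝 0) := by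
    refine aux_decay _ (fun s => 1 - 2 * X s + d * X s ^ 2)
      (fun s => (d - 1) * (1 - (1 - 2 * X s + d * X s ^ 2))) (1 / 2) (by norm_num) ?_ ?_ ?_
    · filter_upwards [eventually_ge_atTop s₀] with s hs
      have hy := (hinv s hs).2.2.ne'
      have := ((hX s hs).div ((hY s hs).pow 2) (pow_ne_zero 2 hy)).sub_const (d - 1)
      refine this.congr_deriv ?_
      simp only [Pi.pow_apply]
      field_simp
      ring
    · exact (hp.eventually_const_lt (by norm_num : (1 / 2 : ℝ) < 1)).mono fun s h => h.le
    · simpa using (hp.const_sub 1).const_mul (d - 1)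
  have hW : Tendsto (fun s => X s / Y s ^ 2) atTop (𝓝 (d - 1)) := by
    simpa using hW0.add_const (d - 1)
  have hd1 : d - 1 ≠ 0 := by linarith
  have hq : Tendsto (fun s => (d - 1) / (X s / Y s ^ 2)) atTop (𝓝 1) := by
    have := (tendsto_const_nhds (x := d - 1)).div hW hd1
    rwa [div_self hd1] at this
  have hQ : Tendsto (fun s => (1 / X s) * (X s / Y s ^ 2 - (d - 1)) - 2 * (d - 1)) atTop (𝓝 0) := by
    have hQ' : Tendsto (fun s => 1 / Y s ^ 2 - (d - 1) / X s - 2 * (d - 1)) atTop (𝓝 0) := by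
      refine aux_decay _ (fun s => (d - 1) / (X s / Y s ^ 2))
        (fun s => 2 * (X s / Y s ^ 2) * (1 - d * X s) + (d - 1) * d * X s
          - 2 * (d - 1) * ((d - 1) / (X s / Y s ^ 2))) (1 / 2) (by norm_num) ?_ ?_ ?_
      · filter_upwards [eventually_ge_atTop s₀] with s hs
        have hy := (hinv s hs).2.2.ne'
        have hx := (hinv s hs).1.ne'
        have := ((((hasDerivAt_const s (1 : ℝ)).div ((hY s hs).pow 2) (pow_ne_zero 2 hy))).sub
          ((hasDerivAt_const s (d - 1)).div (hX s hs) hx)).sub_const (2 * (d - 1))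
        refine this.congr_deriv ?_
        simp only [Pi.pow_apply]
        field_simp
        ring
      · exact (hq.eventually_const_lt (by norm_num : (1 / 2 : ℝ) < 1)).mono fun s h => h.le
      · have := (((hW.const_mul 2).mul ((hX0.const_mul d).const_sub 1)).add
          (hX0.const_mul ((d - 1) * d))).sub (hq.const_mul (2 * (d - 1)))
        simpa using this
    refine hQ'.congr' ?_
    filter_upwards [eventually_ge_atTop s₀] with s hs
    have hy := (hinv s hs).2.2.ne'
    have hx := (hinv s hs).1.ne'
    field_simp
  simpa using hQ.add_const (2 * (d - 1))

/-- Along trajectories in the region `0 < X, Y < 1/d`,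
`(1/X)(X/Y² − (d−1)) → 2(d−1)`. -/
theorem stmt_4 (d : ℕ) (hd : 2 ≤ d) (s₀ : ℝ) (X Y : ℝ → ℝ)
    (hsol : IsSubsystemSol d X Y (Set.Ici s₀))
    (hX₀ : 0 < X s₀ ∧ X s₀ < 1 / d) (hY₀ : 0 < Y s₀ ∧ Y s₀ < 1 / d) :
    Tendsto (fun s => (1 / X s) * (X s / Y s ^ 2 - ((d : ℝ) - 1))) atTop
      (𝓝 (2 * ((d : ℝ) - 1))) :=
  aux_main d (by exact_mod_cast hd) s₀ X Y hsol.1 hsol.2 hX₀ hY₀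
end

section
/- Let (X, Y) be a solution of the subsystem defined on [s₀, ∞) with 0 < X(s₀) < 1/d and 0 < Y(s₀) < 1/d. Then (1/Y(s)²)·(X(s)/Y(s)² − (d−1)) → 2(d−1)² as s → ∞. -/
open Filter Topology

/-- Linear comparison on `[a, b]`. -/
lemma aux_comp_s5 (u u' : ℝ → ℝ) (k m a b : ℝ) (hab : a ≤ b)
    (hu : ∀ s ∈ Set.Icc a b, HasDerivAt u (u' s) s)
    (hle : ∀ s ∈ Set.Ioo a b, u' s ≤ -k * (u s - m)) :
    u b - m ≤ Real.exp (-(k * (b - a))) * (u a - m) := by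
  have hd : ∀ s ∈ Set.Icc a b, HasDerivAt (fun s => Real.exp (k * (s - a)) * (u s - m))
      (Real.exp (k * (s - a)) * (k * 1) * (u s - m) + Real.exp (k * (s - a)) * u' s) s := by
    intro s hs
    exact ((((hasDerivAt_id s).sub_const a).const_mul k).exp).mul ((hu s hs).sub_const m)
  have hanti : AntitoneOn (fun s => Real.exp (k * (s - a)) * (u s - m)) (Set.Icc a b) := by
    apply antitoneOn_of_deriv_nonpos (convex_Icc a b)
    · exact fun s hs => (hd s hs).continuousAt.continuousWithinAt
    · intro s hs
      rw [interior_Icc] at hs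
      exact (hd s (Set.Ioo_subset_Icc_self hs)).differentiableAt.differentiableWithinAt
    · intro s hs
      rw [interior_Icc] at hs
      rw [(hd s (Set.Ioo_subset_Icc_self hs)).deriv]
      have h1 := hle s hs
      have h2 := Real.exp_pos (k * (s - a))
      have : Real.exp (k * (s - a)) * (k * 1) * (u s - m) + Real.exp (k * (s - a)) * u' s
        = Real.exp (k * (s - a)) * (u' s - -k * (u s - m)) := by ring
      rw [this]
      exact mul_nonpos_of_nonneg_of_nonpos h2.le (by linarith)
  have h := hanti (Set.left_mem_Icc.2 hab) (Set.right_mem_Icc.2 hab) hab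
  simp only [sub_self, mul_zero, Real.exp_zero, one_mul] at h
  rw [Real.exp_neg, inv_mul_eq_div, le_div_iff₀ (Real.exp_pos _)]
  linarith

/-- Positivity is preserved. -/
lemma aux_pos (u u' g : ℝ → ℝ) (a : ℝ)
    (hu : ∀ s ∈ Set.Ici a, HasDerivAt u (u' s) s)
    (hg : ∀ s ∈ Set.Ici a, ContinuousAt g s)
    (hle : ∀ s ∈ Set.Ici a, g s * u s ≤ u' s) (h0 : 0 < u a) :
    ∀ s ∈ Set.Ici a, 0 < u s := by
  set G : ℝ → ℝ := fun s => g (max s a) with hG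
  have hGc : Continuous G := by
    rw [continuous_iff_continuousAt]
    intro s
    exact ContinuousAt.comp (f := fun s => max s a) (hg (max s a) (le_max_right s a))
      (by fun_prop)
  have hI : ∀ s, HasDerivAt (fun s => ∫ t in a..s, G t) (G s) s := fun s =>
    intervalIntegral.integral_hasDerivAt_right (hGc.intervalIntegrable _ _)
      (hGc.stronglyMeasurableAtFilter _ _) hGc.continuousAt
  have hd : ∀ s ∈ Set.Ici a, HasDerivAt (fun s => Real.exp (-∫ t in a..s, G t) * u s)
      (Real.exp (-∫ t in a..s, G t) * (-G s) * u s + Real.exp (-∫ t in a..s, G t) * u' s) s :=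
    fun s hs => ((hI s).neg.exp).mul (hu s hs)
  have hmono : MonotoneOn (fun s => Real.exp (-∫ t in a..s, G t) * u s) (Set.Ici a) := by
    apply monotoneOn_of_deriv_nonneg (convex_Ici a)
    · exact fun s hs => (hd s hs).continuousAt.continuousWithinAt
    · intro s hs
      exact (hd s (interior_subset hs)).differentiableAt.differentiableWithinAt
    · intro s hs
      have hs' : s ∈ Set.Ici a := interior_subset hs
      rw [(hd s hs').deriv]
      have e : G s = g s := by simp only [hG]; rw [max_eq_left hs']
      rw [e]
      have h1 := hle s hs'
      have : Real.exp (-∫ t in a..s, G t) * (-g s) * u s + Real.exp (-∫ t in a..s, G t) * u' s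
        = Real.exp (-∫ t in a..s, G t) * (u' s - g s * u s) := by ring
      rw [this]
      exact mul_nonneg (Real.exp_pos _).le (by linarith)
  intro s hs
  have h := hmono (Set.mem_Ici.2 le_rfl) hs hs
  simp only [intervalIntegral.integral_same, neg_zero, Real.exp_zero, one_mul] at h
  exact (pos_iff_pos_of_mul_pos (lt_of_lt_of_le h0 h)).1 (Real.exp_pos _)

/-- `v' ≤ -k v + h`, `h → 0`, `v ≥ 0` implies `v → 0`. -/
lemma aux_tend (v v' h : ℝ → ℝ) (k : ℝ) (hk : 0 < k)
    (hv : ∀ᶠ s in atTop, HasDerivAt v (v' s) s)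
    (hle : ∀ᶠ s in atTop, v' s ≤ -k * v s + h s)
    (h0 : ∀ᶠ s in atTop, 0 ≤ v s)
    (hh : Tendsto h atTop (𝓝 0)) : Tendsto v atTop (𝓝 0) := by
  rw [tendsto_order]
  refine ⟨fun b hb => h0.mono fun s hs => lt_of_lt_of_le hb hs, fun ε hε => ?_⟩
  have hke : 0 < k * (ε / 2) := by positivity
  have h1 := hh.eventually_lt_const hke
  obtain ⟨S, hS⟩ := eventually_atTop.1 (hv.and (hle.and h1))
  have hexp : Tendsto (fun s => Real.exp (-(k * (s - S))) * (v S - ε / 2)) atTop (𝓝 0) := by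
    have : Tendsto (fun s : ℝ => k * (s - S)) atTop atTop :=
      (tendsto_atTop_add_const_right atTop (-S) tendsto_id).const_mul_atTop hk
    simpa using (Real.tendsto_exp_neg_atTop_nhds_zero.comp this).mul_const (v S - ε / 2)
  filter_upwards [hexp.eventually_lt_const (half_pos hε), eventually_ge_atTop S] with s hs hsS
  have := aux_comp_s5 v v' k (ε / 2) S s hsS (fun t ht => (hS t ht.1).1) (fun t ht => by
    have := hS t ht.1.le
    linarith [this.2.1, this.2.2])
  linarith

/-- `u' = -k u + f`, `k → 1`, `f → F` implies `u → F`. -/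
lemma aux_lim (u k f : ℝ → ℝ) (F : ℝ)
    (hu : ∀ᶠ s in atTop, HasDerivAt u (-k s * u s + f s) s)
    (hk : Tendsto k atTop (𝓝 1)) (hf : Tendsto f atTop (𝓝 F)) :
    Tendsto u atTop (𝓝 F) := by
  have hg : Tendsto (fun s => 2 * (f s - k s * F) ^ 2) atTop (𝓝 0) := by
    have := ((hf.sub (hk.mul_const F)).pow 2).const_mul 2
    simpa using this
  have hw : Tendsto (fun s => (u s - F) ^ 2) atTop (𝓝 0) := by
    refine aux_tend _ (fun s => 2 * (u s - F) * (-k s * u s + f s)) _ 1 one_pos ?_ ?_ ?_ hg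
    · filter_upwards [hu] with s hs
      exact ((hs.sub_const F).pow 2).congr_deriv (by simp)
    · filter_upwards [hk.eventually_const_lt (show (3 / 4 : ℝ) < 1 by norm_num)] with s hs
      nlinarith [sq_nonneg ((u s - F) - 2 * (f s - k s * F)),
        mul_nonneg (sub_nonneg.2 hs.le) (sq_nonneg (u s - F))]
    · exact Eventually.of_forall fun s => sq_nonneg _
  have h2 : Tendsto (fun s => |u s - F|) atTop (𝓝 0) := by
    have := (Real.continuous_sqrt.tendsto 0).comp hw
    simpa [Function.comp_def, Real.sqrt_sq_eq_abs] using this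
  have h3 := (tendsto_zero_iff_abs_tendsto_zero _).2 h2
  simpa using h3.add_const F

/-- `(X, Y)` stays in the box, with `X` bounded away from `1/d`. -/
lemma aux_box (D : ℝ) (hD : 2 ≤ D) (a : ℝ) (X Y : ℝ → ℝ)
    (hX : ∀ s ∈ Set.Ici a, HasDerivAt X (X s * (D * X s ^ 2 - 1) + (D - 1) * Y s ^ 2) s)
    (hY : ∀ s ∈ Set.Ici a, HasDerivAt Y (X s * Y s * (D * X s - 1)) s)
    (hXp : ∀ s ∈ Set.Ici a, 0 < X s) (hYp : ∀ s ∈ Set.Ici a, 0 < Y s)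
    (hX₀ : X a < 1 / D) (hY₀ : Y a < 1 / D) :
    ∃ M, M < 1 / D ∧ ∀ s ∈ Set.Ici a, X s ≤ M := by
  have hDp : 0 < D := by linarith
  have key : ∀ T, a ≤ T → (∀ s ∈ Set.Ico a T, X s < 1 / D) → X T ≤ max (X a) (D * Y a ^ 2) := by
    intro T haT hlt
    have hYle : ∀ s ∈ Set.Icc a T, Y s ≤ Y a := by
      intro s hs
      have := aux_comp_s5 Y _ 0 0 a s hs.1 (fun t ht => hY t ht.1) (fun t ht => by
        have h1 := hlt t ⟨ht.1.le, lt_of_lt_of_le ht.2 hs.2⟩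
        rw [lt_div_iff₀ hDp] at h1
        have h2 := mul_pos (hXp t ht.1.le) (hYp t ht.1.le)
        nlinarith)
      simpa using this
    have := aux_comp_s5 X _ ((D - 1) / D) (D * Y a ^ 2) a T haT (fun t ht => hX t ht.1)
      (fun t ht => by
        have h1 := hlt t ⟨ht.1.le, ht.2⟩
        have h2 := hXp t ht.1.le
        have h3 := hYle t ⟨ht.1.le, ht.2.le⟩
        have h4 := hYp t ht.1.le
        have h5 : Y t ^ 2 ≤ Y a ^ 2 := by gcongr
        have h6 : D * X t ^ 2 ≤ 1 / D := by
          have : X t ^ 2 ≤ (1 / D) ^ 2 := by gcongr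
          calc D * X t ^ 2 ≤ D * (1 / D) ^ 2 := by gcongr
            _ = 1 / D := by field_simp
        have e : -((D - 1) / D) * (X t - D * Y a ^ 2)
          = X t * (1 / D - 1) + (D - 1) * Y a ^ 2 := by field_simp; ring
        rw [e]
        have : 0 ≤ D - 1 := by linarith
        gcongr)
    set E := Real.exp (-((D - 1) / D * (T - a))) with hE
    have hE0 : 0 < E := Real.exp_pos _
    have hE1 : E ≤ 1 := by
      rw [hE, Real.exp_le_one_iff, neg_nonpos]
      exact mul_nonneg (div_nonneg (by linarith) hDp.le) (by linarith)
    have hm1 := le_max_left (X a) (D * Y a ^ 2)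
    have hm2 := le_max_right (X a) (D * Y a ^ 2)
    nlinarith [mul_nonneg hE0.le (sub_nonneg.2 hm1), mul_nonneg (sub_nonneg.2 hE1) (sub_nonneg.2 hm2)]
  have hM : max (X a) (D * Y a ^ 2) < 1 / D := by
    apply max_lt hX₀
    have h0 := hYp a (Set.mem_Ici.2 le_rfl)
    calc D * Y a ^ 2 < D * (1 / D) ^ 2 := by gcongr
      _ = 1 / D := by field_simp
  refine ⟨_, hM, ?_⟩
  have hall : ∀ s ∈ Set.Ici a, X s < 1 / D := by
    by_contra hcon
    push Not at hcon
    obtain ⟨t, hta, ht⟩ := hcon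
    set A := Set.Icc a t ∩ X ⁻¹' Set.Ici (1 / D) with hA
    have hAc : IsClosed A := by
      apply ContinuousOn.preimage_isClosed_of_isClosed _ isClosed_Icc isClosed_Ici
      exact fun s hs => (hX s hs.1).continuousAt.continuousWithinAt
    have hAne : A.Nonempty := ⟨t, ⟨hta, le_rfl⟩, ht⟩
    have hAb : BddBelow A := ⟨a, fun s hs => hs.1.1⟩
    have hmem := hAc.csInf_mem hAne hAb
    have h1 := key (sInf A) hmem.1.1 (fun s hs => by
      by_contra hc
      have : s ∈ A := ⟨⟨hs.1, hs.2.le.trans hmem.1.2⟩, not_lt.1 hc⟩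
      exact absurd (csInf_le hAb this) (not_le.2 hs.2))
    have h2 : 1 / D ≤ X (sInf A) := hmem.2
    linarith
  exact fun s hs => key s hs fun r hr => hall r hr.1

lemma aux_Y (D : ℝ) (hD : 2 ≤ D) (a : ℝ) (X Y : ℝ → ℝ)
    (hX : ∀ s ∈ Set.Ici a, HasDerivAt X (X s * (D * X s ^ 2 - 1) + (D - 1) * Y s ^ 2) s)
    (hY : ∀ s ∈ Set.Ici a, HasDerivAt Y (X s * Y s * (D * X s - 1)) s)
    (hXp : ∀ s ∈ Set.Ici a, 0 < X s) (hYp : ∀ s ∈ Set.Ici a, 0 < Y s)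
    (M : ℝ) (hM : M < 1 / D) (hXM : ∀ s ∈ Set.Ici a, X s ≤ M) :
    Tendsto Y atTop (𝓝 0) := by
  have hDp : 0 < D := by linarith
  have hanti : ∀ r ∈ Set.Ici a, ∀ s, r ≤ s → Y s ≤ Y r := by
    intro r hr s hs
    have := aux_comp_s5 Y _ 0 0 r s hs (fun t ht => hY t (le_trans hr ht.1)) (fun t ht => by
      have hta : t ∈ Set.Ici a := le_trans hr ht.1.le
      have h1 := lt_of_le_of_lt (hXM t hta) hM
      rw [lt_div_iff₀ hDp] at h1
      have h2 := mul_pos (hXp t hta) (hYp t hta)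
      nlinarith)
    simpa using this
  have hμ : 0 < 1 - D * M := by
    rw [lt_div_iff₀ hDp] at hM
    linarith
  set μ := 1 - D * M with hμd
  have hex : ∀ ε > 0, ∃ s ∈ Set.Ici a, Y s < ε := by
    intro ε hε
    by_contra hcon
    push Not at hcon
    have hb : ∀ s ∈ Set.Ici a, (X a - Real.log (Y a) / μ) + (D - 1) * ε ^ 2 * (s - a)
        ≤ M - Real.log ε / μ := by
      intro s hs
      have hcomp := aux_comp_s5 (fun t => -(X t - Real.log (Y t) / μ) + (D - 1) * ε ^ 2 * t)
        (fun t => -((X t * (D * X t ^ 2 - 1) + (D - 1) * Y t ^ 2)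
          - (X t * Y t * (D * X t - 1)) / Y t / μ) + (D - 1) * ε ^ 2 * 1) 0 0 a s hs
        (fun t ht => (((hX t ht.1).sub (((hY t ht.1).log (hYp t ht.1).ne').div_const μ)).neg).add
          ((hasDerivAt_id t).const_mul _))
        (fun t ht => by
          have hta : t ∈ Set.Ici a := ht.1.le
          have h2 := hXp t hta
          have h3 := hYp t hta
          have h4 := hXM t hta
          have h5 : ε ^ 2 ≤ Y t ^ 2 := by have := hcon t hta; gcongr
          have e : X t * Y t * (D * X t - 1) / Y t = X t * (D * X t - 1) := by field_simp
          have h6 : X t * (D * X t - 1) / μ ≤ - X t := by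
            rw [div_le_iff₀ hμ, hμd]
            nlinarith [mul_nonneg h2.le (mul_nonneg hDp.le (sub_nonneg.2 h4))]
          have h7 : 0 < D * X t ^ 3 := by positivity
          have h8 : (D - 1) * ε ^ 2 ≤ (D - 1) * Y t ^ 2 :=
            mul_le_mul_of_nonneg_left h5 (by linarith)
          simp only [e]
          nlinarith)
      simp only [zero_mul, neg_zero, Real.exp_zero, one_mul, sub_zero] at hcomp
      have h1 : Real.log ε / μ ≤ Real.log (Y s) / μ :=
        div_le_div_of_nonneg_right (Real.log_le_log hε (hcon s hs)) hμ.le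
      have h2 := hXM s hs
      nlinarith
    have hc : 0 < (D - 1) * ε ^ 2 := mul_pos (by linarith) (by positivity)
    set C := M - Real.log ε / μ - (X a - Real.log (Y a) / μ) with hC
    have := hb (a + (|C| + 1) / ((D - 1) * ε ^ 2)) (by
      rw [Set.mem_Ici]; linarith [show 0 < (|C| + 1) / ((D - 1) * ε ^ 2) by positivity])
    rw [add_sub_cancel_left, mul_div_cancel₀ _ hc.ne'] at this
    linarith [le_abs_self C]
  rw [tendsto_order]
  refine ⟨fun b hb => ?_, fun ε hε => ?_⟩
  · filter_upwards [eventually_ge_atTop a] with s hs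
    exact hb.trans (hYp s hs)
  · obtain ⟨r, hr, hlt⟩ := hex ε hε
    filter_upwards [eventually_ge_atTop r] with s hs
    exact lt_of_le_of_lt (hanti r hr s hs) hlt

/-- Along trajectories in the region `0 < X, Y < 1/d`,
`(1/Y²)(X/Y² − (d−1)) → 2(d−1)²`. -/
theorem stmt_5 (d : ℕ) (hd : 2 ≤ d) (s₀ : ℝ) (X Y : ℝ → ℝ)
    (hsol : IsSubsystemSol d X Y (Set.Ici s₀))
    (hX₀ : 0 < X s₀ ∧ X s₀ < 1 / d) (hY₀ : 0 < Y s₀ ∧ Y s₀ < 1 / d) :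
    Tendsto (fun s => (1 / Y s ^ 2) * (X s / Y s ^ 2 - ((d : ℝ) - 1))) atTop
      (𝓝 (2 * ((d : ℝ) - 1) ^ 2)) := by
  obtain ⟨hX, hY⟩ := hsol
  have hD : (2 : ℝ) ≤ d := by exact_mod_cast hd
  generalize (d : ℝ) = D at *
  have hDp : 0 < D := by linarith
  have hYp : ∀ s ∈ Set.Ici s₀, 0 < Y s :=
    aux_pos Y _ (fun s => X s * (D * X s - 1)) s₀ hY
      (fun s hs => by have := (hX s hs).continuousAt; fun_prop)
      (fun s hs => le_of_eq (by ring)) hY₀.1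
  have hXp : ∀ s ∈ Set.Ici s₀, 0 < X s :=
    aux_pos X _ (fun s => D * X s ^ 2 - 1) s₀ hX
      (fun s hs => by have := (hX s hs).continuousAt; fun_prop)
      (fun s hs => by
        have : 0 ≤ (D - 1) * Y s ^ 2 := mul_nonneg (by linarith) (sq_nonneg _)
        linarith) hX₀.1
  obtain ⟨M, hM, hXM⟩ := aux_box D hD s₀ X Y hX hY hXp hYp hX₀.2 hY₀.2
  have hY0 := aux_Y D hD s₀ X Y hX hY hXp hYp M hM hXM
  have hge := eventually_ge_atTop s₀
  have hX0 : Tendsto X atTop (𝓝 0) := by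
    refine aux_tend X _ (fun s => (D - 1) * Y s ^ 2) (1 - 1 / D) ?_ (hge.mono hX) ?_
      (hge.mono fun s hs => (hXp s hs).le) ?_
    · rw [sub_pos, div_lt_one hDp]; linarith
    · filter_upwards [hge] with s hs
      have h2 := hXp s hs
      have h6 : D * X s ^ 2 ≤ 1 / D := by
        have : X s ^ 2 ≤ (1 / D) ^ 2 := by
          have := (hXM s hs).trans hM.le
          gcongr
        calc D * X s ^ 2 ≤ D * (1 / D) ^ 2 := by gcongr
          _ = 1 / D := by field_simp
      nlinarith
    · simpa using (hY0.pow 2).const_mul (D - 1)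
  have hP' : ∀ s ∈ Set.Ici s₀, HasDerivAt (fun s => X s / Y s ^ 2)
      (-(1 - 2 * X s + D * X s ^ 2) * (X s / Y s ^ 2) + (D - 1)) s := by
    intro s hs
    have hy := (hYp s hs).ne'
    refine ((hX s hs).div ((hY s hs).pow 2) (pow_ne_zero 2 hy)).congr_deriv ?_
    simp only [Pi.pow_apply, Pi.div_apply]
    field_simp
    ring
  have hP : Tendsto (fun s => X s / Y s ^ 2) atTop (𝓝 (D - 1)) := by
    refine aux_lim _ (fun s => 1 - 2 * X s + D * X s ^ 2) (fun _ => D - 1) _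
      (hge.mono hP') ?_ tendsto_const_nhds
    simpa using ((hX0.const_mul 2).const_sub 1).add ((hX0.pow 2).const_mul D)
  refine aux_lim _ (fun s => 1 - 2 * X s * (1 - D * X s))
    (fun s => (X s / Y s ^ 2) ^ 2 * (2 - D * X s)) _ ?_ ?_ ?_
  · filter_upwards [hge] with s hs
    have hy := (hYp s hs).ne'
    refine (((hasDerivAt_const s (1 : ℝ)).div ((hY s hs).pow 2) (pow_ne_zero 2 hy)).mul
      ((hP' s hs).sub_const (D - 1))).congr_deriv ?_
    simp only [Pi.pow_apply, Pi.div_apply]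
    field_simp
    ring
  · simpa using (((hX0.const_mul 2).mul ((hX0.const_mul D).const_sub 1))).const_sub 1
  · have := (hP.pow 2).mul ((hX0.const_mul D).const_sub 2)
    simpa [mul_comm] using this
end

section
/- Let (X, Y) be a solution of the subsystem defined on [s₀, ∞) with 0 < X(s₀) < 1/d and 0 < Y(s₀) < 1/d. Then there exists s₂ ≥ s₀ such that for all s > s₂ one has 2dX(s) − d(d+1)X(s)² − d(d−1)Y(s)² > 0 (i.e. the renormalized scalar curvature ℛ restricted to the subsystem is eventually positive). -/
open Filter Topology

theorem aux_first (f : ℝ → ℝ) (a b : ℝ) (hab : a ≤ b) (hf : ContinuousOn f (Set.Ici a))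
    (ha : 0 < f a) (hb : f b ≤ 0) :
    ∃ T, a < T ∧ f T ≤ 0 ∧ ∀ s, a ≤ s → s < T → 0 < f s := by
  let S : Set ℝ := {s | s ∈ Set.Ici a ∧ f s ∈ Set.Iic 0}
  have hS : IsClosed S := by
    have := hf.preimage_isClosed_of_isClosed isClosed_Ici (isClosed_Iic (a := (0:ℝ)))
    exact this
  have hne : S.Nonempty := ⟨b, hab, hb⟩
  have hbd : BddBelow S := ⟨a, fun x hx => hx.1⟩
  have hT := hS.csInf_mem hne hbd
  refine ⟨sInf S, ?_, hT.2, ?_⟩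
  · rcases eq_or_lt_of_le (show a ≤ sInf S from hT.1) with h | h
    · have h2 : f (sInf S) ≤ 0 := hT.2
      rw [← h] at h2
      linarith
    · exact h
  · intro s hs hsT
    by_contra hc
    have : sInf S ≤ s := csInf_le hbd ⟨hs, not_lt.mp hc⟩
    linarith

theorem aux_exp (f f' : ℝ → ℝ) (a T C : ℝ) (haT : a ≤ T)
    (hf : ∀ s, a ≤ s → HasDerivAt f (f' s) s)
    (hb : ∀ s, a ≤ s → s < T → -C * f s ≤ f' s) (ha : 0 < f a) : 0 < f T := by
  have hd : ∀ s, a ≤ s → HasDerivAt (fun s => Real.exp (C * s) * f s)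
      (Real.exp (C * s) * (C * 1) * f s + Real.exp (C * s) * f' s) s := fun s hs =>
    (((hasDerivAt_id s).const_mul C).exp).mul (hf s hs)
  have hm : MonotoneOn (fun s => Real.exp (C * s) * f s) (Set.Icc a T) := by
    apply monotoneOn_of_deriv_nonneg (convex_Icc a T)
    · intro s hs
      exact (hd s hs.1).continuousAt.continuousWithinAt
    · intro s hs
      rw [interior_Icc] at hs
      exact (hd s hs.1.le).differentiableAt.differentiableWithinAt
    · intro s hs
      rw [interior_Icc] at hs
      rw [(hd s hs.1.le).deriv]
      have h1 := hb s hs.1.le hs.2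
      have h2 := Real.exp_pos (C * s)
      have : 0 ≤ Real.exp (C * s) * (C * f s + f' s) := mul_nonneg h2.le (by linarith)
      linarith
  have h := hm ⟨le_refl a, haT⟩ ⟨haT, le_refl T⟩ haT
  have h1 : 0 < Real.exp (C * a) * f a := mul_pos (Real.exp_pos _) ha
  exact (mul_pos_iff_of_pos_left (Real.exp_pos (C * T))).mp (lt_of_lt_of_le h1 h)

/-- Along trajectories in the region `0 < X, Y < 1/d`, the renormalized scalar
curvature `ℛ = 2dX − d(d+1)X² − d(d−1)Y²` is eventually positive. -/
theorem stmt_6 (d : ℕ) (hd : 2 ≤ d) (s₀ : ℝ) (X Y : ℝ → ℝ)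
    (hsol : IsSubsystemSol d X Y (Set.Ici s₀))
    (hX₀ : 0 < X s₀ ∧ X s₀ < 1 / d) (hY₀ : 0 < Y s₀ ∧ Y s₀ < 1 / d) :
    ∃ s₂ ≥ s₀, ∀ s > s₂,
      0 < 2 * (d : ℝ) * X s - (d : ℝ) * ((d : ℝ) + 1) * X s ^ 2
          - (d : ℝ) * ((d : ℝ) - 1) * Y s ^ 2 := by
  obtain ⟨hX, hY⟩ := hsol
  obtain ⟨hx0, hx1⟩ := hX₀
  obtain ⟨hy0, hy1⟩ := hY₀
  have hD : (2:ℝ) ≤ d := by exact_mod_cast hd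
  generalize (d:ℝ) = D at *
  have hD0 : 0 < D := by linarith
  have hx1' : 0 < 1 - D * X s₀ := by
    rw [lt_div_iff₀ hD0] at hx1; linarith
  have hy1' : D ^ 2 * Y s₀ ^ 2 < 1 := by
    rw [lt_div_iff₀ hD0] at hy1
    have : 0 < D * Y s₀ := by positivity
    nlinarith
  -- the quantity `Y ^ 2` decreases as long as `0 ≤ X ≤ 1 / d`
  have hYmono : ∀ T, s₀ ≤ T → (∀ s, s₀ ≤ s → s < T → 0 < X s * (1 - D * X s)) →
      Y T ^ 2 ≤ Y s₀ ^ 2 := by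
    intro T hT h
    have hd2 : ∀ s, s₀ ≤ s → HasDerivAt (fun s => Y s ^ 2)
        (2 * Y s * (X s * Y s * (D * X s - 1))) s := by
      intro s hs
      have := (hY s hs).pow 2
      refine this.congr_deriv ?_
      push_cast; ring
    have hm : AntitoneOn (fun s => Y s ^ 2) (Set.Icc s₀ T) := by
      apply antitoneOn_of_deriv_nonpos (convex_Icc s₀ T)
      · intro s hs
        exact (hd2 s hs.1).continuousAt.continuousWithinAt
      · intro s hs
        rw [interior_Icc] at hs
        exact (hd2 s hs.1.le).differentiableAt.differentiableWithinAt
      · intro s hs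
        rw [interior_Icc] at hs
        rw [(hd2 s hs.1.le).deriv]
        have h1 := h s hs.1.le hs.2
        nlinarith [mul_nonneg h1.le (sq_nonneg (Y s))]
    exact hm ⟨le_refl _, hT⟩ ⟨hT, le_refl _⟩ hT
  have hXc : ContinuousOn X (Set.Ici s₀) := fun s hs => (hX s hs).continuousAt.continuousWithinAt
  have hYc : ContinuousOn Y (Set.Ici s₀) := fun s hs => (hY s hs).continuousAt.continuousWithinAt
  have split : ∀ x : ℝ, 0 < x * (1 - D * x) → 0 < x ∧ 0 < 1 - D * x := by
    intro x hx
    have h0 : 0 < x := by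
      by_contra hc
      have : 0 ≤ -x := by linarith
      nlinarith [mul_nonneg this hD0.le, mul_nonneg (mul_nonneg this hD0.le) this]
    exact ⟨h0, (mul_pos_iff_of_pos_left h0).mp hx⟩
  -- invariance of the region
  have hinv : ∀ s, s₀ ≤ s → 0 < X s * (1 - D * X s) := by
    by_contra hc
    push Not at hc
    obtain ⟨b, hb, hb2⟩ := hc
    obtain ⟨T, hT, hT2, hT3⟩ := aux_first (fun s => X s * (1 - D * X s)) s₀ b hb
      (by fun_prop) (mul_pos hx0 hx1') hb2
    have hYb : ∀ s, s₀ ≤ s → s < T → D ^ 2 * Y s ^ 2 < 1 := by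
      intro s hs hsT
      have := hYmono s hs (fun t ht hts => hT3 t ht (hts.trans hsT))
      nlinarith [mul_le_mul_of_nonneg_left this (sq_nonneg D)]
    have p1 : 0 < X T := by
      apply aux_exp X _ s₀ T 1 hT.le hX _ hx0
      intro s hs hsT
      have h := (split _ (hT3 s hs hsT)).1
      have h3 : 0 ≤ D * X s ^ 3 := by positivity
      have h4 : 0 ≤ (D - 1) * Y s ^ 2 := mul_nonneg (by linarith) (sq_nonneg _)
      nlinarith
    have p2 : 0 < 1 - D * X T := by
      apply aux_exp (fun s => 1 - D * X s) _ s₀ T 1 hT.le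
        (fun s hs => ((hX s hs).const_mul D).const_sub 1) _ hx1'
      intro s hs hsT
      obtain ⟨h, h'⟩ := split _ (hT3 s hs hsT)
      have h4 := hYb s hs hsT
      have h5 : 0 ≤ (D - 1) * (1 - D ^ 2 * Y s ^ 2) := mul_nonneg (by linarith) (by linarith)
      have h6 : 0 ≤ (1 - D * X s) * (D ^ 2 * X s ^ 2 + D * X s + 1) := by positivity
      have h7 : 0 ≤ D * ((1 - D * X s) - D * (X s * (D * X s ^ 2 - 1) + (D - 1) * Y s ^ 2)) := by
        nlinarith
      have := nonneg_of_mul_nonneg_right h7 hD0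
      linarith
    exact absurd (mul_pos p1 p2) (not_lt.mpr hT2)
  have hYb : ∀ s, s₀ ≤ s → D ^ 2 * Y s ^ 2 < 1 := by
    intro s hs
    have := hYmono s hs (fun t ht _ => hinv t ht)
    nlinarith [mul_le_mul_of_nonneg_left this (sq_nonneg D)]
  have hr : ∀ s, s₀ ≤ s → HasDerivAt
      (fun s => 2 * X s - (D + 1) * X s ^ 2 - (D - 1) * Y s ^ 2)
      (2 * X s * (1 - D * X s) ^ 2 + (2 * X s - (D + 1) * X s ^ 2 - (D - 1) * Y s ^ 2) *
        (-2 + 2 * D * X s + 2 * D * X s ^ 2)) s := by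
    intro s hs
    have := (((hX s hs).const_mul 2).sub (((hX s hs).pow 2).const_mul (D + 1))).sub
      (((hY s hs).pow 2).const_mul (D - 1))
    refine this.congr_deriv ?_
    push_cast
    ring
  -- `r` is positive at some time
  have hex : ∃ s₁, s₀ ≤ s₁ ∧ 0 < 2 * X s₁ - (D + 1) * X s₁ ^ 2 - (D - 1) * Y s₁ ^ 2 := by
    by_contra hc
    push Not at hc
    have hgrow : ∀ s, s₀ ≤ s → X s / (D + 1) ≤ X s * (D * X s ^ 2 - 1) + (D - 1) * Y s ^ 2 := by
      intro s hs
      obtain ⟨h, h'⟩ := split _ (hinv s hs)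
      have h1 := hc s hs
      have h2 := hYb s hs
      have h3 : 0 < (D - 1) * (1 - D ^ 2 * Y s ^ 2) := mul_pos (by linarith) (by linarith)
      have h4 : 0 < (1 - D * X s) * ((D - 1) - D * (D + 1) * X s) := by
        nlinarith [mul_nonneg (sq_nonneg D) (sub_nonneg.mpr h1)]
      have h5 : 0 < (D - 1) - D * (D + 1) * X s := (mul_pos_iff_of_pos_left h').mp h4
      have h6 : 2 ≤ (1 - D * X s) * (D + 1) := by nlinarith
      have h7 : 1 ≤ 2 * (1 - X s) := by nlinarith
      have h8 : X s * ((1 - X s) * (1 - D * X s)) ≤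
          X s * (D * X s ^ 2 - 1) + (D - 1) * Y s ^ 2 := by nlinarith
      refine le_trans ?_ h8
      rw [div_le_iff₀ (by linarith)]
      have h9 : 1 ≤ (1 - X s) * ((1 - D * X s) * (D + 1)) := by nlinarith
      nlinarith [mul_le_mul_of_nonneg_left h9 h.le]
    have hXm : ∀ s, s₀ ≤ s → X s₀ ≤ X s := by
      have hm : MonotoneOn X (Set.Ici s₀) := by
        apply monotoneOn_of_deriv_nonneg (convex_Ici s₀) hXc
        · intro s hs
          rw [interior_Ici] at hs
          exact (hX s (Set.mem_Ici.mpr (le_of_lt hs))).differentiableAt.differentiableWithinAt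
        · intro s hs
          rw [interior_Ici] at hs
          rw [(hX s (Set.mem_Ici.mpr (le_of_lt hs))).deriv]
          refine le_trans ?_ (hgrow s (le_of_lt hs))
          have := (split _ (hinv s (le_of_lt hs))).1
          positivity
      intro s hs
      exact hm (Set.mem_Ici.mpr le_rfl) hs hs
    have hc0 : 0 < X s₀ / (D + 1) := by positivity
    set c := X s₀ / (D + 1) with hcdef
    have hlin := (convex_Ici s₀).mul_sub_le_image_sub_of_le_deriv (C := c) hXc
      (by
        intro s hs
        rw [interior_Ici] at hs
        exact (hX s (Set.mem_Ici.mpr (le_of_lt hs))).differentiableAt.differentiableWithinAt)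
      (by
        intro s hs
        rw [interior_Ici] at hs
        rw [(hX s (Set.mem_Ici.mpr (le_of_lt hs))).deriv]
        refine le_trans ?_ (hgrow s (le_of_lt hs))
        rw [hcdef]
        have := hXm s (le_of_lt hs)
        gcongr)
    have hs1 : s₀ ≤ s₀ + 1 / c := by
      have : 0 < 1 / c := by positivity
      linarith
    have h1 := hlin s₀ (Set.mem_Ici.mpr le_rfl) (s₀ + 1 / c) hs1 hs1
    have h2 : c * (s₀ + 1 / c - s₀) = 1 := by field_simp; ring
    rw [h2] at h1
    obtain ⟨h3, h4⟩ := split _ (hinv _ hs1)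
    nlinarith
  obtain ⟨s₁, hs₁, hpos⟩ := hex
  refine ⟨s₁, hs₁, fun s hs => ?_⟩
  have key : 0 < 2 * X s - (D + 1) * X s ^ 2 - (D - 1) * Y s ^ 2 := by
    by_contra hcon
    obtain ⟨T, hT, hT2, hT3⟩ := aux_first
      (fun s => 2 * X s - (D + 1) * X s ^ 2 - (D - 1) * Y s ^ 2) s₁ s (le_of_lt hs)
      (fun t ht => (hr t (hs₁.trans ht)).continuousAt.continuousWithinAt) hpos (not_lt.mp hcon)
    have := aux_exp (fun s => 2 * X s - (D + 1) * X s ^ 2 - (D - 1) * Y s ^ 2) _ s₁ T 2 hT.le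
      (fun t ht => hr t (hs₁.trans ht)) (by
        intro t ht htT
        have h1 := hT3 t ht htT
        have h2 := (split _ (hinv t (hs₁.trans ht))).1
        have h3 : 0 ≤ 2 * X t * (1 - D * X t) ^ 2 := by positivity
        have h4 : 0 ≤ (2 * X t - (D + 1) * X t ^ 2 - (D - 1) * Y t ^ 2) *
          (2 * D * X t + 2 * D * X t ^ 2) := mul_nonneg h1.le (by positivity)
        linarith) hpos
    exact absurd this (not_lt.mpr hT2)
  have := mul_pos hD0 key
  linarith
end

section
/- Let (𝓛, X₁,…,X_r, Y₁,…,Y_r) be a solution of the expanding Ricci soliton ODE system defined on [s₀, ∞). If 𝒮₁(s₀) < 0 and 𝒮₂(s₀) < 0, then 𝒮₁(s) < 0 and 𝒮₂(s) < 0 for all s ≥ s₀. -/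
open Filter Topology

/-- `(𝓛, X₁,…,X_r, Y₁,…,Y_r)` solves the expanding Ricci soliton ODE system
`𝓛' = 𝓛(∑ⱼ dⱼXⱼ² − (ε/2)𝓛²)`,
`Xᵢ' = Xᵢ(∑ⱼ dⱼXⱼ² − (ε/2)𝓛² − 1) + μᵢYᵢ² + (ε/2)𝓛²`,
`Yᵢ' = Yᵢ(∑ⱼ dⱼXⱼ² − (ε/2)𝓛² − Xᵢ)` on the set `I`. -/
def IsSolitonSol (r : ℕ) (d : Fin r → ℕ) (μ : Fin r → ℝ) (ε : ℝ)
    (L : ℝ → ℝ) (X Y : Fin r → ℝ → ℝ) (I : Set ℝ) : Prop :=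
  (∀ s ∈ I, HasDerivAt L
      (L s * (∑ j, (d j : ℝ) * X j s ^ 2 - ε / 2 * L s ^ 2)) s) ∧
  (∀ i, ∀ s ∈ I, HasDerivAt (X i)
      (X i s * (∑ j, (d j : ℝ) * X j s ^ 2 - ε / 2 * L s ^ 2 - 1)
        + μ i * Y i s ^ 2 + ε / 2 * L s ^ 2) s) ∧
  (∀ i, ∀ s ∈ I, HasDerivAt (Y i)
      (Y i s * (∑ j, (d j : ℝ) * X j s ^ 2 - ε / 2 * L s ^ 2 - X i s)) s)

lemma aux_neg (f p q : ℝ → ℝ) (a t K : ℝ) (hat : a ≤ t)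
    (hf : ∀ s ∈ Set.Icc a t, HasDerivAt f (p s * f s + q s) s)
    (hp : ∀ s ∈ Set.Icc a t, -K ≤ p s)
    (hq : ∀ s ∈ Set.Ico a t, q s ≤ 0) (hneg : ∀ s ∈ Set.Ico a t, f s < 0)
    (ha : f a < 0) : f t < 0 := by
  have hg : ∀ s ∈ Set.Icc a t, HasDerivAt (fun x => f x * Real.exp (K * x))
      ((p s * f s + q s) * Real.exp (K * s) + f s * (Real.exp (K * s) * (K * 1))) s := by
    intro s hs
    exact (hf s hs).mul (((hasDerivAt_id s).const_mul K).exp)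
  have hanti : AntitoneOn (fun x => f x * Real.exp (K * x)) (Set.Icc a t) := by
    apply antitoneOn_of_deriv_nonpos (convex_Icc a t)
    · exact fun s hs => (hg s hs).continuousAt.continuousWithinAt
    · intro s hs
      exact (hg s (interior_subset hs)).differentiableAt.differentiableWithinAt
    · intro s hs
      rw [(hg s (interior_subset hs)).deriv]
      rw [interior_Icc] at hs
      have h1 := hp s ⟨hs.1.le, hs.2.le⟩
      have h2 := hq s ⟨hs.1.le, hs.2⟩
      have h3 := hneg s ⟨hs.1.le, hs.2⟩
      have h4 : (p s + K) * f s ≤ 0 := mul_nonpos_of_nonneg_of_nonpos (by linarith) h3.le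
      have h5 : ((p s + K) * f s + q s) * Real.exp (K * s) ≤ 0 :=
        mul_nonpos_of_nonpos_of_nonneg (by linarith) (Real.exp_pos _).le
      linarith
  have h := hanti ⟨le_refl a, hat⟩ ⟨hat, le_refl t⟩ hat
  have h' : f a * Real.exp (K * a) < 0 := mul_neg_of_neg_of_pos ha (Real.exp_pos _)
  by_contra hc
  have : 0 ≤ f t * Real.exp (K * t) := mul_nonneg (not_lt.mp hc) (Real.exp_pos _).le
  simp only at h
  linarith

/-- The locus `{𝒮₁ < 0} ∩ {𝒮₂ < 0}` is preserved by the soliton ODE. -/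
theorem stmt_7 (r : ℕ) (hr : 1 ≤ r) (d : Fin r → ℕ) (hd : ∀ i, 0 < d i)
    (μ : Fin r → ℝ) (ε : ℝ) (hε : 0 < ε) (n : ℕ) (hn : n = ∑ i, d i)
    (s₀ : ℝ) (L : ℝ → ℝ) (X Y : Fin r → ℝ → ℝ)
    (hsol : IsSolitonSol r d μ ε L X Y (Set.Ici s₀))
    (S₁ S₂ : ℝ → ℝ)
    (hS₁ : ∀ s, S₁ s = ∑ i, (d i : ℝ) * X i s ^ 2 + ∑ i, (d i : ℝ) * μ i * Y i s ^ 2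
        + ((n : ℝ) - 1) * (ε / 2) * L s ^ 2 - 1)
    (hS₂ : ∀ s, S₂ s = ∑ i, (d i : ℝ) * X i s - 1)
    (h₀ : S₁ s₀ < 0 ∧ S₂ s₀ < 0) :
    ∀ s ≥ s₀, S₁ s < 0 ∧ S₂ s < 0 := by
  obtain ⟨hL, hX, hY⟩ := hsol
  set F : ℝ → ℝ := fun s => ∑ j, (d j : ℝ) * X j s ^ 2 - ε / 2 * L s ^ 2 with hF
  have hnR : (n : ℝ) = ∑ i, (d i : ℝ) := by rw [hn]; push_cast; rfl
  have hD2 : ∀ s ∈ Set.Ici s₀, HasDerivAt S₂ ((F s - 1) * S₂ s + S₁ s) s := by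
    intro s hs
    have h : HasDerivAt (fun s => ∑ i, (d i : ℝ) * X i s - 1) _ s :=
      (HasDerivAt.fun_sum (u := Finset.univ)
        (fun i _ => (hX i s hs).const_mul (d i : ℝ))).sub_const 1
    rw [← funext hS₂] at h
    convert h using 1
    have e : ∀ i, (d i : ℝ) * (X i s * (∑ j, (d j : ℝ) * X j s ^ 2 - ε / 2 * L s ^ 2 - 1)
        + μ i * Y i s ^ 2 + ε / 2 * L s ^ 2) = (F s - 1) * ((d i : ℝ) * X i s)
        + (d i : ℝ) * μ i * Y i s ^ 2 + (d i : ℝ) * (ε / 2 * L s ^ 2) := by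
      intro i; simp only [hF]; ring
    simp only [e, Finset.sum_add_distrib, ← Finset.mul_sum, ← Finset.sum_mul, ← hnR]
    rw [hS₁, hS₂]
    simp only [hF]
    ring
  have hD1 : ∀ s ∈ Set.Ici s₀, HasDerivAt S₁ (2 * F s * S₁ s + ε * L s ^ 2 * S₂ s) s := by
    intro s hs
    have h : HasDerivAt (fun s => ∑ i, (d i : ℝ) * X i s ^ 2 + ∑ i, (d i : ℝ) * μ i * Y i s ^ 2
        + ((n : ℝ) - 1) * (ε / 2) * L s ^ 2 - 1) _ s :=
      (((HasDerivAt.fun_sum (u := Finset.univ)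
        (fun i _ => ((hX i s hs).fun_pow 2).const_mul (d i : ℝ))).add
       (HasDerivAt.fun_sum (u := Finset.univ)
        (fun i _ => ((hY i s hs).fun_pow 2).const_mul ((d i : ℝ) * μ i)))).add
       (((hL s hs).fun_pow 2).const_mul (((n : ℝ) - 1) * (ε / 2)))).sub_const 1
    rw [← funext hS₁] at h
    convert h using 1
    rw [← Finset.sum_add_distrib]
    have e : ∀ i, (d i : ℝ) * (((2 : ℕ) : ℝ) * X i s ^ (2 - 1) *
        (X i s * (∑ j, (d j : ℝ) * X j s ^ 2 - ε / 2 * L s ^ 2 - 1)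
        + μ i * Y i s ^ 2 + ε / 2 * L s ^ 2)) +
        (d i : ℝ) * μ i * (((2 : ℕ) : ℝ) * Y i s ^ (2 - 1) *
        (Y i s * (∑ j, (d j : ℝ) * X j s ^ 2 - ε / 2 * L s ^ 2 - X i s)))
        = 2 * (F s - 1) * ((d i : ℝ) * X i s ^ 2)
        + 2 * F s * ((d i : ℝ) * μ i * Y i s ^ 2) + ε * L s ^ 2 * ((d i : ℝ) * X i s) := by
      intro i; simp only [hF]; push_cast; ring
    simp only [e, Finset.sum_add_distrib, ← Finset.mul_sum]
    rw [hS₁, hS₂]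
    simp only [hF]
    push_cast
    ring
  by_contra hcon
  push Not at hcon
  obtain ⟨T, hT, hTn⟩ := hcon
  have c1 : ContinuousOn S₁ (Set.Icc s₀ T) := fun s hs =>
    (hD1 s hs.1).continuousAt.continuousWithinAt
  have c2 : ContinuousOn S₂ (Set.Icc s₀ T) := fun s hs =>
    (hD2 s hs.1).continuousAt.continuousWithinAt
  have cF : ContinuousOn F (Set.Icc s₀ T) := by
    have cL : ContinuousOn L (Set.Icc s₀ T) := fun s hs =>
      (hL s hs.1).continuousAt.continuousWithinAt
    have cX : ∀ i, ContinuousOn (X i) (Set.Icc s₀ T) := fun i s hs =>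
      (hX i s hs.1).continuousAt.continuousWithinAt
    simp only [hF]
    fun_prop
  obtain ⟨M, hM⟩ := isCompact_Icc.exists_bound_of_continuousOn cF
  have hcl : IsClosed (Set.Icc s₀ T ∩ (fun s => max (S₁ s) (S₂ s)) ⁻¹' Set.Ici 0) :=
    (c1.sup c2).preimage_isClosed_of_isClosed isClosed_Icc isClosed_Ici
  have hco := isCompact_Icc.of_isClosed_subset hcl Set.inter_subset_left
  obtain ⟨t, ⟨ht, htz⟩, hleast⟩ := hco.exists_isLeast ⟨T, ⟨hT, le_refl T⟩, by
    by_cases h : S₁ T < 0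
    · exact le_max_of_le_right (hTn h)
    · exact le_max_of_le_left (not_lt.mp h)⟩
  have hb : ∀ s ∈ Set.Ico s₀ t, S₁ s < 0 ∧ S₂ s < 0 := by
    intro s hs
    by_contra hc
    have : t ≤ s := hleast ⟨⟨hs.1, hs.2.le.trans ht.2⟩, by
      by_contra h
      exact hc (max_lt_iff.mp (not_le.mp h))⟩
    exact absurd hs.2 (not_lt.mpr this)
  have hMb : ∀ s ∈ Set.Icc s₀ t, -M ≤ F s := fun s hs =>
    (abs_le.mp (hM s ⟨hs.1, hs.2.trans ht.2⟩)).1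
  have r1 : S₁ t < 0 := by
    refine aux_neg S₁ (fun s => 2 * F s) (fun s => ε * L s ^ 2 * S₂ s) s₀ t (2 * M) ht.1
      (fun s hs => hD1 s hs.1) ?_ ?_ (fun s hs => (hb s hs).1) h₀.1
    · intro s hs
      have := hMb s hs
      linarith
    · intro s hs
      exact mul_nonpos_of_nonneg_of_nonpos (by positivity) (hb s hs).2.le
  have r2 : S₂ t < 0 := by
    refine aux_neg S₂ (fun s => F s - 1) S₁ s₀ t (M + 1) ht.1
      (fun s hs => hD2 s hs.1) ?_ (fun s hs => (hb s hs).1.le) (fun s hs => (hb s hs).2) h₀.2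
    intro s hs
    have := hMb s hs
    linarith
  exact absurd (max_lt r1 r2) (not_lt.mpr htz)
end

section
/- Let (𝓛, X₁,…,X_r, Y₁,…,Y_r) be a solution of the expanding Ricci soliton ODE system defined on [s₀, ∞). If 𝒮₁(s₀) = 0 and 𝒮₂(s₀) = 0, then 𝒮₁(s) = 0 and 𝒮₂(s) = 0 for all s ≥ s₀. -/
open Filter Topology

/-- Uniqueness for a planar linear system with continuous coefficients. -/
theorem linear_system_zero (s₀ : ℝ) (u v a b c e : ℝ → ℝ)
    (ha : ContinuousOn a (Set.Ici s₀)) (hb : ContinuousOn b (Set.Ici s₀))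
    (hc : ContinuousOn c (Set.Ici s₀)) (he : ContinuousOn e (Set.Ici s₀))
    (hu : ∀ s ∈ Set.Ici s₀, HasDerivAt u (a s * u s + b s * v s) s)
    (hv : ∀ s ∈ Set.Ici s₀, HasDerivAt v (c s * u s + e s * v s) s)
    (hu0 : u s₀ = 0) (hv0 : v s₀ = 0) : ∀ s ≥ s₀, u s = 0 ∧ v s = 0 := by
  intro s hs
  have hsub : Set.Icc s₀ s ⊆ Set.Ici s₀ := fun x hx => hx.1
  have hk : ContinuousOn (fun x => |a x| + |b x| + |c x| + |e x|) (Set.Icc s₀ s) :=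
    (((ha.abs.add hb.abs).add hc.abs).add he.abs).mono hsub
  obtain ⟨K, hK⟩ := (isCompact_Icc.image_of_continuousOn hk).bddAbove
  have hd : ∀ x ∈ Set.Ici s₀, HasDerivAt (fun x => (u x, v x))
      (a x * u x + b x * v x, c x * u x + e x * v x) x :=
    fun x hx => (hu x hx).prodMk (hv x hx)
  have key := norm_le_gronwallBound_of_norm_deriv_right_le
    (f := fun x => (u x, v x)) (δ := 0) (K := K) (ε := 0) (a := s₀) (b := s)
    (fun x hx => (hd x (hsub hx)).continuousAt.continuousWithinAt)
    (fun x hx => (hd x hx.1).hasDerivWithinAt)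
    (by simp [hu0, hv0])
    (by
      intro x hx
      have hKx : |a x| + |b x| + |c x| + |e x| ≤ K :=
        hK ⟨x, ⟨hx.1, hx.2.le⟩, rfl⟩
      have h1 : |u x| ≤ ‖(u x, v x)‖ := norm_fst_le (u x, v x)
      have h2 : |v x| ≤ ‖(u x, v x)‖ := norm_snd_le (u x, v x)
      have h0 : 0 ≤ ‖(u x, v x)‖ := norm_nonneg _
      generalize ‖(u x, v x)‖ = N at *
      have gen : ∀ p q : ℝ, |p| + |q| ≤ K → |p * u x + q * v x| ≤ K * N := by
        intro p q hpq
        calc |p * u x + q * v x| ≤ |p * u x| + |q * v x| := abs_add_le _ _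
          _ = |p| * |u x| + |q| * |v x| := by rw [abs_mul, abs_mul]
          _ ≤ |p| * N + |q| * N := by gcongr
          _ = (|p| + |q|) * N := by ring
          _ ≤ K * N := by gcongr
      have := abs_nonneg (a x)
      have := abs_nonneg (b x)
      have := abs_nonneg (c x)
      have := abs_nonneg (e x)
      rw [add_zero]
      refine norm_prod_le_iff.2 ⟨gen _ _ (by linarith), gen _ _ (by linarith)⟩)
    s ⟨hs, le_rfl⟩
  rw [gronwallBound_ε0_δ0] at key
  have := norm_le_zero_iff.1 key
  exact Prod.mk.inj this

/-- The Einstein locus `{𝒮₁ = 0} ∩ {𝒮₂ = 0}` is preserved by the soliton ODE. -/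
theorem stmt_8 (r : ℕ) (hr : 1 ≤ r) (d : Fin r → ℕ) (hd : ∀ i, 0 < d i)
    (μ : Fin r → ℝ) (ε : ℝ) (hε : 0 < ε) (n : ℕ) (hn : n = ∑ i, d i)
    (s₀ : ℝ) (L : ℝ → ℝ) (X Y : Fin r → ℝ → ℝ)
    (hsol : IsSolitonSol r d μ ε L X Y (Set.Ici s₀))
    (S₁ S₂ : ℝ → ℝ)
    (hS₁ : ∀ s, S₁ s = ∑ i, (d i : ℝ) * X i s ^ 2 + ∑ i, (d i : ℝ) * μ i * Y i s ^ 2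
        + ((n : ℝ) - 1) * (ε / 2) * L s ^ 2 - 1)
    (hS₂ : ∀ s, S₂ s = ∑ i, (d i : ℝ) * X i s - 1)
    (h₀ : S₁ s₀ = 0 ∧ S₂ s₀ = 0) :
    ∀ s ≥ s₀, S₁ s = 0 ∧ S₂ s = 0 := by
  obtain ⟨hL, hX, hY⟩ := hsol
  have hP : ContinuousOn (fun s => ∑ j, (d j : ℝ) * X j s ^ 2) (Set.Ici s₀) :=
    continuousOn_finsetSum _ fun j _ => continuousOn_const.mul
      (ContinuousOn.pow (fun s hs => (hX j s hs).continuousAt.continuousWithinAt) 2)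
  have hE : ContinuousOn (fun s => ε / 2 * L s ^ 2) (Set.Ici s₀) :=
    continuousOn_const.mul
      (ContinuousOn.pow (fun s hs => (hL s hs).continuousAt.continuousWithinAt) 2)
  have hQ := hP.sub hE
  have hn' : (n : ℝ) = ∑ i, (d i : ℝ) := by rw [hn]; push_cast; rfl
  refine linear_system_zero s₀ S₁ S₂
    (fun s => 2 * (∑ j, (d j : ℝ) * X j s ^ 2 - ε / 2 * L s ^ 2))
    (fun s => 2 * (ε / 2 * L s ^ 2)) (fun _ => 1)
    (fun s => (∑ j, (d j : ℝ) * X j s ^ 2 - ε / 2 * L s ^ 2) - 1)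
    (continuousOn_const.mul hQ) (continuousOn_const.mul hE) continuousOn_const
    (hQ.sub continuousOn_const) ?_ ?_ h₀.1 h₀.2
  · intro s hs
    have h1 := HasDerivAt.fun_sum (u := Finset.univ)
      fun i _ => ((hX i s hs).fun_pow 2).const_mul (d i : ℝ)
    have h2 := HasDerivAt.fun_sum (u := Finset.univ)
      fun i _ => ((hY i s hs).fun_pow 2).const_mul ((d i : ℝ) * μ i)
    have h3 := ((hL s hs).fun_pow 2).const_mul (((n : ℝ) - 1) * (ε / 2))
    have h4 := ((h1.add h2).add h3).sub_const 1
    rw [show S₁ = _ from funext hS₁]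
    refine h4.congr_deriv ?_
    simp only [hS₂]
    generalize hq : ∑ j, (d j : ℝ) * X j s ^ 2 - ε / 2 * L s ^ 2 = Q
    have e1 : ∑ i, (d i : ℝ) * (((2 : ℕ) : ℝ) * X i s ^ (2 - 1) *
          (X i s * (Q - 1) + μ i * Y i s ^ 2 + ε / 2 * L s ^ 2))
        + ∑ i, (d i : ℝ) * μ i * (((2 : ℕ) : ℝ) * Y i s ^ (2 - 1) * (Y i s * (Q - X i s)))
        = 2 * (Q - 1) * ∑ i, (d i : ℝ) * X i s ^ 2
          + 2 * (ε / 2 * L s ^ 2) * ∑ i, (d i : ℝ) * X i s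
          + 2 * Q * ∑ i, (d i : ℝ) * μ i * Y i s ^ 2 := by
      simp only [Finset.mul_sum, ← Finset.sum_add_distrib]
      refine Finset.sum_congr rfl fun i _ => ?_
      push_cast
      ring
    rw [e1]
    push_cast
    linear_combination (-2) * hq
  · intro s hs
    have h1 := (HasDerivAt.fun_sum (u := Finset.univ)
      fun i _ => (hX i s hs).const_mul (d i : ℝ)).sub_const 1
    rw [show S₂ = _ from funext hS₂]
    refine h1.congr_deriv ?_
    simp only [hS₁]
    generalize hq : ∑ j, (d j : ℝ) * X j s ^ 2 - ε / 2 * L s ^ 2 = Q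
    have e1 : ∑ i, (d i : ℝ) * (X i s * (Q - 1) + μ i * Y i s ^ 2 + ε / 2 * L s ^ 2)
        = (Q - 1) * ∑ i, (d i : ℝ) * X i s + ∑ i, (d i : ℝ) * μ i * Y i s ^ 2
          + (ε / 2 * L s ^ 2) * ∑ i, (d i : ℝ) := by
      simp only [Finset.mul_sum, ← Finset.sum_add_distrib]
      refine Finset.sum_congr rfl fun i _ => ?_
      ring
    rw [e1, ← hn']
    linear_combination -hq
end

section
/- Assume r ≥ 2, d₁ ≥ 2, μ₁ = d₁ − 1 and μᵢ = 0 for i = 2,…,r. Let (𝓛, X₁,…,X_r, Y₁,…,Y_r) be a solution of the expanding Ricci soliton ODE system on [s₀, ∞) with 𝓛(s) > 0, Xᵢ(s) > 0 and Yᵢ(s) > 0 for all i and all s ≥ s₀, and with 𝒮₂(s) < 0 for all s ≥ s₀. If at s = s₀ one has X₁ > Xᵢ for all i = 2,…,r and X₁ > (ε/2)𝓛², then for all s ≥ s₀: X₁(s) > Xᵢ(s) for all i = 2,…,r, X₁(s) > ∑ⱼ dⱼXⱼ(s)², and X₁(s) > (ε/2)𝓛(s)². -/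
open Filter Topology

theorem pos_of_ode (s₀ : ℝ) (f p a b : ℝ → ℝ)
    (hf : ∀ s ≥ s₀, HasDerivAt f (f s * (a s - 1) + b s) s)
    (hp : ∀ s ≥ s₀, HasDerivAt p (p s * a s) s)
    (hp0 : ∀ s ≥ s₀, 0 < p s) (hb : ∀ s ≥ s₀, 0 ≤ b s) (h0 : 0 < f s₀) :
    ∀ s ≥ s₀, 0 < f s := by
  intro s hs
  have hg : ∀ t ≥ s₀, HasDerivAt (fun t => f t * Real.exp t / p t)
      (b t * Real.exp t / p t) t := by
    intro t ht
    have hne := (hp0 t ht).ne'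
    refine (((hf t ht).mul (Real.hasDerivAt_exp t)).div (hp t ht) hne).congr_deriv ?_
    simp only [Pi.mul_apply]
    field_simp
    ring
  have hm : MonotoneOn (fun t => f t * Real.exp t / p t) (Set.Ici s₀) := by
    refine monotoneOn_of_deriv_nonneg (convex_Ici s₀)
      (fun t ht => (hg t ht).continuousAt.continuousWithinAt) ?_ ?_
    · intro t ht
      exact (hg t (interior_subset ht)).differentiableAt.differentiableWithinAt
    · intro t ht
      have ht' : t ≥ s₀ := interior_subset ht
      rw [(hg t ht').deriv]
      exact div_nonneg (mul_nonneg (hb t ht') (Real.exp_pos t).le) (hp0 t ht').le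
  have h1 : f s₀ * Real.exp s₀ / p s₀ ≤ f s * Real.exp s / p s :=
    hm (Set.self_mem_Ici) hs hs
  have h2 : 0 < f s₀ * Real.exp s₀ / p s₀ :=
    div_pos (mul_pos h0 (Real.exp_pos _)) (hp0 _ le_rfl)
  have h3 := (div_pos_iff_of_pos_right (hp0 s hs)).1 (h2.trans_le h1)
  exact (mul_pos_iff_of_pos_right (Real.exp_pos s)).1 h3

/-- Proposition 7.3: along trajectories with positive coordinates and `𝒮₂ < 0`
(and with `μ₁ = d₁ − 1`, `μᵢ = 0` for `i ≥ 2`), the inequalities `X₁ > Xᵢ`,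
`X₁ > ∑ⱼ dⱼXⱼ²` and `X₁ > (ε/2)𝓛²` hold for all times.  Here the index `0 : Fin r`
plays the role of the index `1`. -/
theorem stmt_10 (r : ℕ) (hr : 2 ≤ r) (d : Fin r → ℕ) (hd : ∀ i, 0 < d i)
    (hd₁ : 2 ≤ d ⟨0, by omega⟩)
    (μ : Fin r → ℝ) (hμ₁ : μ ⟨0, by omega⟩ = (d ⟨0, by omega⟩ : ℝ) - 1)
    (hμ : ∀ i : Fin r, i ≠ ⟨0, by omega⟩ → μ i = 0)
    (ε : ℝ) (hε : 0 < ε) (s₀ : ℝ) (L : ℝ → ℝ) (X Y : Fin r → ℝ → ℝ)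
    (hsol : IsSolitonSol r d μ ε L X Y (Set.Ici s₀))
    (hpos : ∀ s ≥ s₀, 0 < L s ∧ ∀ i, 0 < X i s ∧ 0 < Y i s)
    (hS₂ : ∀ s ≥ s₀, ∑ i, (d i : ℝ) * X i s - 1 < 0)
    (h₀X : ∀ i : Fin r, i ≠ ⟨0, by omega⟩ → X i s₀ < X ⟨0, by omega⟩ s₀)
    (h₀L : ε / 2 * L s₀ ^ 2 < X ⟨0, by omega⟩ s₀) :
    ∀ s ≥ s₀,
      (∀ i : Fin r, i ≠ ⟨0, by omega⟩ → X i s < X ⟨0, by omega⟩ s) ∧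
      (∑ j, (d j : ℝ) * X j s ^ 2 < X ⟨0, by omega⟩ s) ∧
      ε / 2 * L s ^ 2 < X ⟨0, by omega⟩ s := by
  obtain ⟨hL, hX, hY⟩ := hsol
  generalize_proofs hz at *
  set o : Fin r := ⟨0, hz⟩ with ho
  have hμ0 : 0 ≤ μ o := by
    rw [hμ₁]
    have : (2 : ℝ) ≤ (d o : ℝ) := by exact_mod_cast hd₁
    linarith
  have A : ∀ i : Fin r, i ≠ o → ∀ s ≥ s₀, X i s < X o s := by
    intro i hi s hs
    have := pos_of_ode s₀ (fun s => X o s - X i s) L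
      (fun s => ∑ j, (d j : ℝ) * X j s ^ 2 - ε / 2 * L s ^ 2) (fun s => μ o * Y o s ^ 2)
      (fun t ht => ((hX o t ht).sub (hX i t ht)).congr_deriv (by rw [hμ i hi]; ring))
      (fun t ht => hL t ht) (fun t ht => (hpos t ht).1)
      (fun t ht => mul_nonneg hμ0 (sq_nonneg _)) (sub_pos.2 (h₀X i hi)) s hs
    exact sub_pos.1 this
  have B : ∀ s ≥ s₀, ∑ j, (d j : ℝ) * X j s ^ 2 < X o s := by
    intro s hs
    have h1 : ∑ j, (d j : ℝ) * X j s ^ 2 ≤ ∑ j, X o s * ((d j : ℝ) * X j s) := by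
      refine Finset.sum_le_sum fun j _ => ?_
      have hj : X j s ≤ X o s := by
        by_cases h : j = o
        · rw [h]
        · exact (A j h s hs).le
      have h2 := mul_le_mul_of_nonneg_right hj
        (mul_nonneg (Nat.cast_nonneg (d j)) ((hpos s hs).2 j).1.le)
      calc _ = X j s * ((d j : ℝ) * X j s) := by ring
        _ ≤ _ := h2
    rw [← Finset.mul_sum] at h1
    have h3 := mul_pos ((hpos s hs).2 o).1 (neg_pos.2 (hS₂ s hs))
    linarith
  have C : ∀ s ≥ s₀, ε / 2 * L s ^ 2 < X o s := by
    intro s hs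
    have := pos_of_ode s₀ (fun s => X o s - ε / 2 * L s ^ 2) (Y o)
      (fun s => ∑ j, (d j : ℝ) * X j s ^ 2 - ε / 2 * L s ^ 2 - X o s)
      (fun s => (X o s - ε / 2 * L s ^ 2) ^ 2
        + ε / 2 * L s ^ 2 * (X o s - ∑ j, (d j : ℝ) * X j s ^ 2) + μ o * Y o s ^ 2)
      (fun t ht => ((hX o t ht).sub (((hL t ht).pow 2).const_mul (ε / 2))).congr_deriv
        (by push_cast; ring))
      (fun t ht => hY o t ht) (fun t ht => ((hpos t ht).2 o).2)
      (fun t ht => ?_) (sub_pos.2 h₀L) s hs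
    · exact sub_pos.1 this
    · have h1 := sub_pos.2 (B t ht)
      have h2 := (hpos t ht).1
      positivity
  exact fun s hs => ⟨fun i hi => A i hi s hs, B s hs, C s hs⟩
end

section
/- Assume d₁ ≥ 2, μ₁ = d₁ − 1 and μᵢ = 0 for i = 2,…,r. Let (𝓛, X₁,…,X_r, Y₁,…,Y_r) be a solution of the expanding Ricci soliton ODE system on [s₀, ∞) with X₁(s) > 0, Y₁(s) > 0, X₁(s) ≥ Xᵢ(s) ≥ 0 for i = 2,…,r, and 𝓛(s) ≥ 0 for all s ≥ s₀. Define Z = ((d₁−1)Y₁² + (ε/2)𝓛²)/X₁. If Y₁(s₀)/X₁(s₀) > √((n−1)/(d₁−1)) and 1 − X₁(s₀) − Z(s₀) > 0, then the function s ↦ Y₁(s)/X₁(s) is non-decreasing on [s₀, ∞). -/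
open Filter Topology

theorem aux_core (c N ε s₀ : ℝ) (hc : 0 < c) (L x y S W : ℝ → ℝ)
    (hLd : ∀ s, s₀ ≤ s → HasDerivAt L (L s * (S s - ε / 2 * L s ^ 2)) s)
    (hxd : ∀ s, s₀ ≤ s → HasDerivAt x
      (x s * (S s - ε / 2 * L s ^ 2 - 1) + c * y s ^ 2 + ε / 2 * L s ^ 2) s)
    (hyd : ∀ s, s₀ ≤ s → HasDerivAt y (y s * (S s - ε / 2 * L s ^ 2 - x s)) s)
    (hx : ∀ s, s₀ ≤ s → 0 < x s) (hy : ∀ s, s₀ ≤ s → 0 < y s)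
    (hS : ∀ s, s₀ ≤ s → S s ≤ (N + 1) * x s ^ 2)
    (hW : ∀ s, W s = 1 - x s - (c * y s ^ 2 + ε / 2 * L s ^ 2) / x s)
    (h0 : Real.sqrt (N / c) < y s₀ / x s₀) (h0' : 0 < W s₀) :
    MonotoneOn (fun s => y s / x s) (Set.Ici s₀) := by
  have hq : ∀ s, s₀ ≤ s → HasDerivAt (fun s => y s / x s) (y s / x s * W s) s := by
    intro s hs
    have h := (hyd s hs).div (hxd s hs) (hx s hs).ne'
    refine h.congr_deriv ?_
    have := (hx s hs).ne'
    rw [hW]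
    field_simp
    ring
  have hWd : ∀ s, s₀ ≤ s → HasDerivAt W
      (W s * (S s - ε / 2 * L s ^ 2 + x s - (c * y s ^ 2 + ε / 2 * L s ^ 2) / x s)
        + (x s ^ 2 + c * y s ^ 2 - S s)) s := by
    intro s hs
    have h1 := (((hyd s hs).pow 2).const_mul c).add (((hLd s hs).pow 2).const_mul (ε / 2))
    have h2 := ((hxd s hs).const_sub 1).sub (h1.div (hxd s hs) (hx s hs).ne')
    have hWe : W = fun s => 1 - x s - (c * y s ^ 2 + ε / 2 * L s ^ 2) / x s := funext hW
    rw [hWe]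
    refine h2.congr_deriv ?_
    have := (hx s hs).ne'
    simp only [Pi.add_apply, Pi.pow_apply, Pi.mul_apply, Nat.cast_ofNat]
    field_simp
    ring
  have hmono : ∀ t, (∀ s ∈ Set.Ico s₀ t, 0 ≤ W s) →
      MonotoneOn (fun s => y s / x s) (Set.Icc s₀ t) := by
    intro t ht
    refine monotoneOn_of_hasDerivWithinAt_nonneg (f' := fun s => y s / x s * W s)
      (convex_Icc _ _) ?_ ?_ ?_
    · intro s hs
      exact (hq s hs.1).continuousAt.continuousWithinAt
    · intro s hs
      rw [interior_Icc] at hs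
      exact (hq s hs.1.le).hasDerivWithinAt
    · intro s hs
      rw [interior_Icc] at hs
      exact mul_nonneg (div_pos (hy s hs.1.le) (hx s hs.1.le)).le (ht s ⟨hs.1.le, hs.2⟩)
  have hpos : ∀ t, s₀ ≤ t → 0 < W t := by
    by_contra! hcon
    obtain ⟨t, ht, hWt⟩ := hcon
    have hcont : ContinuousOn W (Set.Icc s₀ t) := fun s hs =>
      (hWd s hs.1).continuousAt.continuousWithinAt
    have hcomp : IsCompact (Set.Icc s₀ t ∩ W ⁻¹' Set.Iic 0) :=
      isCompact_Icc.of_isClosed_subset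
        (hcont.preimage_isClosed_of_isClosed isClosed_Icc isClosed_Iic) Set.inter_subset_left
    obtain ⟨a, ⟨ha, haW⟩, hmin⟩ := hcomp.exists_isLeast ⟨t, ⟨ht, le_rfl⟩, hWt⟩
    have hlt : ∀ s ∈ Set.Ico s₀ a, 0 < W s := by
      intro s hs
      by_contra! h
      exact absurd (hmin ⟨⟨hs.1, hs.2.le.trans ha.2⟩, h⟩) (not_le.mpr hs.2)
    have haW' : W a ≤ 0 := haW
    have hsa : s₀ < a := by
      rcases ha.1.lt_or_eq with h | h
      · exact h
      · rw [← h] at haW'; linarith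
    have hev : ∀ᶠ s in 𝓝[<] a, 0 < W s := by
      filter_upwards [Ico_mem_nhdsLT hsa] with s hs using hlt s hs
    have haz : W a = 0 := by
      refine le_antisymm haW' ?_
      exact ge_of_tendsto ((hWd a ha.1).continuousAt.tendsto.mono_left nhdsWithin_le_nhds)
        (hev.mono fun s hs => hs.le)
    have hr : y s₀ / x s₀ ≤ y a / x a :=
      hmono a (fun s hs => (hlt s hs).le) ⟨le_rfl, hsa.le⟩ ⟨hsa.le, le_rfl⟩ hsa.le
    have hsq : N / c < (y a / x a) ^ 2 := by
      apply Real.lt_sq_of_sqrt_lt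
      linarith
    have hxa := hx a ha.1
    have hkey : N * x a ^ 2 < c * y a ^ 2 := by
      rw [div_pow, div_lt_div_iff₀ hc (by positivity)] at hsq
      linarith
    have hder := hWd a ha.1
    rw [haz, zero_mul, zero_add] at hder
    have hdp : 0 < x a ^ 2 + c * y a ^ 2 - S a := by
      have := hS a ha.1
      linarith
    have hsl := (hasDerivAt_iff_tendsto_slope.1 hder).mono_left
      (nhdsWithin_mono a (fun s (hs : s < a) => hs.ne) : 𝓝[<] a ≤ 𝓝[≠] a)
    have hsl' := hsl.eventually (lt_mem_nhds hdp)
    obtain ⟨s, ⟨h1, h2⟩, h3⟩ := ((hsl'.and hev).and self_mem_nhdsWithin).exists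
    have h3' : s < a := h3
    rw [slope_def_field, haz, sub_zero] at h1
    have := div_neg_of_pos_of_neg h2 (sub_neg.mpr h3')
    linarith
  intro s hs t ht hst
  exact hmono t (fun u hu => (hpos u hu.1).le) ⟨hs, hst⟩ ⟨ht, le_rfl⟩ hst

/-- Proposition 7.4 (a): with `μ₁ = d₁ − 1`, `μᵢ = 0` for `i ≥ 2`, if
`Y₁/X₁ > √((n−1)/(d₁−1))` and `1 − X₁ − Z > 0` at `s₀`, then `Y₁/X₁` is
non-decreasing on `[s₀, ∞)`.  Here the index `0 : Fin r` plays the role of `1`. -/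
theorem stmt_11 (r : ℕ) (hr : 1 ≤ r) (d : Fin r → ℕ) (hd : ∀ i, 0 < d i)
    (hd₁ : 2 ≤ d ⟨0, by omega⟩) (n : ℕ) (hn : n = ∑ i, d i)
    (μ : Fin r → ℝ) (hμ₁ : μ ⟨0, by omega⟩ = (d ⟨0, by omega⟩ : ℝ) - 1)
    (hμ : ∀ i : Fin r, i ≠ ⟨0, by omega⟩ → μ i = 0)
    (ε : ℝ) (hε : 0 < ε) (s₀ : ℝ) (L : ℝ → ℝ) (X Y : Fin r → ℝ → ℝ)
    (hsol : IsSolitonSol r d μ ε L X Y (Set.Ici s₀))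
    (hpos : ∀ s ≥ s₀, 0 < X ⟨0, by omega⟩ s ∧ 0 < Y ⟨0, by omega⟩ s)
    (hord : ∀ s ≥ s₀, ∀ i : Fin r, i ≠ ⟨0, by omega⟩ →
      0 ≤ X i s ∧ X i s ≤ X ⟨0, by omega⟩ s)
    (hL : ∀ s ≥ s₀, 0 ≤ L s)
    (Z : ℝ → ℝ)
    (hZ : ∀ s, Z s = (((d ⟨0, by omega⟩ : ℝ) - 1) * Y ⟨0, by omega⟩ s ^ 2
        + ε / 2 * L s ^ 2) / X ⟨0, by omega⟩ s)
    (h₀ : Y ⟨0, by omega⟩ s₀ / X ⟨0, by omega⟩ s₀ >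
      Real.sqrt (((n : ℝ) - 1) / ((d ⟨0, by omega⟩ : ℝ) - 1)))
    (h₀' : 0 < 1 - X ⟨0, by omega⟩ s₀ - Z s₀) :
    MonotoneOn (fun s => Y ⟨0, by omega⟩ s / X ⟨0, by omega⟩ s) (Set.Ici s₀) := by
  obtain ⟨h1, h2, h3⟩ := hsol
  have hd' : (2 : ℝ) ≤ (d ⟨0, by omega⟩ : ℝ) := by exact_mod_cast hd₁
  refine aux_core ((d ⟨0, by omega⟩ : ℝ) - 1) ((n : ℝ) - 1) ε s₀ (by linarith) L
    (X ⟨0, by omega⟩) (Y ⟨0, by omega⟩) (fun s => ∑ j, (d j : ℝ) * X j s ^ 2)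
    (fun s => 1 - X ⟨0, by omega⟩ s - Z s) (fun s hs => h1 s hs) ?_
    (fun s hs => h3 _ s hs) (fun s hs => (hpos s hs).1) (fun s hs => (hpos s hs).2) ?_ ?_ h₀ h₀'
  · intro s hs
    have := h2 ⟨0, by omega⟩ s hs
    rwa [hμ₁] at this
  · intro s hs
    have hn' : (n : ℝ) - 1 + 1 = ∑ j, (d j : ℝ) := by rw [hn]; push_cast; ring
    rw [hn', Finset.sum_mul]
    refine Finset.sum_le_sum fun j _ => ?_
    refine mul_le_mul_of_nonneg_left ?_ (Nat.cast_nonneg _)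
    by_cases hj : j = ⟨0, by omega⟩
    · rw [hj]
    · exact pow_le_pow_left₀ (hord s hs j hj).1 (hord s hs j hj).2 2
  · intro s
    simp only [hZ]
end

section
/- Assume d₁ ≥ 2, μ₁ = d₁ − 1 and μᵢ = 0 for i = 2,…,r. Let (𝓛, X₁,…,X_r, Y₁,…,Y_r) be a solution of the expanding Ricci soliton ODE system on [s₀, ∞) with X₁(s) > 0, Y₁(s) > 0, X₁(s) ≥ Xᵢ(s) ≥ 0 for i = 2,…,r, and 𝓛(s) ≥ 0 for all s ≥ s₀. Define Z = ((d₁−1)Y₁² + (ε/2)𝓛²)/X₁. If Y₁(s₀)/X₁(s₀) < 1 and 1 − X₁(s₀) − Z(s₀) < 0, then the function s ↦ Y₁(s)/X₁(s) is non-increasing on [s₀, ∞). -/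
open Filter Topology

/-- Core comparison argument: the quotient `q` satisfies `q' = q W`, and `W' < 0` whenever
`W = 0` and `q < 1`. -/
theorem core_antitone (s₀ : ℝ) (q W W' : ℝ → ℝ) (hq0 : ∀ s ≥ s₀, 0 < q s)
    (hq : ∀ s ≥ s₀, HasDerivAt q (q s * W s) s)
    (hW : ∀ s ≥ s₀, HasDerivAt W (W' s) s)
    (hneg : ∀ s ≥ s₀, W s = 0 → q s < 1 → W' s < 0)
    (h₀ : q s₀ < 1) (h₀' : W s₀ < 0) : AntitoneOn q (Set.Ici s₀) := by
  have anti : ∀ t, (∀ s, s₀ ≤ s → s < t → W s < 0) → AntitoneOn q (Set.Icc s₀ t) := by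
    intro t ht
    apply antitoneOn_of_deriv_nonpos (convex_Icc _ _)
    · exact fun s hs => (hq s hs.1).continuousAt.continuousWithinAt
    · intro s hs
      rw [interior_Icc] at hs
      exact (hq s hs.1.le).differentiableAt.differentiableWithinAt
    · intro s hs
      rw [interior_Icc] at hs
      rw [(hq s hs.1.le).deriv]
      exact mul_nonpos_of_nonneg_of_nonpos (hq0 s hs.1.le).le (ht s hs.1.le hs.2).le
  have key : ∀ s ≥ s₀, W s < 0 := by
    by_contra! hcon
    obtain ⟨b, hb, hWb⟩ := hcon
    let A : Set ℝ := Set.Icc s₀ b ∩ W ⁻¹' Set.Ici 0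
    have hA : IsCompact A := by
      have hc : ContinuousOn W (Set.Icc s₀ b) :=
        fun s hs => (hW s hs.1).continuousAt.continuousWithinAt
      exact isCompact_Icc.of_isClosed_subset
        (hc.preimage_isClosed_of_isClosed isClosed_Icc isClosed_Ici) Set.inter_subset_left
    obtain ⟨t, ⟨⟨ht0, htb⟩, htW⟩, hmin⟩ := hA.exists_isLeast ⟨b, ⟨hb, le_rfl⟩, hWb⟩
    have htW' : 0 ≤ W t := htW
    have hlt : ∀ s, s₀ ≤ s → s < t → W s < 0 := by
      intro s h1 h2
      by_contra! h3
      exact absurd (hmin ⟨⟨h1, h2.le.trans htb⟩, h3⟩) (not_le.mpr h2)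
    have hst : s₀ < t := by
      rcases ht0.eq_or_lt with h | h
      · rw [← h] at htW'; linarith
      · exact h
    have hev : ∀ᶠ s in 𝓝[<] t, W s < 0 := by
      filter_upwards [Ioo_mem_nhdsLT hst] with s hs using hlt s hs.1.le hs.2
    have hle : W t ≤ 0 := by
      have hc : Tendsto W (𝓝[<] t) (𝓝 (W t)) :=
        (hW t ht0).continuousAt.tendsto.mono_left nhdsWithin_le_nhds
      exact le_of_tendsto hc (hev.mono fun s hs => hs.le)
    have h0 : W t = 0 := le_antisymm hle htW'
    have hqt : q t < 1 :=
      (anti t hlt ⟨le_rfl, ht0⟩ ⟨ht0, le_rfl⟩ ht0).trans_lt h₀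
    have hd := hneg t ht0 h0 hqt
    have hslope : Tendsto (slope W t) (𝓝[<] t) (𝓝 (W' t)) :=
      (hasDerivAt_iff_tendsto_slope.mp (hW t ht0)).mono_left
        (nhdsWithin_mono _ fun s hs => ne_of_lt hs)
    have : 0 ≤ W' t := by
      refine ge_of_tendsto hslope ?_
      filter_upwards [hev, self_mem_nhdsWithin] with s hs hs'
      rw [slope_def_field, h0]
      have : s < t := hs'
      exact div_nonneg_of_nonpos (by linarith) (by linarith)
    linarith
  intro a ha b hb hab
  exact anti b (fun s hs _ => key s hs) ⟨ha, hab⟩ ⟨hb, le_rfl⟩ hab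

/-- Proposition 7.4 (b): with `μ₁ = d₁ − 1`, `μᵢ = 0` for `i ≥ 2`, if
`Y₁/X₁ < 1` and `1 − X₁ − Z < 0` at `s₀`, then `Y₁/X₁` is non-increasing on
`[s₀, ∞)`.  Here the index `0 : Fin r` plays the role of `1`. -/
theorem stmt_12 (r : ℕ) (hr : 1 ≤ r) (d : Fin r → ℕ) (hd : ∀ i, 0 < d i)
    (hd₁ : 2 ≤ d ⟨0, by omega⟩) (n : ℕ) (hn : n = ∑ i, d i)
    (μ : Fin r → ℝ) (hμ₁ : μ ⟨0, by omega⟩ = (d ⟨0, by omega⟩ : ℝ) - 1)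
    (hμ : ∀ i : Fin r, i ≠ ⟨0, by omega⟩ → μ i = 0)
    (ε : ℝ) (hε : 0 < ε) (s₀ : ℝ) (L : ℝ → ℝ) (X Y : Fin r → ℝ → ℝ)
    (hsol : IsSolitonSol r d μ ε L X Y (Set.Ici s₀))
    (hpos : ∀ s ≥ s₀, 0 < X ⟨0, by omega⟩ s ∧ 0 < Y ⟨0, by omega⟩ s)
    (hord : ∀ s ≥ s₀, ∀ i : Fin r, i ≠ ⟨0, by omega⟩ →
      0 ≤ X i s ∧ X i s ≤ X ⟨0, by omega⟩ s)
    (hL : ∀ s ≥ s₀, 0 ≤ L s)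
    (Z : ℝ → ℝ)
    (hZ : ∀ s, Z s = (((d ⟨0, by omega⟩ : ℝ) - 1) * Y ⟨0, by omega⟩ s ^ 2
        + ε / 2 * L s ^ 2) / X ⟨0, by omega⟩ s)
    (h₀ : Y ⟨0, by omega⟩ s₀ / X ⟨0, by omega⟩ s₀ < 1)
    (h₀' : 1 - X ⟨0, by omega⟩ s₀ - Z s₀ < 0) :
    AntitoneOn (fun s => Y ⟨0, by omega⟩ s / X ⟨0, by omega⟩ s) (Set.Ici s₀) := by
  obtain ⟨hL', hX', hY'⟩ := hsol
  set o : Fin r := ⟨0, by omega⟩ with ho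
  have hd2 : (2 : ℝ) ≤ d o := by exact_mod_cast hd₁
  have hsum : ∀ s, (d o : ℝ) * X o s ^ 2 ≤ ∑ j, (d j : ℝ) * X j s ^ 2 := fun s =>
    Finset.single_le_sum (f := fun j => (d j : ℝ) * X j s ^ 2)
      (fun j _ => by positivity) (Finset.mem_univ o)
  have hZ' : Z = fun s => (((d o : ℝ) - 1) * Y o s ^ 2 + ε / 2 * L s ^ 2) / X o s := funext hZ
  have hZd : ∀ s ≥ s₀, HasDerivAt Z
      (Z s * (∑ j, (d j : ℝ) * X j s ^ 2 - ε / 2 * L s ^ 2 + 1 - Z s)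
        - 2 * ((d o : ℝ) - 1) * Y o s ^ 2) s := by
    intro s hs
    have hx := (hpos s hs).1.ne'
    have h := (((((hY' o s hs).pow 2).const_mul ((d o : ℝ) - 1)).add
      (((hL' s hs).pow 2).const_mul (ε / 2))).div (hX' o s hs) hx)
    rw [hZ s, hZ']
    refine h.congr_deriv ?_
    simp only [Pi.add_apply, Pi.pow_apply, hμ₁]
    field_simp
    ring
  refine core_antitone s₀ _ (fun s => 1 - X o s - Z s) _ ?_ ?_
    (fun s hs => ((hX' o s hs).const_sub 1).sub (hZd s hs)) ?_ h₀ h₀'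
  · exact fun s hs => div_pos (hpos s hs).2 (hpos s hs).1
  · intro s hs
    have hx := (hpos s hs).1.ne'
    refine ((hY' o s hs).div (hX' o s hs) hx).congr_deriv ?_
    simp only [hZ s, hμ₁]
    field_simp
    ring
  · intro s hs hW hq
    have hx := (hpos s hs).1
    have hy := (hpos s hs).2
    rw [div_lt_one hx] at hq
    have hzx : X o s * Z s = ((d o : ℝ) - 1) * Y o s ^ 2 + ε / 2 * L s ^ 2 := by
      rw [hZ s]; field_simp
    have hS := hsum s
    have hlt : 0 < ((d o : ℝ) - 1) * (X o s ^ 2 - Y o s ^ 2) :=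
      mul_pos (by linarith) (by nlinarith)
    have hz : Z s = 1 - X o s := by linarith
    rw [hμ₁]
    rw [hz] at hzx ⊢
    generalize (∑ j, (d j : ℝ) * X j s ^ 2) = S at *
    nlinarith
end

section
/- Assume d₁ ≥ 2, μ₁ = d₁ − 1 and μᵢ = 0 for i = 2,…,r. Let (𝓛, X₁,…,X_r, Y₁,…,Y_r) be a solution of the expanding Ricci soliton ODE system on [s₀, ∞) with X₁(s) > 0 for all s ≥ s₀, and define Z = ((d₁−1)Y₁² + (ε/2)𝓛²)/X₁. Suppose that as s → ∞: Z(s) → 1, (d₁−1)Y₁(s)²/X₁(s) → 0, and (∑ⱼ dⱼXⱼ(s)²)/X₁(s) → 0. Then (Z(s) − 1)/X₁(s) → −1 as s → ∞. -/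
open Filter Topology

/-- A scalar equation `V' = h - g V` with `h → 0`, `g → 1` forces `V → 0`. -/
theorem linear_ode_tendsto_zero (a : ℝ) (V g h : ℝ → ℝ)
    (hV : ∀ s ≥ a, HasDerivAt V (h s - g s * V s) s)
    (hg : Tendsto g atTop (𝓝 1)) (hh : Tendsto h atTop (𝓝 0)) :
    Tendsto V atTop (𝓝 0) := by
  have key : Tendsto (fun s => V s ^ 2) atTop (𝓝 0) := by
    rw [Metric.tendsto_atTop]
    intro δ hδ
    have e1 : ∀ᶠ s in atTop, (3:ℝ)/4 < g s := hg.eventually (lt_mem_nhds (by norm_num))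
    have hh2 : Tendsto (fun s => 2 * h s ^ 2) atTop (𝓝 0) := by
      simpa using (hh.pow 2).const_mul 2
    have e2 : ∀ᶠ s in atTop, 2 * h s ^ 2 < δ / 2 :=
      hh2.eventually (gt_mem_nhds (by positivity))
    obtain ⟨b, hb⟩ := eventually_atTop.1 ((e1.and e2).and (eventually_ge_atTop a))
    let F : ℝ → ℝ := fun s => (V s ^ 2 - δ / 2) * Real.exp s
    have hF : ∀ s ≥ b, HasDerivAt F
        ((2 * V s * (h s - g s * V s)) * Real.exp s + (V s ^ 2 - δ / 2) * Real.exp s) s := by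
      intro s hs
      have h1 := (((hV s (hb s hs).2).pow 2).sub_const (δ / 2)).mul (Real.hasDerivAt_exp s)
      refine h1.congr_deriv ?_
      simp
    have anti : AntitoneOn F (Set.Ici b) := by
      apply antitoneOn_of_deriv_nonpos (convex_Ici b)
      · intro s hs
        exact (hF s hs).continuousAt.continuousWithinAt
      · intro s hs
        rw [interior_Ici] at hs
        exact (hF s (le_of_lt hs)).differentiableAt.differentiableWithinAt
      · intro s hs
        rw [interior_Ici] at hs
        rw [(hF s (le_of_lt hs)).deriv, ← add_mul]
        obtain ⟨⟨h1, h2⟩, -⟩ := hb s (le_of_lt hs)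
        apply mul_nonpos_of_nonpos_of_nonneg _ (Real.exp_pos s).le
        nlinarith [sq_nonneg (2 * h s - V s), mul_nonneg (sub_nonneg.2 h1.le) (sq_nonneg (V s))]
    have e3 : Tendsto (fun s => F b * Real.exp (-s)) atTop (𝓝 0) := by
      simpa using (Real.tendsto_exp_neg_atTop_nhds_zero).const_mul (F b)
    obtain ⟨c, hc⟩ := eventually_atTop.1
      ((e3.eventually (gt_mem_nhds (show (0:ℝ) < δ / 2 by positivity))).and
        (eventually_ge_atTop b))
    refine ⟨c, fun s hs => ?_⟩
    obtain ⟨h1, h2⟩ := hc s hs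
    have h3 : F s ≤ F b := anti (Set.mem_Ici.2 le_rfl) h2 h2
    have h4 : F s * Real.exp (-s) = V s ^ 2 - δ / 2 := by
      simp only [F]
      rw [mul_assoc, ← Real.exp_add]
      simp
    have h5 := mul_le_mul_of_nonneg_right h3 (Real.exp_pos (-s)).le
    rw [Real.dist_eq, sub_zero, abs_of_nonneg (sq_nonneg _)]
    linarith
  have h2 := (Real.continuous_sqrt.tendsto 0).comp key
  rw [Real.sqrt_zero] at h2
  rw [tendsto_zero_iff_abs_tendsto_zero]
  refine h2.congr fun s => ?_
  simp [Real.sqrt_sq_eq_abs]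

/-- The scalar core of the argument: `x = X₁`, `G = ∑ dⱼXⱼ²`, `E = (ε/2)𝓛²`, `A = (d₁-1)Y₁²`. -/
theorem scalar_core (a : ℝ) (x G E A Z : ℝ → ℝ)
    (hpos : ∀ s ≥ a, 0 < x s)
    (hx : ∀ s ≥ a, HasDerivAt x (x s * (G s - E s - 1) + A s + E s) s)
    (hE : ∀ s ≥ a, HasDerivAt E (2 * E s * (G s - E s)) s)
    (hA : ∀ s ≥ a, HasDerivAt A (2 * A s * (G s - E s - x s)) s)
    (hZ : ∀ s, Z s = (A s + E s) / x s)
    (hxG : ∀ s ≥ a, x s ^ 2 ≤ G s)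
    (hZlim : Tendsto Z atTop (𝓝 1))
    (hAlim : Tendsto (fun s => A s / x s) atTop (𝓝 0))
    (hGlim : Tendsto (fun s => G s / x s) atTop (𝓝 0)) :
    Tendsto (fun s => (Z s - 1) / x s) atTop (𝓝 (-1)) := by
  have hx0 : Tendsto x atTop (𝓝 0) := by
    refine tendsto_of_tendsto_of_tendsto_of_le_of_le' tendsto_const_nhds hGlim ?_ ?_
    · filter_upwards [eventually_ge_atTop a] with s hs using (hpos s hs).le
    · filter_upwards [eventually_ge_atTop a] with s hs
      rw [le_div_iff₀ (hpos s hs), ← sq]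
      exact hxG s hs
  have hElim : Tendsto (fun s => E s / x s) atTop (𝓝 1) := by
    have := hZlim.sub hAlim
    rw [sub_zero] at this
    refine this.congr fun s => ?_
    rw [hZ]
    ring
  have hE0 : Tendsto E atTop (𝓝 0) := by
    have := hElim.mul hx0
    rw [mul_zero] at this
    refine this.congr' ?_
    filter_upwards [eventually_ge_atTop a] with s hs
    exact div_mul_cancel₀ _ (hpos s hs).ne'
  have hG0 : Tendsto G atTop (𝓝 0) := by
    have := hGlim.mul hx0
    rw [mul_zero] at this
    refine this.congr' ?_
    filter_upwards [eventually_ge_atTop a] with s hs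
    exact div_mul_cancel₀ _ (hpos s hs).ne'
  let g : ℝ → ℝ := fun s => Z s + (G s - E s) + (Z s - 1)
  let f : ℝ → ℝ := fun s => Z s * (G s / x s - E s / x s) - 2 * (A s / x s)
  have hg : Tendsto g atTop (𝓝 1) := by
    have := (hZlim.add (hG0.sub hE0)).add (hZlim.sub_const 1)
    simpa using this
  have hf : Tendsto f atTop (𝓝 (-1)) := by
    have := (hZlim.mul (hGlim.sub hElim)).sub (hAlim.const_mul 2)
    simpa using this
  have hh : Tendsto (fun s => f s + g s) atTop (𝓝 0) := by
    simpa using hf.add hg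
  have main := linear_ode_tendsto_zero a (fun s => (Z s - 1) / x s + 1) g (fun s => f s + g s)
    (by
      intro s hs
      have hne := (hpos s hs).ne'
      have hZd : HasDerivAt Z _ s :=
        (((hA s hs).add (hE s hs)).div (hx s hs) hne).congr_of_eventuallyEq
          (Eventually.of_forall fun t => by simp [hZ])
      refine (((hZd.sub_const 1).div (hx s hs) hne).add_const 1).congr_deriv ?_
      simp only [f, g, hZ, Pi.add_apply]
      field_simp
      ring) hg hh
  have := main.sub_const 1
  simpa using this

/-- With `μ₁ = d₁ − 1`, `μᵢ = 0` for `i ≥ 2`: if `Z → 1`, `(d₁−1)Y₁²/X₁ → 0` and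
`(∑ⱼ dⱼXⱼ²)/X₁ → 0`, then `(Z − 1)/X₁ → −1`.  Here `0 : Fin r` plays the role of `1`. -/
theorem stmt_13 (r : ℕ) (hr : 1 ≤ r) (d : Fin r → ℕ) (hd : ∀ i, 0 < d i)
    (hd₁ : 2 ≤ d ⟨0, by omega⟩) (n : ℕ) (hn : n = ∑ i, d i)
    (μ : Fin r → ℝ) (hμ₁ : μ ⟨0, by omega⟩ = (d ⟨0, by omega⟩ : ℝ) - 1)
    (hμ : ∀ i : Fin r, i ≠ ⟨0, by omega⟩ → μ i = 0)
    (ε : ℝ) (hε : 0 < ε) (s₀ : ℝ) (L : ℝ → ℝ) (X Y : Fin r → ℝ → ℝ)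
    (hsol : IsSolitonSol r d μ ε L X Y (Set.Ici s₀))
    (hpos : ∀ s ≥ s₀, 0 < X ⟨0, by omega⟩ s)
    (Z : ℝ → ℝ)
    (hZ : ∀ s, Z s = (((d ⟨0, by omega⟩ : ℝ) - 1) * Y ⟨0, by omega⟩ s ^ 2
        + ε / 2 * L s ^ 2) / X ⟨0, by omega⟩ s)
    (hZlim : Tendsto Z atTop (𝓝 1))
    (hYlim : Tendsto (fun s => ((d ⟨0, by omega⟩ : ℝ) - 1) * Y ⟨0, by omega⟩ s ^ 2
        / X ⟨0, by omega⟩ s) atTop (𝓝 0))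
    (hXlim : Tendsto (fun s => (∑ j, (d j : ℝ) * X j s ^ 2) / X ⟨0, by omega⟩ s)
        atTop (𝓝 0)) :
    Tendsto (fun s => (Z s - 1) / X ⟨0, by omega⟩ s) atTop (𝓝 (-1)) := by
  obtain ⟨h1, h2, h3⟩ := hsol
  refine scalar_core s₀ (X ⟨0, by omega⟩) (fun s => ∑ j, (d j : ℝ) * X j s ^ 2)
    (fun s => ε / 2 * L s ^ 2) (fun s => ((d ⟨0, by omega⟩ : ℝ) - 1) * Y ⟨0, by omega⟩ s ^ 2) Z
    hpos ?_ ?_ ?_ hZ ?_ hZlim hYlim hXlim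
  · intro s hs
    have := h2 ⟨0, by omega⟩ s hs
    rw [hμ₁] at this
    exact this
  · intro s hs
    refine (((h1 s hs).pow 2).const_mul (ε / 2)).congr_deriv ?_
    simp only [Nat.cast_ofNat, Nat.add_one_sub_one, pow_one]
    ring
  · intro s hs
    refine (((h3 ⟨0, by omega⟩ s hs).pow 2).const_mul ((d ⟨0, by omega⟩ : ℝ) - 1)).congr_deriv ?_
    simp only [Nat.cast_ofNat, Nat.add_one_sub_one, pow_one]
    ring
  · intro s hs
    have hle : (d ⟨0, by omega⟩ : ℝ) * X ⟨0, by omega⟩ s ^ 2 ≤ ∑ j, (d j : ℝ) * X j s ^ 2 :=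
      Finset.single_le_sum (f := fun j => (d j : ℝ) * X j s ^ 2)
        (fun j _ => by positivity) (Finset.mem_univ _)
    have hd1 : (2 : ℝ) ≤ (d ⟨0, by omega⟩ : ℝ) := by exact_mod_cast hd₁
    refine le_trans ?_ hle
    nlinarith [sq_nonneg (X ⟨0, by omega⟩ s)]
end

section
/- Let (𝓛, X₁,…,X_r, Y₁,…,Y_r) be a solution of the expanding Ricci soliton ODE system on [s₀, ∞) with 𝓛(s) > 0 for all s ≥ s₀. Fix an index i and a real number yᵢ* with μᵢ·(yᵢ*)² + ε/2 > 0. Suppose that as s → ∞: ∑ⱼ dⱼXⱼ(s)² → 0, 𝓛(s) → 0, and Yᵢ(s)/𝓛(s) → yᵢ*. Then Xᵢ(s)/𝓛(s)² → μᵢ·(yᵢ*)² + ε/2 as s → ∞. -/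
open Filter Topology

theorem aux_linear_ode (v a h : ℝ → ℝ) (s₀ : ℝ)
    (hv : ∀ s ≥ s₀, HasDerivAt v (-a s * v s + h s) s)
    (ha : Tendsto a atTop (𝓝 1)) (hh : Tendsto h atTop (𝓝 0)) :
    Tendsto v atTop (𝓝 0) := by
  have key : Tendsto (fun s => v s ^ 2) atTop (𝓝 0) := by
    rw [Metric.tendsto_atTop']
    intro η hη
    obtain ⟨δ, hδ, rfl⟩ : ∃ δ : ℝ, 0 < δ ∧ 2 * δ = η := ⟨η / 2, by positivity, by ring⟩
    have h1 : ∀ᶠ s in atTop, 3 / 4 < a s := ha.eventually (lt_mem_nhds (by norm_num))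
    have h2 : ∀ᶠ s in atTop, h s ^ 2 < δ / 2 := by
      have : Tendsto (fun s => h s ^ 2) atTop (𝓝 0) := by simpa using hh.pow 2
      exact this.eventually (gt_mem_nhds (by positivity))
    obtain ⟨T, hT⟩ := eventually_atTop.1 (h1.and (h2.and (eventually_ge_atTop s₀)))
    have hder : ∀ s ≥ T, HasDerivAt (fun s => Real.exp (s / 2) * (v s ^ 2 - δ))
        (Real.exp (s / 2) * (1 / 2) * (v s ^ 2 - δ)
          + Real.exp (s / 2) * (2 * v s * (-a s * v s + h s))) s := by
      intro s hs
      have e1 : HasDerivAt (fun s : ℝ => Real.exp (s / 2)) (Real.exp (s / 2) * (1 / 2)) s :=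
        ((hasDerivAt_id s).div_const 2).exp
      have e2 := ((hv s (hT s hs).2.2).pow 2).sub_const δ
      refine (e1.mul e2).congr_deriv ?_
      simp
    have hanti : AntitoneOn (fun s => Real.exp (s / 2) * (v s ^ 2 - δ)) (Set.Ici T) := by
      apply antitoneOn_of_deriv_nonpos (convex_Ici T)
      · exact fun s hs => (hder s hs).continuousAt.continuousWithinAt
      · intro s hs
        rw [interior_Ici] at hs
        exact (hder s (le_of_lt hs)).differentiableAt.differentiableWithinAt
      · intro s hs
        rw [interior_Ici] at hs
        have hs' : T ≤ s := le_of_lt hs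
        rw [(hder s hs').deriv]
        obtain ⟨ha1, hh1, -⟩ := hT s hs'
        have : 1 / 2 * (v s ^ 2 - δ) + 2 * v s * (-a s * v s + h s) ≤ 0 := by
          nlinarith [sq_nonneg (v s - h s), mul_nonneg (sub_nonneg.2 ha1.le) (sq_nonneg (v s))]
        nlinarith [Real.exp_pos (s / 2)]
    have hexp : Tendsto (fun s : ℝ => Real.exp (s / 2)) atTop atTop :=
      Real.tendsto_exp_atTop.comp (tendsto_id.atTop_div_const (by norm_num))
    have h3 := hexp.eventually
      (eventually_gt_atTop ((Real.exp (T / 2) * (v T ^ 2 - δ)) / δ))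
    obtain ⟨N, hN⟩ := eventually_atTop.1 (h3.and (eventually_ge_atTop T))
    refine ⟨N, fun s hs => ?_⟩
    obtain ⟨h4, h5⟩ := hN s hs.le
    have h6 := hanti (Set.self_mem_Ici) (Set.mem_Ici.2 h5) h5
    simp only at h6
    rw [div_lt_iff₀ hδ] at h4
    rw [Real.dist_eq, sub_zero, abs_of_nonneg (sq_nonneg _)]
    have h7 : Real.exp (s / 2) * (v s ^ 2 - δ) < Real.exp (s / 2) * δ := lt_of_le_of_lt h6 h4
    have := lt_of_mul_lt_mul_left h7 (Real.exp_pos _).le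
    linarith
  have h8 := key.sqrt
  simp only [Real.sqrt_sq_eq_abs, Real.sqrt_zero] at h8
  exact (tendsto_zero_iff_abs_tendsto_zero _).2 h8

/-- If `∑ⱼ dⱼXⱼ² → 0`, `𝓛 → 0` and `Yᵢ/𝓛 → yᵢ*` with `μᵢ(yᵢ*)² + ε/2 > 0`,
then `Xᵢ/𝓛² → μᵢ(yᵢ*)² + ε/2`. -/
theorem stmt_14 (r : ℕ) (hr : 1 ≤ r) (d : Fin r → ℕ) (hd : ∀ i, 0 < d i)
    (μ : Fin r → ℝ) (ε : ℝ) (hε : 0 < ε) (s₀ : ℝ)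
    (L : ℝ → ℝ) (X Y : Fin r → ℝ → ℝ)
    (hsol : IsSolitonSol r d μ ε L X Y (Set.Ici s₀))
    (hL : ∀ s ≥ s₀, 0 < L s)
    (i : Fin r) (yistar : ℝ) (hyi : 0 < μ i * yistar ^ 2 + ε / 2)
    (hXlim : Tendsto (fun s => ∑ j, (d j : ℝ) * X j s ^ 2) atTop (𝓝 0))
    (hLlim : Tendsto L atTop (𝓝 0))
    (hYlim : Tendsto (fun s => Y i s / L s) atTop (𝓝 yistar)) :
    Tendsto (fun s => X i s / L s ^ 2) atTop (𝓝 (μ i * yistar ^ 2 + ε / 2)) := by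
  obtain ⟨hL', hX', -⟩ := hsol
  set c := μ i * yistar ^ 2 + ε / 2 with hc
  set q : ℝ → ℝ := fun s => ∑ j, (d j : ℝ) * X j s ^ 2 - ε / 2 * L s ^ 2 with hq
  have hqlim : Tendsto q atTop (𝓝 0) := by
    simpa using hXlim.sub ((hLlim.pow 2).const_mul (ε / 2))
  have hg : Tendsto (fun s => μ i * (Y i s / L s) ^ 2 + ε / 2) atTop (𝓝 c) :=
    ((hYlim.pow 2).const_mul _).add_const _
  have ha : Tendsto (fun s => 1 + q s) atTop (𝓝 1) := by
    simpa using hqlim.const_add 1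
  have hh : Tendsto (fun s => (μ i * (Y i s / L s) ^ 2 + ε / 2) - (1 + q s) * c) atTop (𝓝 0) := by
    simpa using hg.sub (ha.mul_const c)
  have := aux_linear_ode (fun s => X i s / L s ^ 2 - c) _ _ s₀ ?_ ha hh
  · simpa using this.add_const c
  · intro s hs
    have hLs := (hL s hs).ne'
    have e := ((hX' i s hs).div ((hL' s hs).pow 2) (pow_ne_zero 2 hLs)).sub_const c
    refine e.congr_deriv ?_
    simp only [hq]
    generalize ∑ j, (d j : ℝ) * X j s ^ 2 = S
    simp only [Pi.pow_apply]
    field_simp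
    push_cast
    ring
end

section
/- Assume μᵢ ≥ 0 for all i. Let (𝓛, X₁,…,X_r, Y₁,…,Y_r) be a solution of the expanding Ricci soliton ODE system on [s₀, ∞) with 𝓛(s) > 0 for all s ≥ s₀. Fix an index i and a real number σᵢ > 0. Suppose that as s → ∞: 𝓛(s) → 0, Xⱼ(s) → 0 and Xⱼ(s)/𝓛(s) → 0 for every j = 1,…,r, and Yᵢ(s)/𝓛(s)² → (ε/2)σᵢ. Then (Xᵢ(s) − (ε/2)𝓛(s)²)/𝓛(s)⁴ → (ε/2)²·(μᵢσᵢ² + 1) as s → ∞. -/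
open Filter Topology

/-- A scalar linear ODE `W' = -a W + b` with `a → 1`, `b → c` has `W → c`. -/
lemma linear_ode_limit (W a b : ℝ → ℝ) (c s₀ : ℝ)
    (hW : ∀ s ≥ s₀, HasDerivAt W (-(a s) * W s + b s) s)
    (ha : Tendsto a atTop (𝓝 1)) (hb : Tendsto b atTop (𝓝 c)) :
    Tendsto W atTop (𝓝 c) := by
  have hg : Tendsto (fun s => (b s - a s * c) ^ 2) atTop (𝓝 0) := by
    have := (hb.sub (ha.mul_const c)).pow 2
    simpa using this
  have key : Tendsto (fun s => (W s - c) ^ 2) atTop (𝓝 0) := by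
    rw [Metric.tendsto_nhds]
    intro η hη
    have h1 : ∀ᶠ s in atTop, (b s - a s * c) ^ 2 < η / 4 := hg.eventually_lt_const (by linarith)
    have h2 : ∀ᶠ s in atTop, 3 / 4 < a s := ha.eventually_const_lt (by norm_num)
    obtain ⟨T, hT⟩ := eventually_atTop.1 ((h1.and h2).and (eventually_ge_atTop s₀))
    let F : ℝ → ℝ := fun s => ((W s - c) ^ 2 - η / 2) * Real.exp (s / 2)
    have hF : ∀ s ≥ T, HasDerivAt F
        ((2 * (W s - c) * (-(a s) * W s + b s)) * Real.exp (s / 2)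
          + ((W s - c) ^ 2 - η / 2) * (Real.exp (s / 2) * (1 / 2))) s := by
      intro s hs
      have hw := hW s (hT s hs).2
      have e1 := (((hw.sub_const c).pow 2).sub_const (η / 2))
      have e2 := ((hasDerivAt_id s).div_const 2).exp
      have := e1.mul e2
      refine this.congr_deriv ?_
      simp
    have hanti : AntitoneOn F (Set.Ici T) := by
      apply antitoneOn_of_deriv_nonpos (convex_Ici T)
      · intro s hs
        exact (hF s hs).continuousAt.continuousWithinAt
      · intro s hs
        rw [interior_Ici] at hs
        exact (hF s (le_of_lt hs)).differentiableAt.differentiableWithinAt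
      · intro s hs
        rw [interior_Ici] at hs
        rw [(hF s (le_of_lt hs)).deriv]
        obtain ⟨⟨g1, g2⟩, -⟩ := hT s (le_of_lt hs)
        have hp := Real.exp_pos (s / 2)
        have : 2 * (W s - c) * (-(a s) * W s + b s) + ((W s - c) ^ 2 - η / 2) * (1 / 2) ≤ 0 := by
          nlinarith [sq_nonneg ((W s - c) - (b s - a s * c)),
            mul_nonneg (sub_nonneg.2 g2.le) (sq_nonneg (W s - c))]
        nlinarith
    have hexp : Tendsto (fun s : ℝ => F T * Real.exp (-(s / 2))) atTop (𝓝 0) := by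
      have : Tendsto (fun s : ℝ => s / 2) atTop atTop := tendsto_id.atTop_div_const (by norm_num)
      simpa using (Real.tendsto_exp_neg_atTop_nhds_zero.comp this).const_mul (F T)
    filter_upwards [eventually_ge_atTop T, hexp.eventually_lt_const (half_pos hη)] with s hs h3
    have h4 : F s ≤ F T := hanti (Set.mem_Ici.2 le_rfl) hs hs
    have hp := Real.exp_pos (-(s / 2))
    have h5 : F s * Real.exp (-(s / 2)) = (W s - c) ^ 2 - η / 2 := by
      simp only [F]
      rw [mul_assoc, ← Real.exp_add]
      simp
    have h6 := mul_le_mul_of_nonneg_right h4 hp.le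
    rw [Real.dist_eq, sub_zero, abs_of_nonneg (sq_nonneg _)]
    linarith
  have h0 : Tendsto (fun s => W s - c) atTop (𝓝 0) := by
    rw [tendsto_zero_iff_abs_tendsto_zero]
    have := key.sqrt
    simpa [Real.sqrt_sq_eq_abs, Function.comp_def] using this
  simpa using h0.add_const c

/-- Refined asymptotics of Lemma 5.4: if `μᵢ ≥ 0` for all `i`, `𝓛 → 0`,
`Xⱼ → 0`, `Xⱼ/𝓛 → 0` for all `j`, and `Yᵢ/𝓛² → (ε/2)σᵢ` with `σᵢ > 0`, then
`(Xᵢ − (ε/2)𝓛²)/𝓛⁴ → (ε/2)²(μᵢσᵢ² + 1)`. -/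
theorem stmt_15 (r : ℕ) (hr : 1 ≤ r) (d : Fin r → ℕ) (hd : ∀ i, 0 < d i)
    (μ : Fin r → ℝ) (hμ : ∀ i, 0 ≤ μ i) (ε : ℝ) (hε : 0 < ε) (s₀ : ℝ)
    (L : ℝ → ℝ) (X Y : Fin r → ℝ → ℝ)
    (hsol : IsSolitonSol r d μ ε L X Y (Set.Ici s₀))
    (hL : ∀ s ≥ s₀, 0 < L s)
    (i : Fin r) (σi : ℝ) (hσi : 0 < σi)
    (hLlim : Tendsto L atTop (𝓝 0))
    (hXlim : ∀ j, Tendsto (X j) atTop (𝓝 0))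
    (hXLlim : ∀ j, Tendsto (fun s => X j s / L s) atTop (𝓝 0))
    (hYlim : Tendsto (fun s => Y i s / L s ^ 2) atTop (𝓝 (ε / 2 * σi))) :
    Tendsto (fun s => (X i s - ε / 2 * L s ^ 2) / L s ^ 4) atTop
      (𝓝 ((ε / 2) ^ 2 * (μ i * σi ^ 2 + 1))) := by
  obtain ⟨h1, h2, -⟩ := hsol
  have hS : Tendsto (fun s => ∑ j, (d j : ℝ) * (X j s / L s) ^ 2) atTop (𝓝 0) := by
    have := tendsto_finsetSum (Finset.univ : Finset (Fin r))
      (fun j _ => ((hXLlim j).pow 2).const_mul (d j : ℝ))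
    simpa using this
  have hSq : ∀ s ≥ s₀, ∑ j, (d j : ℝ) * X j s ^ 2
      = (∑ j, (d j : ℝ) * (X j s / L s) ^ 2) * L s ^ 2 := by
    intro s hs
    have := (hL s hs).ne'
    rw [Finset.sum_mul]
    refine Finset.sum_congr rfl fun j _ => ?_
    field_simp
  set P : ℝ → ℝ := fun s => ∑ j, (d j : ℝ) * (X j s / L s) ^ 2 with hP
  have hPs : ∀ s, ∑ j, (d j : ℝ) * (X j s / L s) ^ 2 = P s := fun s => rfl
  apply linear_ode_limit _ (fun s => 1 + 3 * ((P s - ε / 2) * L s ^ 2))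
    (fun s => μ i * (Y i s / L s ^ 2) ^ 2 - ε / 2 * (P s - ε / 2)) _ s₀
  · intro s hs
    have hl := (hL s hs).ne'
    have e1 := h1 s hs
    have e2 := h2 i s hs
    rw [hSq s hs, hPs] at e1 e2
    have := (e2.sub ((e1.pow 2).const_mul (ε / 2))).div (e1.pow 4) (pow_ne_zero 4 hl)
    refine this.congr_deriv ?_
    simp
    field_simp
    ring
  · have := (((hS.sub_const (ε / 2)).mul (hLlim.pow 2)).const_mul 3).const_add 1
    simpa using this
  · have := ((hYlim.pow 2).const_mul (μ i)).sub ((hS.sub_const (ε / 2)).const_mul (ε / 2))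
    convert this using 2
    ring
end

section
/- Assume n ≥ 2 and μᵢ ≥ 0 for all i. Let (𝓛, X₁,…,X_r, Y₁,…,Y_r) be a solution of the expanding Ricci soliton ODE system on [s₀, b) (with b ∈ (s₀, ∞]) such that 𝓛(s) > 0, Xᵢ(s) > 0, Yᵢ(s) > 0 for all i and all s, and 𝒮₁(s) ≤ 0 for all s. Then for all s ∈ [s₀, b): ∑ᵢ dᵢXᵢ(s)² ≤ 1 (in particular Xᵢ(s) ≤ 1/√(dᵢ) for every i), (n−1)(ε/2)𝓛(s)² ≤ 1, and Yᵢ(s) ≤ Yᵢ(s₀)·e^{s − s₀} for every i. In particular the solution remains bounded on every bounded subinterval of [s₀, b). -/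
open Filter Topology

/-- A priori bounds on solutions with positive coordinates in the locus `𝒮₁ ≤ 0`
(with all `μᵢ ≥ 0`), on a (possibly infinite) interval `[s₀, b)`: `∑ᵢ dᵢXᵢ² ≤ 1`
(so `Xᵢ ≤ 1/√dᵢ`), `(n−1)(ε/2)𝓛² ≤ 1`, and `Yᵢ(s) ≤ Yᵢ(s₀)e^{s−s₀}`; in particular
the solution stays bounded on bounded subintervals. -/
theorem stmt_18 (r : ℕ) (hr : 1 ≤ r) (d : Fin r → ℕ) (hd : ∀ i, 0 < d i)
    (n : ℕ) (hn : n = ∑ i, d i) (hn2 : 2 ≤ n)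
    (μ : Fin r → ℝ) (hμ : ∀ i, 0 ≤ μ i) (ε : ℝ) (hε : 0 < ε)
    (s₀ : ℝ) (b : EReal) (hb : (s₀ : EReal) < b)
    (L : ℝ → ℝ) (X Y : Fin r → ℝ → ℝ)
    (hsol : IsSolitonSol r d μ ε L X Y {s : ℝ | s₀ ≤ s ∧ (s : EReal) < b})
    (hpos : ∀ s, s₀ ≤ s → (s : EReal) < b →
      0 < L s ∧ ∀ i, 0 < X i s ∧ 0 < Y i s)
    (hS₁ : ∀ s, s₀ ≤ s → (s : EReal) < b →
      ∑ i, (d i : ℝ) * X i s ^ 2 + ∑ i, (d i : ℝ) * μ i * Y i s ^ 2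
        + ((n : ℝ) - 1) * (ε / 2) * L s ^ 2 - 1 ≤ 0) :
    ∀ s, s₀ ≤ s → (s : EReal) < b →
      (∑ i, (d i : ℝ) * X i s ^ 2 ≤ 1) ∧
      (∀ i, X i s ≤ 1 / Real.sqrt (d i)) ∧
      ((n : ℝ) - 1) * (ε / 2) * L s ^ 2 ≤ 1 ∧
      ∀ i, Y i s ≤ Y i s₀ * Real.exp (s - s₀) := by
  have hn1 : (1 : ℝ) ≤ (n : ℝ) - 1 := by
    have : (2 : ℝ) ≤ (n : ℝ) := by exact_mod_cast hn2
    linarith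
  have key : ∀ s, s₀ ≤ s → (s : EReal) < b →
      (∑ i, (d i : ℝ) * X i s ^ 2 ≤ 1) ∧ ((n : ℝ) - 1) * (ε / 2) * L s ^ 2 ≤ 1 := by
    intro s h1 h2
    have h := hS₁ s h1 h2
    have hA : 0 ≤ ∑ i, (d i : ℝ) * X i s ^ 2 :=
      Finset.sum_nonneg fun i _ => by positivity
    have hB : 0 ≤ ∑ i, (d i : ℝ) * μ i * Y i s ^ 2 :=
      Finset.sum_nonneg fun i _ =>
        mul_nonneg (mul_nonneg (Nat.cast_nonneg _) (hμ i)) (sq_nonneg _)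
    have hC : 0 ≤ ((n : ℝ) - 1) * (ε / 2) * L s ^ 2 :=
      mul_nonneg (mul_nonneg (by linarith) (by linarith)) (sq_nonneg _)
    constructor <;> linarith
  intro s h1 h2
  refine ⟨(key s h1 h2).1, ?_, (key s h1 h2).2, ?_⟩
  · intro i
    have hdi : (0 : ℝ) < d i := by exact_mod_cast hd i
    have hle : (d i : ℝ) * X i s ^ 2 ≤ 1 :=
      le_trans (Finset.single_le_sum (f := fun i => (d i : ℝ) * X i s ^ 2)
        (fun j _ => by positivity) (Finset.mem_univ i)) (key s h1 h2).1
    have hs : 0 < Real.sqrt (d i) := Real.sqrt_pos.mpr hdi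
    rw [le_div_iff₀ hs]
    have hsq : Real.sqrt (d i) ^ 2 = d i := Real.sq_sqrt hdi.le
    nlinarith [mul_pos (hpos s h1 h2 |>.2 i).1 hs, mul_pow (X i s) (Real.sqrt (d i)) 2]
  · intro i
    have hlt : ∀ t ∈ Set.Icc s₀ s, (t : EReal) < b := fun t ht =>
      lt_of_le_of_lt (EReal.coe_le_coe_iff.mpr ht.2) h2
    have hder : ∀ t ∈ Set.Icc s₀ s, HasDerivAt (fun t => Y i t * Real.exp (-(t - s₀)))
        (Y i t * (∑ j, (d j : ℝ) * X j t ^ 2 - ε / 2 * L t ^ 2 - X i t)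
          * Real.exp (-(t - s₀)) + Y i t * (Real.exp (-(t - s₀)) * (-1))) t := by
      intro t ht
      have hy := hsol.2.2 i t ⟨ht.1, hlt t ht⟩
      have he : HasDerivAt (fun t : ℝ => -(t - s₀)) (-1) t :=
        ((hasDerivAt_id t).sub_const s₀).neg
      exact hy.mul he.exp
    have hanti : AntitoneOn (fun t => Y i t * Real.exp (-(t - s₀))) (Set.Icc s₀ s) := by
      refine antitoneOn_of_hasDerivWithinAt_nonpos (convex_Icc s₀ s)
        (fun t ht => (hder t ht).continuousAt.continuousWithinAt)
        (fun t ht => (hder t (interior_subset ht)).hasDerivWithinAt) ?_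
      intro t ht
      have ht' := interior_subset ht
      have hp := hpos t ht'.1 (hlt t ht')
      have hk := (key t ht'.1 (hlt t ht')).1
      have hX := (hp.2 i).1
      have hY := (hp.2 i).2
      have hL : 0 ≤ ε / 2 * L t ^ 2 := by positivity
      have hE := Real.exp_pos (-(t - s₀))
      have hYE := mul_pos hY hE
      nlinarith
    have h := hanti (Set.left_mem_Icc.mpr h1) (Set.right_mem_Icc.mpr h1) h1
    simp only [sub_self, neg_zero, Real.exp_zero, mul_one] at h
    rw [Real.exp_neg, ← div_eq_mul_inv, div_le_iff₀ (Real.exp_pos _)] at h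
    exact h
end

section
/- Let (𝓛, X₁,…,X_r, Y₁,…,Y_r) be a solution of the expanding Ricci soliton ODE system on [s₀, ∞) with 𝓛(s₀) > 0, and suppose the Einstein constraint ∑ᵢ dᵢXᵢ(s) = 1 holds for all s ≥ s₀. Then 𝓛(s) ≥ min(𝓛(s₀), √(2/(nε))) for all s ≥ s₀; in particular 𝓛 is bounded away from zero on [s₀, ∞). -/
open Filter Topology

/-- Along Einstein trajectories (where `∑ᵢ dᵢXᵢ = 1`), `𝓛` is bounded away from
zero:  `𝓛(s) ≥ min(𝓛(s₀), √(2/(nε)))` for all `s ≥ s₀`. -/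
theorem stmt_19 (r : ℕ) (hr : 1 ≤ r) (d : Fin r → ℕ) (hd : ∀ i, 0 < d i)
    (n : ℕ) (hn : n = ∑ i, d i) (μ : Fin r → ℝ) (ε : ℝ) (hε : 0 < ε)
    (s₀ : ℝ) (L : ℝ → ℝ) (X Y : Fin r → ℝ → ℝ)
    (hsol : IsSolitonSol r d μ ε L X Y (Set.Ici s₀))
    (hL₀ : 0 < L s₀)
    (hEinstein : ∀ s ≥ s₀, ∑ i, (d i : ℝ) * X i s = 1) :
    ∀ s ≥ s₀, min (L s₀) (Real.sqrt (2 / ((n : ℝ) * ε))) ≤ L s := by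
  obtain ⟨hL, -, -⟩ := hsol
  have hnpos : (0 : ℝ) < n := by
    have : 0 < n := by
      rw [hn]
      exact Finset.sum_pos (fun i _ => hd i) ⟨⟨0, hr⟩, Finset.mem_univ _⟩
    exact_mod_cast this
  have hnsum : ∑ i, (d i : ℝ) = n := by rw [hn]; push_cast; rfl
  -- Cauchy-Schwarz bound
  have hCS : ∀ s ≥ s₀, 1 / (n : ℝ) ≤ ∑ j, (d j : ℝ) * X j s ^ 2 := by
    intro s hs
    have h0 : 0 ≤ ∑ j, (d j : ℝ) * (X j s - 1 / n) ^ 2 :=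
      Finset.sum_nonneg (fun j _ => by positivity)
    have h1 : ∑ j, (d j : ℝ) * (X j s - 1 / n) ^ 2
        = ∑ j, (d j : ℝ) * X j s ^ 2 - 2 / n * ∑ j, (d j : ℝ) * X j s
          + (1 / n) ^ 2 * ∑ j, (d j : ℝ) := by
      rw [Finset.mul_sum, Finset.mul_sum, ← Finset.sum_sub_distrib, ← Finset.sum_add_distrib]
      exact Finset.sum_congr rfl (fun j _ => by ring)
    rw [h1, hEinstein s hs, hnsum] at h0
    have h2 : (1 / (n : ℝ)) ^ 2 * n = 1 / n := by field_simp
    rw [h2] at h0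
    have h3 : 2 / (n : ℝ) = 2 * (1 / n) := by ring
    rw [h3] at h0
    linarith
  intro s hs
  have hmpos : 0 < min (L s₀) (Real.sqrt (2 / ((n : ℝ) * ε))) :=
    lt_min hL₀ (Real.sqrt_pos.mpr (by positivity))
  by_contra hlt
  rw [not_le] at hlt
  obtain ⟨c, hc1, hc2⟩ := exists_between (max_lt hlt hmpos)
  obtain ⟨hcL, hc0⟩ := max_lt_iff.mp hc1
  obtain ⟨hcs, hcr⟩ := lt_min_iff.mp hc2
  have hcsq : ε / 2 * c ^ 2 < 1 / n := by
    have h := (Real.lt_sqrt hc0.le).mp hcr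
    rw [lt_div_iff₀ (by positivity)] at h ⊢
    linarith
  have key := image_le_of_deriv_right_lt_deriv_boundary (f := fun t => - L t) (a := s₀) (b := s)
    (f' := fun t => -(L t * (∑ j, (d j : ℝ) * X j t ^ 2 - ε / 2 * L t ^ 2)))
    (B := fun _ => -c) (B' := fun _ => 0)
    (fun t ht => (hL t ht.1).continuousAt.continuousWithinAt.neg)
    (fun t ht => (hL t ht.1).neg.hasDerivWithinAt)
    (by simpa using hcs.le)
    (fun t => hasDerivAt_const t (-c))
    (fun t ht hteq => by
      have hLc : L t = c := neg_injective hteq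
      have := hCS t ht.1
      have : 0 < L t * (∑ j, (d j : ℝ) * X j t ^ 2 - ε / 2 * L t ^ 2) := by
        rw [hLc]
        exact mul_pos hc0 (by linarith)
      simpa using this)
    (Set.right_mem_Icc.mpr hs)
  have key' : -L s ≤ -c := key
  linarith
end
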